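/- arXiv:hep-th/0304246 — 4 statements merged into one kernel-verified Lean document; each statement's English description precedes it below -/
import Mathlib

section
/- Multigraded Witt formula for free Lie algebras: let L be the free Lie algebra over ℚ on generators β_1,…,β_m. There exist unique derivations D_1,…,D_m of L with D_j(β_k) = δ_{jk} β_k. For every nonzero tuple (n_1,…,n_m) of natural numbers, with N = n_1 + … + n_m and g = gcd(n_1,…,n_m), the simultaneous eigenspace ⋂_{j=1}^m {x ∈ L : D_j(x) = n_j · x} is finite dimensional and its dimension mult(n_1,…,n_m) satisfies N · mult(n_1,…,n_m) = ∑_{d ∣ g} μ(d) · (N/d)! / ((n_1/d)! ⋯ (n_m/d)!), where μ is the Möbius function. -/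
noncomputable section

/-!
Every element of the free Lie algebra is primitive for the coproduct of the free associative
algebra, so its coefficients, summed over the shuffles of two nonempty words, give zero. As a
word that is not a Lyndon word splits into two factors all of whose shuffles are at most the word
itself, the smallest word occurring in a nonzero Lie polynomial is a Lyndon word. Conversely, the
bracketing of a Lyndon word `w` along its standard factorization has smallest word `w`, with
coefficient `1`. The dimension of a multihomogeneous component is therefore the number of Lyndon
words of its content. A word of length `N` is a rotation of a Lyndon word exactly when its `N`
rotations are distinct, and then in one way only; Möbius inversion counts these words, since the
words fixed by rotation by `N / d` letters are the `d`-th powers.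

The map to the free associative algebra need not be known to be injective beforehand: a derivation
can be read off from a representation of the free associative algebra by affine maps, so it vanishes
on the kernel, whereas the derivation counting a generator which occurs in a multihomogeneous
component acts on that component as a nonzero scalar.
-/

namespace FreeLieWitt

section LexicographicOrder

variable {α : Type*} [LinearOrder α]

lemma cons_le_cons_iff {a b : α} {u v : List α} :
    a :: u ≤ b :: v ↔ a < b ∨ a = b ∧ u ≤ v := by
  simp_rw [le_iff_lt_or_eq, List.cons_lt_cons_iff, List.cons.injEq]
  tauto

lemma not_cons_le_nil (a : α) (u : List α) : ¬ a :: u ≤ [] :=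
  (List.nil_lt_cons a u).not_ge

lemma le_append_right_self (u v : List α) : u ≤ u ++ v := by
  cases v with
  | nil => simp
  | cons b v => simpa using (List.append_left_lt (List.nil_lt_cons b v) : u ++ [] < _).le

lemma strictMono_append_left (u : List α) : StrictMono (u ++ ·) :=
  fun _ _ h ↦ List.append_left_lt h

lemma isPrefix_or_forall_append_lt_append {u v : List α} (h : u < v) :
    u <+: v ∨ ∀ s t, u ++ s < v ++ t := by
  induction u generalizing v with
  | nil => exact .inl List.nil_prefix
  | cons a u ih =>
    cases v with
    | nil => simp at h
    | cons b v =>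
      rcases List.cons_lt_cons_iff.1 h with hab | ⟨rfl, huv⟩
      · exact .inr fun s t ↦ List.Lex.rel hab
      · refine (ih huv).imp (List.prefix_cons_inj a).2 fun h s t ↦ ?_
        simpa using h s t

lemma append_lt_append_of_length_eq {u v : List α} (h : u < v) (hl : u.length = v.length)
    (s t : List α) : u ++ s < v ++ t :=
  (isPrefix_or_forall_append_lt_append h).elim (fun hp ↦ absurd (hp.eq_of_length hl) h.ne)
    fun h ↦ h s t

lemma append_le_append_of_length_eq {u v s t : List α} (huv : u ≤ v) (hst : s ≤ t)
    (hl : u.length = v.length) : u ++ s ≤ v ++ t := by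
  rcases huv.lt_or_eq with h | rfl
  · exact (append_lt_append_of_length_eq h hl s t).le
  · exact (strictMono_append_left u).monotone hst

end LexicographicOrder

section Shuffles

variable {α : Type*}

/-- The multiset of shuffles (interleavings) of two words, listed with multiplicity. -/
def shuffles : List α → List α → Multiset (List α)
  | [], v => {v}
  | a :: u, [] => {a :: u}
  | a :: u, b :: v => (shuffles u (b :: v)).map (a :: ·) + (shuffles (a :: u) v).map (b :: ·)

@[simp]
lemma shuffles_nil_left (v : List α) : shuffles [] v = {v} := by rw [shuffles]

@[simp]
lemma shuffles_nil_right (u : List α) : shuffles u [] = {u} := by cases u <;> rw [shuffles]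

lemma mem_shuffles_cons_cons {a b : α} {u v w : List α} :
    w ∈ shuffles (a :: u) (b :: v) ↔
      (∃ s ∈ shuffles u (b :: v), a :: s = w) ∨ ∃ s ∈ shuffles (a :: u) v, b :: s = w := by
  simp [shuffles]

lemma cons_mem_shuffles_left (a : α) {u v w : List α} (h : w ∈ shuffles u v) :
    a :: w ∈ shuffles (a :: u) v := by
  cases v with
  | nil => simpa using h
  | cons b v => exact mem_shuffles_cons_cons.2 (.inl ⟨w, h, rfl⟩)

lemma cons_mem_shuffles_right (b : α) {u v w : List α} (h : w ∈ shuffles u v) :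
    b :: w ∈ shuffles u (b :: v) := by
  cases u with
  | nil => simpa using h
  | cons a u => exact mem_shuffles_cons_cons.2 (.inr ⟨w, h, rfl⟩)

lemma append_mem_shuffles (u v : List α) : u ++ v ∈ shuffles u v := by
  induction u with
  | nil => simp
  | cons a u ih => exact cons_mem_shuffles_left a ih

lemma append_mem_shuffles_swap (u v : List α) : v ++ u ∈ shuffles u v := by
  induction v with
  | nil => simp
  | cons b v ih => exact cons_mem_shuffles_right b ih

variable [LinearOrder α]

lemma exists_mem_shuffles_move_prefix {p x y s : List α} (hyx : y ≤ x)
    (hs : s ∈ shuffles (p ++ x) y) : ∃ t ∈ shuffles x (p ++ y), s ≤ t := by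
  induction y generalizing p x s with
  | nil =>
    obtain rfl : s = p ++ x := by simpa using hs
    exact ⟨p ++ x, by simpa using append_mem_shuffles_swap x p, le_rfl⟩
  | cons d y ihy =>
    induction p generalizing s with
    | nil => exact ⟨s, hs, le_rfl⟩
    | cons a p ihp =>
      rcases mem_shuffles_cons_cons.1 hs with ⟨t, ht, rfl⟩ | ⟨t, ht, rfl⟩
      · obtain ⟨t', ht', htt'⟩ := ihp ht
        exact ⟨_, cons_mem_shuffles_right a ht', List.cons_le_cons a htt'⟩
      · cases x with
        | nil => exact absurd hyx (not_cons_le_nil d y)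
        | cons c x =>
          rcases cons_le_cons_iff.1 hyx with hdc | ⟨rfl, hyx'⟩
          · exact ⟨c :: (x ++ (a :: p ++ d :: y)),
              cons_mem_shuffles_left c (append_mem_shuffles _ _), cons_le_cons_iff.2 (.inl hdc)⟩
          · obtain ⟨t', ht', htt'⟩ := ihy (p := a :: p ++ [d]) hyx' (by simpa using ht)
            exact ⟨_, cons_mem_shuffles_left d (by simpa using ht'), List.cons_le_cons d htt'⟩

lemma le_append_of_mem_shuffles {u v s : List α} (hu : ∀ y, y <:+ u → y ≠ [] → v ≤ y)
    (hs : s ∈ shuffles u v) : s ≤ u ++ v := by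
  induction u generalizing s with
  | nil => exact (by simpa using hs : s = v).le
  | cons a u ih =>
    replace ih : ∀ {s}, s ∈ shuffles u v → s ≤ u ++ v :=
      ih fun y hy ↦ hu y (hy.trans (List.suffix_cons a u))
    cases v with
    | nil => exact (by simpa using hs : s = a :: u ++ []).le
    | cons b v =>
      rcases mem_shuffles_cons_cons.1 hs with ⟨t, ht, rfl⟩ | ⟨t, ht, rfl⟩
      · exact List.cons_le_cons a (ih ht)
      · rcases cons_le_cons_iff.1 (hu _ List.suffix_rfl (List.cons_ne_nil a u)) with
          hba | ⟨rfl, hvu⟩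
        · exact cons_le_cons_iff.2 (.inl hba)
        · obtain ⟨t', ht', htt'⟩ := exists_mem_shuffles_move_prefix (p := [b]) hvu ht
          exact List.cons_le_cons b (htt'.trans (ih ht'))

end Shuffles

section Lyndon

variable {α : Type*} [LinearOrder α]

/-- A Lyndon word: a nonempty word smaller than each of its nonempty proper suffixes. -/
def IsLyndon (w : List α) : Prop :=
  w ≠ [] ∧ ∀ u v, u ++ v = w → u ≠ [] → v ≠ [] → w < v

lemma IsLyndon.lt_append_swap {u v : List α} (h : IsLyndon (u ++ v)) (hu : u ≠ []) (hv : v ≠ []) :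
    u ++ v < v ++ u :=
  (h.2 u v rfl hu hv).trans_le (le_append_right_self v u)

lemma isLyndon_iff_forall_lt_append_swap {w : List α} :
    IsLyndon w ↔ w ≠ [] ∧ ∀ u v, u ++ v = w → u ≠ [] → v ≠ [] → w < v ++ u := by
  refine ⟨fun h ↦ ⟨h.1, ?_⟩, fun h ↦ ⟨h.1, ?_⟩⟩
  · rintro u v rfl hu hv
    exact h.lt_append_swap hu hv
  · rintro u v rfl hu hv
    by_contra! hle
    have hne : v ≠ u ++ v := fun h ↦ hu (by simpa using h)
    have hlt : u ++ v < v ++ u := h.2 u v rfl hu hv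
    rcases isPrefix_or_forall_append_lt_append (lt_of_le_of_ne hle hne) with ⟨z, hz⟩ | hlt'
    · have hzu : z.length = u.length := by
        have := congrArg List.length hz
        simp only [List.length_append] at this
        omega
      rw [← hz] at h hlt
      have hz0 : z ≠ [] := by rintro rfl; exact hu (List.length_eq_zero_iff.1 hzu.symm)
      have := append_lt_append_of_length_eq ((strictMono_append_left v).lt_iff_lt.1 hlt) hzu v v
      rw [← hz] at this
      exact lt_asymm this (h.2 v z rfl hv hz0)
    · exact lt_asymm hlt (by simpa using hlt' u [])

lemma exists_minimal_proper_suffix {w : List α} (hw : 2 ≤ w.length) :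
    ∃ u v, u ++ v = w ∧ u ≠ [] ∧ v ≠ [] ∧
      ∀ x y, x ++ y = w → x ≠ [] → y ≠ [] → v ≤ y := by
  obtain ⟨i, hi, hmin⟩ := (Finset.Ico 1 w.length).exists_min_image (w.drop ·) ⟨1, by simp; omega⟩
  rw [Finset.mem_Ico] at hi
  refine ⟨w.take i, w.drop i, List.take_append_drop i w, ?_, ?_, ?_⟩
  · rw [Ne, List.take_eq_nil_iff, ← List.length_eq_zero_iff]; omega
  · rw [Ne, List.drop_eq_nil_iff]; omega
  · rintro x y rfl hx hy
    simpa using hmin x.length (by simp [List.length_pos_iff.2, hx, hy, Nat.one_le_iff_ne_zero])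

lemma IsLyndon.exists_eq_append {w : List α} (h : IsLyndon w) (hw : 2 ≤ w.length) :
    ∃ u v, u ++ v = w ∧ IsLyndon u ∧ IsLyndon v := by
  obtain ⟨u, v, rfl, hu, hv, hmin⟩ := exists_minimal_proper_suffix hw
  refine ⟨u, v, rfl, ⟨hu, ?_⟩, ⟨hv, ?_⟩⟩
  · rintro x y rfl hx hy
    by_contra! hle
    have hne : y ≠ x ++ y := fun h ↦ hx (by simpa using h)
    have hlt : x ++ y ++ v < y ++ v := h.2 x (y ++ v) (by simp) hx (by simp [hy])
    rcases isPrefix_or_forall_append_lt_append (lt_of_le_of_ne hle hne) with ⟨z, hz⟩ | hlt'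
    · have hz0 : z ≠ [] := by rintro rfl; exact hne (by simpa using hz)
      rw [← hz, List.append_assoc, (strictMono_append_left y).lt_iff_lt] at hlt
      exact (hmin y (z ++ v) (by rw [← hz, List.append_assoc]) hy (by simp [hz0])).not_gt hlt
    · exact lt_asymm hlt (hlt' v v)
  · rintro x y rfl hx hy
    exact lt_of_le_of_ne (hmin (u ++ x) y (by simp) (by simp [hu]) hy) fun h ↦
      hx (by simpa using h)

lemma exists_forall_mem_shuffles_le_of_not_isLyndon {w : List α} (hw : w ≠ [])
    (h : ¬ IsLyndon w) :
    ∃ u v, u ++ v = w ∧ u ≠ [] ∧ v ≠ [] ∧ ∀ s ∈ shuffles u v, s ≤ w := by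
  obtain ⟨x, y, hxy, hx, hy, hyw⟩ : ∃ x y, x ++ y = w ∧ x ≠ [] ∧ y ≠ [] ∧ y ≤ w := by
    simpa [IsLyndon, hw] using h
  have hl : 2 ≤ w.length := by
    have := List.length_pos_iff.2 hx
    have := List.length_pos_iff.2 hy
    grind
  obtain ⟨u, v, rfl, hu, hv, hmin⟩ := exists_minimal_proper_suffix hl
  replace hmin : ∀ x y, x ++ y = u ++ v → y ≠ [] → v ≤ y := by
    intro x' y' h hy'
    rcases eq_or_ne x' [] with rfl | hx'
    · exact ((hmin x y hxy hx hy).trans hyw).trans_eq h.symm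
    · exact hmin x' y' h hx' hy'
  refine ⟨u, v, rfl, hu, hv, fun s hs ↦ le_append_of_mem_shuffles ?_ hs⟩
  rintro y ⟨x, rfl⟩ hy
  by_contra! hlt
  have hvy : v ≤ y ++ v := hmin x (y ++ v) (by simp) (by simp [hy])
  rcases isPrefix_or_forall_append_lt_append hlt with ⟨z, rfl⟩ | hlt'
  · have hz : z ≠ [] := by rintro rfl; simp at hlt
    have hzy : z = y ++ z := le_antisymm ((strictMono_append_left y).le_iff_le.1 hvy)
      (hmin (x ++ y ++ y) z (by simp) hz)
    exact hy (by simpa using hzy)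
  · exact hvy.not_gt (by simpa using hlt' v [])

end Lyndon

section Words

variable {α : Type*} [DecidableEq α]

lemma sum_single_ofFn {k : ℕ} (p : Fin k → α) (a : α) :
    (∑ i, Finsupp.single (p i) 1) a = (List.ofFn p).count a := by
  induction k with
  | zero => simp
  | succ k ih =>
    rw [List.ofFn_succ, List.count_cons, ← ih, Fin.sum_univ_succ, add_comm, Finsupp.add_apply,
      Finsupp.single_apply]
    simp

variable [Fintype α]

/-- The words in which each letter `a` occurs exactly `n a` times. -/
def wordsOfContent (n : α → ℕ) : Finset (List α) :=
  (Finset.univ.filter fun p : Fin (∑ a, n a) → α ↦ ∀ a, (List.ofFn p).count a = n a).map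
    ⟨List.ofFn, List.ofFn_injective⟩

lemma length_eq_sum_count (w : List α) : w.length = ∑ a, w.count a := by
  simpa using (Multiset.sum_count_eq_card (s := Finset.univ) (m := (w : Multiset α)) (by simp)).symm

lemma mem_wordsOfContent {n : α → ℕ} {w : List α} :
    w ∈ wordsOfContent n ↔ ∀ a, w.count a = n a := by
  simp only [wordsOfContent, Finset.mem_map, Finset.mem_filter_univ, Function.Embedding.coeFn_mk]
  refine ⟨fun ⟨_, hp, hpw⟩ ↦ hpw ▸ hp, fun h ↦ ?_⟩
  have hl : w.length = ∑ a, n a := by simp_rw [length_eq_sum_count, h]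
  have hw : List.ofFn (fun i ↦ w.get (i.cast hl.symm)) = w :=
    (List.ofFn_congr hl w.get).symm.trans (List.ofFn_get w)
  exact ⟨_, hw.symm ▸ h, hw⟩

lemma length_of_mem_wordsOfContent {n : α → ℕ} {w : List α} (h : w ∈ wordsOfContent n) :
    w.length = ∑ a, n a := by
  simp_rw [length_eq_sum_count w, mem_wordsOfContent.1 h]

lemma rotate_mem_wordsOfContent {n : α → ℕ} {w : List α} (i : ℕ) :
    w.rotate i ∈ wordsOfContent n ↔ w ∈ wordsOfContent n := by
  simp only [mem_wordsOfContent, (List.rotate_perm w i).count_eq]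

-- Both sides are the coefficient of the monomial with exponent `n` in `(∑ a, X a) ^ ∑ a, n a`.
lemma card_wordsOfContent (n : α → ℕ) :
    (wordsOfContent n).card = Nat.multinomial Finset.univ n := by
  have h := MvPolynomial.coeff_sum_X_pow_of_fintype (R := ℕ) (Finsupp.equivFunOnFinite.symm n)
    (∑ a, n a)
  rw [if_pos (by simp [Finsupp.sum_fintype]),
    Finsupp.multinomial_eq_of_support_subset (Finset.subset_univ _), Fintype.sum_pow] at h
  simpa [MvPolynomial.coeff_sum, MvPolynomial.X, ← MvPolynomial.monomial_sum_one, wordsOfContent,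
    Finset.sum_boole, Finsupp.ext_iff, -Finsupp.coe_finsetSum, sum_single_ofFn]
    using h

end Words

section Rotations

variable {α : Type*}

lemma iterate_rotate_one (w : List α) (i : ℕ) : (·.rotate 1)^[i] w = w.rotate i := by
  induction i with
  | zero => simp
  | succ i ih => rw [Function.iterate_succ_apply', ih, List.rotate_rotate]

/-- The least positive `i` such that rotating the word `w` by `i` letters gives back `w`. -/
def rotationPeriod (w : List α) : ℕ := Function.minimalPeriod (·.rotate 1) w

lemma rotate_eq_self_iff {w : List α} {i : ℕ} : w.rotate i = w ↔ rotationPeriod w ∣ i := by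
  rw [rotationPeriod, ← Function.isPeriodicPt_iff_minimalPeriod_dvd, Function.IsPeriodicPt,
    Function.IsFixedPt, iterate_rotate_one]

lemma rotationPeriod_dvd_length (w : List α) : rotationPeriod w ∣ w.length :=
  rotate_eq_self_iff.1 w.rotate_length

lemma rotate_eq_rotate_iff {w : List α} {i j : ℕ} :
    w.rotate i = w.rotate j ↔ i ≡ j [MOD rotationPeriod w] := by
  wlog hij : i ≤ j generalizing i j
  · rw [eq_comm, this (le_of_not_ge hij), Nat.ModEq.comm]
  · obtain ⟨k, rfl⟩ := Nat.exists_eq_add_of_le hij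
    rw [add_comm, ← List.rotate_rotate, List.rotate_eq_rotate, eq_comm, rotate_eq_self_iff,
      Nat.ModEq.comm, Nat.add_modEq_right_iff]

lemma rotationPeriod_rotate (w : List α) (i : ℕ) :
    rotationPeriod (w.rotate i) = rotationPeriod w :=
  Nat.dvd_left_injective <| funext fun k ↦ propext <| by
    beta_reduce
    rw [← rotate_eq_self_iff, ← rotate_eq_self_iff, List.rotate_rotate, add_comm,
      ← List.rotate_rotate, List.rotate_eq_rotate]

lemma sum_moebius_of_rotate_eq_self [DecidableEq α] {w : List α} (hw : w ≠ []) :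
    ∑ d ∈ w.length.divisors with w.rotate (w.length / d) = w, ArithmeticFunction.moebius d =
      if rotationPeriod w = w.length then 1 else 0 := by
  have hN : w.length ≠ 0 := by simpa using hw
  obtain ⟨e, he⟩ := rotationPeriod_dvd_length w
  have hp : rotationPeriod w ≠ 0 := left_ne_zero_of_mul (he ▸ hN)
  have he0 : e ≠ 0 := right_ne_zero_of_mul (he ▸ hN)
  have hdiv : {d ∈ w.length.divisors | w.rotate (w.length / d) = w} = e.divisors := by
    ext d
    simp only [Finset.mem_filter, Nat.mem_divisors, rotate_eq_self_iff]
    rw [and_iff_left hN, and_iff_left he0]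
    constructor
    · rintro ⟨hd, hpd⟩
      rwa [Nat.dvd_div_iff_mul_dvd hd, mul_comm, he, Nat.mul_dvd_mul_iff_left hp.bot_lt] at hpd
    · intro hd
      have hdN : d ∣ w.length := he ▸ hd.mul_left _
      rw [Nat.dvd_div_iff_mul_dvd hdN, mul_comm, he, Nat.mul_dvd_mul_iff_left hp.bot_lt]
      exact ⟨hd.mul_left _, hd⟩
  rw [hdiv, ← ArithmeticFunction.coe_mul_zeta_apply, ArithmeticFunction.moebius_mul_coe_zeta,
    ArithmeticFunction.one_apply, he]
  simp [hp]

lemma eq_flatten_replicate_of_append_comm {t r : List α} {d : ℕ} (hr : r.length = d * t.length)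
    (h : r ++ t = t ++ r) : r = (List.replicate d t).flatten := by
  induction d generalizing r with
  | zero => simpa using hr
  | succ d ih =>
    obtain ⟨r', rfl⟩ : t <+: r := List.prefix_of_prefix_length_le (l₃ := r ++ t)
      (h ▸ List.prefix_append t r) (List.prefix_append r t) (by rw [hr]; nlinarith)
    rw [List.append_assoc, List.append_cancel_left_eq] at h
    rw [List.length_append, Nat.add_one_mul, add_comm, Nat.add_right_cancel_iff] at hr
    rw [List.replicate_succ, List.flatten_cons, ← ih hr h]

lemma rotate_flatten_replicate (t : List α) (d : ℕ) :
    (List.replicate d t).flatten.rotate t.length = (List.replicate d t).flatten := by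
  cases d with
  | zero => simp
  | succ d =>
    calc (List.replicate (d + 1) t).flatten.rotate t.length
        = (List.replicate d t).flatten ++ t := by
          rw [List.replicate_succ, List.flatten_cons, List.rotate_append_length_eq]
      _ = (List.replicate (d + 1) t).flatten := by simp [List.replicate_succ']

lemma eq_flatten_replicate_of_rotate_eq_self {w : List α} {d k : ℕ} (hd : d ≠ 0)
    (hw : w.length = d * k) (h : w.rotate k = w) : w = (List.replicate d (w.take k)).flatten := by
  obtain ⟨e, rfl⟩ := Nat.exists_eq_succ_of_ne_zero hd
  have hk : k ≤ w.length := hw ▸ Nat.le_mul_of_pos_left k e.succ_pos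
  have hcomm : w.drop k ++ w.take k = w.take k ++ w.drop k := by
    rw [← List.rotate_eq_drop_append_take hk, h, List.take_append_drop]
  have hdrop : (w.drop k).length = e * (w.take k).length := by
    rw [List.length_drop, List.length_take_of_le hk, hw, Nat.succ_mul, Nat.add_sub_cancel]
  rw [List.replicate_succ, List.flatten_cons, ← eq_flatten_replicate_of_append_comm hdrop hcomm,
    List.take_append_drop]

lemma card_wordsOfContent_rotate_eq_self [Fintype α] [DecidableEq α] {n : α → ℕ} {d : ℕ}
    (hd : d ≠ 0) (hdn : ∀ a, d ∣ n a) :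
    {w ∈ wordsOfContent n | w.rotate ((∑ a, n a) / d) = w}.card =
      (wordsOfContent fun a ↦ n a / d).card := by
  have hk : (∑ a, n a) / d = ∑ a, n a / d := Nat.sum_div fun a _ ↦ hdn a
  have hcount (t : List α) (a : α) : (List.replicate d t).flatten.count a = d * t.count a := by
    simp [List.count_flatten]
  have heq (w) (hw : w ∈ {w ∈ wordsOfContent n | w.rotate ((∑ a, n a) / d) = w}) :
      (List.replicate d (w.take ((∑ a, n a) / d))).flatten = w := by
    rw [Finset.mem_filter] at hw
    refine (eq_flatten_replicate_of_rotate_eq_self hd ?_ hw.2).symm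
    rw [length_of_mem_wordsOfContent hw.1, Nat.mul_div_cancel' (Finset.dvd_sum fun a _ ↦ hdn a)]
  refine Finset.card_nbij' (·.take ((∑ a, n a) / d)) (fun t ↦ (List.replicate d t).flatten)
    (fun w hw ↦ mem_wordsOfContent.2 fun a ↦ ?_) (fun t ht ↦ ?_) heq (fun t ht ↦ ?_)
  · rw [← mem_wordsOfContent.1 (Finset.mem_filter.1 hw).1 a, ← heq w hw, hcount, heq w hw,
      Nat.mul_div_cancel_left _ hd.bot_lt]
  · have hrot := rotate_flatten_replicate t d
    rw [length_of_mem_wordsOfContent ht, ← hk] at hrot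
    refine Finset.mem_filter.2 ⟨mem_wordsOfContent.2 fun a ↦ ?_, hrot⟩
    rw [hcount, mem_wordsOfContent.1 ht a, Nat.mul_div_cancel' (hdn a)]
  · obtain ⟨e, rfl⟩ := Nat.exists_eq_succ_of_ne_zero hd
    simp [List.replicate_succ, hk, ← length_of_mem_wordsOfContent ht]

lemma dvd_of_rotate_eq_self [Fintype α] [DecidableEq α] {n : α → ℕ} {d : ℕ} {w : List α}
    (hd : d ≠ 0) (hw : w ∈ wordsOfContent n) (hdn : d ∣ ∑ a, n a)
    (h : w.rotate ((∑ a, n a) / d) = w) (a : α) : d ∣ n a := by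
  rw [← length_of_mem_wordsOfContent hw] at hdn h
  rw [← mem_wordsOfContent.1 hw a,
    eq_flatten_replicate_of_rotate_eq_self hd (Nat.mul_div_cancel' hdn).symm h]
  simp [List.count_flatten]

end Rotations

section CountingLyndonWords

variable {α : Type*} [LinearOrder α]

lemma isLyndon_iff_forall_lt_rotate {w : List α} :
    IsLyndon w ↔ w ≠ [] ∧ ∀ i, 0 < i → i < w.length → w < w.rotate i := by
  rw [isLyndon_iff_forall_lt_append_swap]
  refine and_congr_right fun _ ↦ ⟨fun h i hi hil ↦ ?_, ?_⟩
  · rw [List.rotate_eq_drop_append_take hil.le]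
    refine h _ _ (List.take_append_drop i w) ?_ ?_
    · rw [Ne, List.take_eq_nil_iff, ← List.length_eq_zero_iff]
      omega
    · rw [Ne, List.drop_eq_nil_iff]
      omega
  · rintro h u v rfl hu hv
    simpa using h u.length (List.length_pos_iff.2 hu) (by simpa using List.length_pos_iff.2 hv)

lemma IsLyndon.rotationPeriod_eq_length {w : List α} (h : IsLyndon w) :
    rotationPeriod w = w.length := by
  rw [isLyndon_iff_forall_lt_rotate] at h
  have hdvd := rotationPeriod_dvd_length w
  have hpos : 0 < w.length := List.length_pos_iff.2 h.1
  by_contra hne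
  have hlt := h.2 _ (Nat.pos_of_dvd_of_pos hdvd hpos) ((Nat.le_of_dvd hpos hdvd).lt_of_ne hne)
  rw [rotate_eq_self_iff.2 dvd_rfl] at hlt
  exact lt_irrefl w hlt

lemma IsLyndon.le_of_isRotated {u v : List α} (hu : IsLyndon u) (h : u ~r v) : u ≤ v := by
  obtain ⟨i, hi, rfl⟩ := List.isRotated_iff_mod.1 h
  rcases Nat.eq_zero_or_pos i with rfl | hi0
  · simp
  rcases hi.eq_or_lt with rfl | hil
  · simp
  · exact ((isLyndon_iff_forall_lt_rotate.1 hu).2 i hi0 hil).le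

lemma exists_isLyndon_rotate {w : List α} (hw : w ≠ []) (h : rotationPeriod w = w.length) :
    ∃ i, IsLyndon (w.rotate i) := by
  have hN : 0 < w.length := List.length_pos_iff.2 hw
  obtain ⟨i, -, hmin⟩ := (Finset.range w.length).exists_min_image (w.rotate ·) ⟨0, by simpa⟩
  refine ⟨i, isLyndon_iff_forall_lt_rotate.2 ⟨by simpa using hw, fun k hk hkl ↦ ?_⟩⟩
  rw [List.length_rotate] at hkl
  refine lt_of_le_of_ne ?_ fun heq ↦ ?_
  · simpa [List.rotate_rotate, List.rotate_mod] using
      hmin ((i + k) % w.length) (by simpa using Nat.mod_lt _ hN)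
  · have hdvd := rotate_eq_self_iff.1 heq.symm
    rw [rotationPeriod_rotate, h] at hdvd
    exact Nat.not_dvd_of_pos_of_lt hk hkl hdvd

variable [Fintype α]

open scoped Classical in
/-- The Lyndon words in which each letter `a` occurs exactly `n a` times. -/
def lyndonWords (n : α → ℕ) : Finset (List α) := {w ∈ wordsOfContent n | IsLyndon w}

lemma mem_lyndonWords {n : α → ℕ} {w : List α} :
    w ∈ lyndonWords n ↔ w ∈ wordsOfContent n ∧ IsLyndon w := by
  simp [lyndonWords]

-- Every word of full rotation period is uniquely a rotation of a Lyndon word.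
lemma sum_mul_card_lyndonWords {n : α → ℕ} (hn : n ≠ 0) :
    (∑ a, n a) * (lyndonWords n).card =
      {w ∈ wordsOfContent n | rotationPeriod w = w.length}.card := by
  rw [mul_comm, ← Finset.card_range (∑ a, n a), ← Finset.card_product]
  refine Finset.card_nbij (fun p ↦ p.1.rotate p.2) ?_ ?_ ?_
  · rintro ⟨w, i⟩ hp
    obtain ⟨⟨hw, hl⟩, -⟩ := by simpa [mem_lyndonWords] using hp
    simpa [rotate_mem_wordsOfContent, rotationPeriod_rotate, hw] using hl.rotationPeriod_eq_length
  · rintro ⟨w, i⟩ hp ⟨w', j⟩ hq (h : w.rotate i = w'.rotate j)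
    obtain ⟨⟨hw, hl⟩, hi⟩ := by simpa [mem_lyndonWords] using hp
    obtain ⟨⟨-, hl'⟩, hj⟩ := by simpa [mem_lyndonWords] using hq
    have hrot : w ~r w' := (List.IsRotated.forall w i).symm.trans (h ▸ List.IsRotated.forall w' j)
    obtain rfl := (hl.le_of_isRotated hrot).antisymm (hl'.le_of_isRotated hrot.symm)
    rw [rotate_eq_rotate_iff, hl.rotationPeriod_eq_length, length_of_mem_wordsOfContent hw] at h
    rw [h.eq_of_lt_of_lt hi hj]
  · intro w hw
    obtain ⟨hw, hper⟩ := by simpa using hw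
    have hN : 0 < ∑ a, n a := by
      simpa [Finset.sum_pos_iff, Nat.pos_iff_ne_zero, Function.ne_iff] using hn
    have hlen : w.length = ∑ a, n a := length_of_mem_wordsOfContent hw
    obtain ⟨i, hi⟩ := exists_isLyndon_rotate (List.length_pos_iff.1 (hlen ▸ hN)) hper
    obtain ⟨j, hj⟩ : w.rotate i ~r w := List.IsRotated.forall w i
    refine ⟨(w.rotate i, j % ∑ a, n a), ?_, ?_⟩
    · simp [mem_lyndonWords, rotate_mem_wordsOfContent, hw, hi, Nat.mod_lt _ hN]
    · dsimp only
      rw [← hlen, ← List.length_rotate w i, List.rotate_mod, hj]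

theorem sum_mul_card_lyndonWords_eq_sum_divisors {n : α → ℕ} (hn : n ≠ 0) :
    ((∑ a, n a : ℕ) : ℤ) * (lyndonWords n).card =
      ∑ d ∈ (Finset.univ.gcd n).divisors,
        ArithmeticFunction.moebius d * (Nat.multinomial Finset.univ fun a ↦ n a / d : ℤ) := by
  have hN : ∑ a, n a ≠ 0 := by simpa [Function.ne_iff] using hn
  set N := ∑ a, n a
  have hmoebius (w) (hw : w ∈ wordsOfContent n) :
      (if rotationPeriod w = w.length then 1 else 0) =
        ∑ d ∈ N.divisors, if w.rotate (N / d) = w then ArithmeticFunction.moebius d else 0 := by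
    have hlen : w.length = N := length_of_mem_wordsOfContent hw
    rw [← sum_moebius_of_rotate_eq_self (by rintro rfl; exact hN hlen.symm), Finset.sum_filter,
      hlen]
  have hgcd : Finset.univ.gcd n ∣ N := Finset.dvd_sum fun a ha ↦ Finset.gcd_dvd ha
  calc (N : ℤ) * (lyndonWords n).card
      = ∑ w ∈ wordsOfContent n, if rotationPeriod w = w.length then 1 else 0 := by
        rw [← Nat.cast_mul, sum_mul_card_lyndonWords hn, Finset.natCast_card_filter]
    _ = ∑ d ∈ N.divisors, ∑ w ∈ wordsOfContent n,
          if w.rotate (N / d) = w then ArithmeticFunction.moebius d else 0 := by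
        rw [Finset.sum_congr rfl hmoebius, Finset.sum_comm]
    _ = ∑ d ∈ (Finset.univ.gcd n).divisors, ∑ w ∈ wordsOfContent n,
          if w.rotate (N / d) = w then ArithmeticFunction.moebius d else 0 := by
        refine (Finset.sum_subset (Nat.divisors_subset_of_dvd hN hgcd) fun d hd hdg ↦
          Finset.sum_eq_zero fun w hw ↦ if_neg fun h ↦ hdg ?_).symm
        rw [Nat.mem_divisors] at hd ⊢
        exact ⟨Finset.dvd_gcd fun a _ ↦
          dvd_of_rotate_eq_self (ne_zero_of_dvd_ne_zero hN hd.1) hw hd.1 h a,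
          ne_zero_of_dvd_ne_zero hN hgcd⟩
    _ = _ := by
        refine Finset.sum_congr rfl fun d hd ↦ ?_
        have hdn (a) : d ∣ n a := (Nat.dvd_of_mem_divisors hd).trans (Finset.gcd_dvd (by simp))
        rw [← Finset.sum_filter, Finset.sum_const, card_wordsOfContent_rotate_eq_self
          (Nat.pos_of_mem_divisors hd).ne' hdn, card_wordsOfContent, nsmul_eq_mul, mul_comm]

end CountingLyndonWords

section Derivations

variable {R X : Type*} [CommRing R]

lemma lieSpan_range_of : LieSubalgebra.lieSpan R (FreeLieAlgebra R X)
    (Set.range (FreeLieAlgebra.of R)) = ⊤ := by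
  set S := LieSubalgebra.lieSpan R (FreeLieAlgebra R X) (Set.range (FreeLieAlgebra.of R))
  let f : FreeLieAlgebra R X →ₗ⁅R⁆ S := FreeLieAlgebra.lift R fun i ↦
    ⟨FreeLieAlgebra.of R i, LieSubalgebra.subset_lieSpan ⟨i, rfl⟩⟩
  have hf : S.incl.comp f = LieHom.id := by
    ext i
    simp [f]
  refine eq_top_iff.2 fun x _ ↦ ?_
  have hx : (f x : FreeLieAlgebra R X) = x := LieHom.congr_fun hf x
  exact hx ▸ (f x).2

@[elab_as_elim]
lemma freeLieAlgebra_induction {p : FreeLieAlgebra R X → Prop}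
    (of : ∀ i, p (FreeLieAlgebra.of R i)) (zero : p 0) (add : ∀ x y, p x → p y → p (x + y))
    (smul : ∀ (c : R) x, p x → p (c • x)) (lie : ∀ x y, p x → p y → p ⁅x, y⁆)
    (x : FreeLieAlgebra R X) : p x := by
  have hx : x ∈ LieSubalgebra.lieSpan R (FreeLieAlgebra R X) (Set.range (FreeLieAlgebra.of R)) :=
    lieSpan_range_of (R := R) (X := X) ▸ LieSubalgebra.mem_top x
  induction hx using LieSubalgebra.lieSpan_induction with
  | mem x hx => exact hx.elim fun i hi ↦ hi ▸ of i
  | zero => exact zero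
  | add x y _ _ hx hy => exact add x y hx hy
  | smul c x _ hx => exact smul c x hx
  | lie x y _ _ hx hy => exact lie x y hx hy

variable (R X) in
/-- The free associative algebra on `X`, as the algebra of finitely supported functions on words. -/
abbrev WordAlgebra : Type _ := MonoidAlgebra R (FreeMonoid X)

attribute [local instance] LieRing.ofAssociativeRing

/-- The canonical map from the free Lie algebra to the free associative algebra. -/
def toWordAlgebra : FreeLieAlgebra R X →ₗ⁅R⁆ WordAlgebra R X :=
  FreeLieAlgebra.lift R fun i ↦ (MonoidAlgebra.single (FreeMonoid.of i) 1 : WordAlgebra R X)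

@[simp]
lemma toWordAlgebra_of (i : X) :
    toWordAlgebra (FreeLieAlgebra.of R i) = .single (FreeMonoid.of i) 1 :=
  FreeLieAlgebra.lift_of_apply _ _

lemma toWordAlgebra_lie (x y : FreeLieAlgebra R X) :
    toWordAlgebra ⁅x, y⁆ =
      toWordAlgebra x * toWordAlgebra y - toWordAlgebra y * toWordAlgebra x := by
  rw [LieHom.map_lie, LieRing.of_associative_ring_bracket]

variable {M : Type*} [AddCommGroup M] [Module R M] [LieRingModule (FreeLieAlgebra R X) M]
  [LieModule R (FreeLieAlgebra R X) M]

/-- The representation of the free associative algebra on `M × R` whose letter `i` acts by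
`(m, c) ↦ (⁅i, m⁆ + c • d i, 0)`. It encodes the action on `M` together with the derivation
extending `d`. -/
def affineRep (d : X → M) : WordAlgebra R X →ₐ[R] Module.End R (M × R) :=
  MonoidAlgebra.lift R _ _ <| FreeMonoid.lift fun i ↦ LinearMap.inl R M R ∘ₗ
    (LieModule.toEnd R (FreeLieAlgebra R X) M (FreeLieAlgebra.of R i)).coprod
      (LinearMap.toSpanSingleton R M (d i))

lemma affineRep_single_of_apply (d : X → M) (i : X) (p : M × R) :
    affineRep d (.single (FreeMonoid.of i) 1) p =
      (⁅FreeLieAlgebra.of R i, p.1⁆ + p.2 • d i, 0) := by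
  simp [affineRep]

lemma affineRep_toWordAlgebra_apply (d : X → M) (x : FreeLieAlgebra R X) (p : M × R) :
    affineRep d (toWordAlgebra x) p =
      (⁅x, p.1⁆ + p.2 • (affineRep d (toWordAlgebra x) (0, 1)).1, 0) := by
  induction x using freeLieAlgebra_induction generalizing p with
  | of i => simp [affineRep_single_of_apply]
  | zero => simp [Prod.ext_iff]
  | add x y hx hy =>
    rw [map_add, map_add, LinearMap.add_apply, LinearMap.add_apply, hx p, hy p]
    ext
    · simp only [Prod.fst_add, add_lie, smul_add]
      abel
    · simp
  | smul c x hx =>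
    rw [map_smul, map_smul, LinearMap.smul_apply, LinearMap.smul_apply, hx p]
    ext
    · simp [smul_comm c]
    · simp
  | lie x y hx hy =>
    simp only [toWordAlgebra_lie, map_sub, map_mul, LinearMap.sub_apply, Module.End.mul_apply]
    have hx_snd := congrArg Prod.snd (hx (0, 1))
    have hy_snd := congrArg Prod.snd (hy (0, 1))
    rw [hx (affineRep d _ p), hy (affineRep d _ p), hx p, hy p,
      hx (affineRep d _ (0, 1)), hy (affineRep d _ (0, 1))]
    ext
    · simp [smul_sub, hx_snd, hy_snd]
      abel
    · simp

/-- The Lie derivation of the free Lie algebra with prescribed values on the generators. -/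
def derivationLift (d : X → M) : LieDerivation R (FreeLieAlgebra R X) M where
  toFun x := (affineRep d (toWordAlgebra x) (0, 1)).1
  map_add' x y := by simp
  map_smul' c x := by simp
  leibniz' x y := by
    have h_snd z : (affineRep d (toWordAlgebra z) (0, (1 : R))).2 = 0 :=
      congrArg Prod.snd (affineRep_toWordAlgebra_apply d z (0, 1))
    simp only [LinearMap.coe_mk, AddHom.coe_mk, toWordAlgebra_lie, map_sub, map_mul,
      LinearMap.sub_apply, Module.End.mul_apply]
    rw [affineRep_toWordAlgebra_apply d x (affineRep d _ _),
      affineRep_toWordAlgebra_apply d y (affineRep d _ _)]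
    simp [h_snd]

lemma derivationLift_apply (d : X → M) (x : FreeLieAlgebra R X) :
    derivationLift d x = (affineRep d (toWordAlgebra x) (0, 1)).1 := rfl

@[simp]
lemma derivationLift_of (d : X → M) (i : X) :
    derivationLift d (FreeLieAlgebra.of R i) = d i := by
  simp [derivationLift_apply, affineRep_single_of_apply]

lemma eq_derivationLift_iff {D : LieDerivation R (FreeLieAlgebra R X) M} {d : X → M} :
    D = derivationLift d ↔ ∀ i, D (FreeLieAlgebra.of R i) = d i :=
  ⟨fun h ↦ by simp [h], fun h ↦ LieDerivation.ext_of_lieSpan_eq_top _ lieSpan_range_of <| by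
    rintro _ ⟨i, rfl⟩
    simp [h]⟩

lemma derivation_apply_eq_zero (D : LieDerivation R (FreeLieAlgebra R X) M)
    {x : FreeLieAlgebra R X} (hx : toWordAlgebra x = 0) : D x = 0 := by
  rw [(eq_derivationLift_iff (D := D)).2 fun i ↦ rfl, derivationLift_apply, hx, map_zero]
  simp

end Derivations

section Multidegree

attribute [local instance] LieRing.ofAssociativeRing

variable {R X : Type*} [CommRing R] [DecidableEq X]

/-- The derivation of the free Lie algebra counting the occurrences of the generator `j`. -/
def letterDegree (j : X) : LieDerivation R (FreeLieAlgebra R X) (FreeLieAlgebra R X) :=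
  derivationLift fun i ↦ if j = i then FreeLieAlgebra.of R i else 0

lemma eq_letterDegree_iff {j : X}
    {D : LieDerivation R (FreeLieAlgebra R X) (FreeLieAlgebra R X)} :
    D = letterDegree j ↔
      ∀ i, D (FreeLieAlgebra.of R i) = if j = i then FreeLieAlgebra.of R i else 0 :=
  eq_derivationLift_iff

lemma letterDegree_of (j i : X) :
    letterDegree j (FreeLieAlgebra.of R i) = if j = i then FreeLieAlgebra.of R i else 0 :=
  eq_letterDegree_iff.1 rfl i

/-- The elements of the free Lie algebra which are homogeneous of degree `n j` in the generator `j`,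
for every `j`. -/
def multidegreeSpace (R : Type*) [CommRing R] (n : X → ℕ) : Submodule R (FreeLieAlgebra R X) :=
  ⨅ j, Module.End.eigenspace (letterDegree j).toLinearMap (n j : R)

lemma mem_multidegreeSpace {n : X → ℕ} {x : FreeLieAlgebra R X} :
    x ∈ multidegreeSpace R n ↔ ∀ j, letterDegree j x = (n j : R) • x := by
  simp only [multidegreeSpace, Submodule.mem_iInf, Module.End.mem_eigenspace_iff]
  rfl

lemma of_mem_multidegreeSpace (i : X) :
    FreeLieAlgebra.of R i ∈ multidegreeSpace R (Pi.single i 1) := by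
  refine mem_multidegreeSpace.2 fun j ↦ ?_
  rw [letterDegree_of, Pi.single_apply]
  split_ifs <;> simp

lemma lie_mem_multidegreeSpace {n k : X → ℕ} {x y : FreeLieAlgebra R X}
    (hx : x ∈ multidegreeSpace R n) (hy : y ∈ multidegreeSpace R k) :
    ⁅x, y⁆ ∈ multidegreeSpace R (n + k) := by
  rw [mem_multidegreeSpace] at *
  intro j
  rw [LieDerivation.apply_lie_eq_add, hx, hy, lie_smul, smul_lie, ← add_smul, Pi.add_apply,
    Nat.cast_add, add_comm]

lemma injOn_toWordAlgebra_multidegreeSpace {K : Type*} [Field K] [CharZero K] {n : X → ℕ}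
    (hn : n ≠ 0) : Set.InjOn (toWordAlgebra (R := K) (X := X)) (multidegreeSpace K n) := by
  obtain ⟨j, hj⟩ := Function.ne_iff.1 hn
  intro x hx y hy hxy
  have hD := derivation_apply_eq_zero (letterDegree j) (x := x - y) (by simp [hxy])
  rw [mem_multidegreeSpace.1 (sub_mem hx hy), smul_eq_zero_iff_right (Nat.cast_ne_zero.2 hj)] at hD
  exact sub_eq_zero.1 hD

/-- The operator on the free associative algebra multiplying each word by its number of letters
`j`. -/
def letterCount (j : X) : WordAlgebra R X →ₗ[R] WordAlgebra R X where
  toFun f := .ofCoeff ((fun w : FreeMonoid X ↦ (w.toList.count j : R)) • f.coeff)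
  map_add' f g := by simp
  map_smul' c f := by ext w; simp [mul_left_comm]

lemma coeff_letterCount (j : X) (f : WordAlgebra R X) (w : FreeMonoid X) :
    (letterCount j f).coeff w = (w.toList.count j : R) * f.coeff w := by
  simp [letterCount]

lemma letterCount_single (j : X) (w : FreeMonoid X) (r : R) :
    letterCount j (.single w r) = (w.toList.count j : R) • .single w r := by
  ext s
  by_cases h : w = s <;> simp [coeff_letterCount, h]

lemma letterCount_mul (j : X) (f g : WordAlgebra R X) :
    letterCount j (f * g) = letterCount j f * g + f * letterCount j g := by
  induction f using MonoidAlgebra.induction_linear with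
  | zero => simp
  | add f f' hf hf' =>
    simp only [add_mul, map_add, hf, hf']
    abel
  | single w r =>
    induction g using MonoidAlgebra.induction_linear with
    | zero => simp
    | add g g' hg hg' =>
      simp only [mul_add, map_add, hg, hg']
      abel
    | single s t =>
      simp only [MonoidAlgebra.single_mul_single, letterCount_single, smul_mul_assoc,
        mul_smul_comm, ← add_smul, FreeMonoid.toList_mul, List.count_append, Nat.cast_add]

lemma toWordAlgebra_letterDegree (j : X) (x : FreeLieAlgebra R X) :
    toWordAlgebra (letterDegree j x) = letterCount j (toWordAlgebra x) := by
  induction x using freeLieAlgebra_induction with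
  | of i =>
    rw [letterDegree_of, toWordAlgebra_of, letterCount_single]
    obtain rfl | h := eq_or_ne j i
    · simp
    · simp [h, h.symm]
  | zero => simp
  | add x y hx hy => simp only [map_add, hx, hy]
  | smul c x hx => simp only [map_smul, hx]
  | lie x y hx hy =>
    simp only [LieDerivation.apply_lie_eq_sub, map_sub, toWordAlgebra_lie, letterCount_mul, hx, hy]
    abel

lemma count_eq_of_mem_multidegreeSpace [IsDomain R] [CharZero R] {n : X → ℕ}
    {x : FreeLieAlgebra R X} (hx : x ∈ multidegreeSpace R n) {w : FreeMonoid X}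
    (hw : (toWordAlgebra x).coeff w ≠ 0) (j : X) : w.toList.count j = n j := by
  have h := congrArg (·.coeff w) (toWordAlgebra_letterDegree j x)
  simp only [mem_multidegreeSpace.1 hx j, map_smul, coeff_letterCount, MonoidAlgebra.coeff_smul,
    Finsupp.smul_apply, smul_eq_mul] at h
  exact_mod_cast (mul_right_cancel₀ hw h).symm

end Multidegree

section LeadingWords

attribute [local instance] LieRing.ofAssociativeRing

variable {R X : Type*} [CommRing R]

lemma exists_mul_eq_of_coeff_mul_ne_zero {f g : WordAlgebra R X} {s : FreeMonoid X}
    (h : (f * g).coeff s ≠ 0) : ∃ a b, a * b = s ∧ f.coeff a ≠ 0 ∧ g.coeff b ≠ 0 := by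
  classical
  have hs := MonoidAlgebra.support_coeff_mul_subset f g (Finsupp.mem_support_iff.2 h)
  obtain ⟨a, ha, b, hb, hab⟩ := Finset.mem_mul.1 hs
  exact ⟨a, b, hab, Finsupp.mem_support_iff.1 ha, Finsupp.mem_support_iff.1 hb⟩

variable [LinearOrder X]

/-- `f` is `w` plus a linear combination of words which are larger than `w` and of the same
length. -/
def HasLeadingWord (f : WordAlgebra R X) (w : List X) : Prop :=
  f.coeff (FreeMonoid.ofList w) = 1 ∧
    ∀ s, f.coeff s ≠ 0 → s.toList.length = w.length ∧ w ≤ s.toList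

lemma hasLeadingWord_single (w : FreeMonoid X) :
    HasLeadingWord (.single w 1 : WordAlgebra R X) w.toList := by
  refine ⟨by simp, fun s hs ↦ ?_⟩
  obtain rfl : s = w := by
    by_contra h
    simp [h] at hs
  exact ⟨rfl, le_rfl⟩

lemma HasLeadingWord.mul {f g : WordAlgebra R X} {u v : List X} (hf : HasLeadingWord f u)
    (hg : HasLeadingWord g v) : HasLeadingWord (f * g) (u ++ v) := by
  constructor
  · rw [FreeMonoid.ofList_append, MonoidAlgebra.coeff_mul_mul_of_uniqueMul, hf.1, hg.1, one_mul]
    intro a b ha _ hab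
    exact List.append_inj (s₁ := a.toList) (t₁ := b.toList) hab
      (hf.2 a (Finsupp.mem_support_iff.1 ha)).1
  · intro s hs
    obtain ⟨a, b, rfl, ha, hb⟩ := exists_mul_eq_of_coeff_mul_ne_zero hs
    obtain ⟨hau, hua⟩ := hf.2 a ha
    obtain ⟨hbv, hvb⟩ := hg.2 b hb
    rw [FreeMonoid.toList_mul, List.length_append, List.length_append, hau, hbv]
    exact ⟨rfl, append_le_append_of_length_eq hua hvb hau.symm⟩

lemma HasLeadingWord.sub {f g : WordAlgebra R X} {u v : List X} (hf : HasLeadingWord f u)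
    (hg : HasLeadingWord g v) (huv : u < v) (hl : u.length = v.length) :
    HasLeadingWord (f - g) u := by
  refine ⟨?_, fun s hs ↦ ?_⟩
  · have hgu : g.coeff (FreeMonoid.ofList u) = 0 :=
      not_not.1 fun h ↦ huv.not_ge (hg.2 _ h).2
    simp [hf.1, hgu]
  · by_cases hfs : f.coeff s = 0
    · obtain ⟨hsv, hvs⟩ := hg.2 s (by simpa [hfs] using hs)
      exact ⟨hsv.trans hl.symm, huv.le.trans hvs⟩
    · exact hf.2 s hfs

lemma HasLeadingWord.toWordAlgebra_lie {x y : FreeLieAlgebra R X} {u v : List X}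
    (hx : HasLeadingWord (toWordAlgebra x) u) (hy : HasLeadingWord (toWordAlgebra y) v)
    (huv : u ++ v < v ++ u) : HasLeadingWord (toWordAlgebra ⁅x, y⁆) (u ++ v) := by
  rw [FreeLieWitt.toWordAlgebra_lie]
  exact (hx.mul hy).sub (hy.mul hx) huv (by simp [add_comm])

lemma IsLyndon.exists_hasLeadingWord (R : Type*) [CommRing R] {w : List X} (hw : IsLyndon w) :
    ∃ x ∈ multidegreeSpace R (w.count ·), HasLeadingWord (toWordAlgebra x) w := by
  induction h : w.length using Nat.strong_induction_on generalizing w with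
  | _ k ih =>
    subst h
    obtain hl | hl := lt_or_ge w.length 2
    · have hw_pos := List.length_pos_iff.2 hw.1
      obtain ⟨a, rfl⟩ := List.length_eq_one_iff.1 (by omega : w.length = 1)
      refine ⟨FreeLieAlgebra.of R a, ?_, ?_⟩
      · convert of_mem_multidegreeSpace a using 2
        ext j
        simp [Pi.single_apply, List.count_singleton, @eq_comm _ a j]
      · simpa using hasLeadingWord_single (R := R) (FreeMonoid.of a)
    · obtain ⟨u, v, rfl, hu, hv⟩ := hw.exists_eq_append hl
      have hu_pos := List.length_pos_iff.2 hu.1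
      have hv_pos := List.length_pos_iff.2 hv.1
      obtain ⟨x, hx, hxu⟩ := ih _ (by simpa using hv_pos) hu rfl
      obtain ⟨y, hy, hyv⟩ := ih _ (by simpa using hu_pos) hv rfl
      refine ⟨⁅x, y⁆, ?_, hxu.toWordAlgebra_lie hyv (hw.lt_append_swap hu.1 hv.1)⟩
      convert lie_mem_multidegreeSpace hx hy using 2
      ext j
      simp

end LeadingWords

section ShuffleSums

variable {R X : Type*} [CommRing R]

variable (R X) in
/-- The tensor square of the free associative algebra, as the algebra of finitely supported
functions on pairs of words. -/
abbrev WordPairAlgebra : Type _ := MonoidAlgebra R (FreeMonoid X × FreeMonoid X)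

/-- The embedding `f ↦ f ⊗ 1` of the free associative algebra in its tensor square. -/
def tensorLeft : WordAlgebra R X →ₐ[R] WordPairAlgebra R X :=
  MonoidAlgebra.mapDomainAlgHom R R (MonoidHom.inl _ _)

/-- The embedding `f ↦ 1 ⊗ f` of the free associative algebra in its tensor square. -/
def tensorRight : WordAlgebra R X →ₐ[R] WordPairAlgebra R X :=
  MonoidAlgebra.mapDomainAlgHom R R (MonoidHom.inr _ _)

lemma tensorLeft_single (w : FreeMonoid X) (r : R) :
    tensorLeft (.single w r) = .single (w, 1) r := by
  simp [tensorLeft]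

lemma tensorRight_single (w : FreeMonoid X) (r : R) :
    tensorRight (.single w r) = .single (1, w) r := by
  simp [tensorRight]

lemma tensorLeft_mul_tensorRight_comm (f g : WordAlgebra R X) :
    tensorLeft f * tensorRight g = tensorRight g * tensorLeft f := by
  induction f using MonoidAlgebra.induction_linear with
  | zero => simp
  | add f f' hf hf' => rw [map_add, add_mul, mul_add, hf, hf']
  | single w r =>
    induction g using MonoidAlgebra.induction_linear with
    | zero => simp
    | add g g' hg hg' => rw [map_add, add_mul, mul_add, hg, hg']
    | single s t => simp [tensorLeft_single, tensorRight_single, mul_comm]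

lemma coeff_tensorLeft_of_ne_one (f : WordAlgebra R X) (u : FreeMonoid X) {v : FreeMonoid X}
    (hv : v ≠ 1) : (tensorLeft f).coeff (u, v) = 0 :=
  Finsupp.mapDomain_of_notMem_range _ _ fun ⟨_, h⟩ ↦ hv (congrArg Prod.snd h).symm

lemma coeff_tensorRight_of_ne_one (f : WordAlgebra R X) {u : FreeMonoid X} (hu : u ≠ 1)
    (v : FreeMonoid X) : (tensorRight f).coeff (u, v) = 0 :=
  Finsupp.mapDomain_of_notMem_range _ _ fun ⟨_, h⟩ ↦ hu (congrArg Prod.fst h).symm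

/-- The coproduct of the free associative algebra for which every letter is primitive. -/
def comul : WordAlgebra R X →ₐ[R] WordPairAlgebra R X :=
  MonoidAlgebra.lift R _ _ <| FreeMonoid.lift fun i ↦
    tensorLeft (.single (FreeMonoid.of i) 1) + tensorRight (.single (FreeMonoid.of i) 1)

lemma comul_single_of (i : X) :
    comul (.single (FreeMonoid.of i) 1 : WordAlgebra R X) =
      tensorLeft (.single (FreeMonoid.of i) 1) + tensorRight (.single (FreeMonoid.of i) 1) := by
  simp [comul]

attribute [local instance] LieRing.ofAssociativeRing in
lemma comul_toWordAlgebra (x : FreeLieAlgebra R X) :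
    comul (toWordAlgebra x) = tensorLeft (toWordAlgebra x) + tensorRight (toWordAlgebra x) := by
  induction x using freeLieAlgebra_induction with
  | of i => rw [toWordAlgebra_of, comul_single_of]
  | zero => simp
  | add x y hx hy =>
    simp only [map_add, hx, hy]
    abel
  | smul c x hx => simp only [map_smul, hx, smul_add]
  | lie x y hx hy =>
    simp only [toWordAlgebra_lie, map_sub, map_mul, hx, hy, mul_add, add_mul,
      tensorLeft_mul_tensorRight_comm]
    abel

section LetterMul

variable (a b : X) (u v : List X)

lemma coeff_letter_mul_nil (f : WordAlgebra R X) :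
    (.single (FreeMonoid.of a) 1 * f : WordAlgebra R X).coeff (FreeMonoid.ofList []) = 0 :=
  MonoidAlgebra.coeff_single_mul_of_forall_mul_ne _ _ fun _ h ↦ List.cons_ne_nil _ _ h

lemma coeff_tensorLeft_letter_mul_nil (F : WordPairAlgebra R X) :
    (tensorLeft (.single (FreeMonoid.of a) 1) * F).coeff
      (FreeMonoid.ofList [], FreeMonoid.ofList v) = 0 := by
  rw [tensorLeft_single]
  exact MonoidAlgebra.coeff_single_mul_of_forall_mul_ne _ _ fun _ h ↦
    List.cons_ne_nil _ _ (congrArg Prod.fst h)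

lemma coeff_tensorRight_letter_mul_nil (F : WordPairAlgebra R X) :
    (tensorRight (.single (FreeMonoid.of a) 1) * F).coeff
      (FreeMonoid.ofList u, FreeMonoid.ofList []) = 0 := by
  rw [tensorRight_single]
  exact MonoidAlgebra.coeff_single_mul_of_forall_mul_ne _ _ fun _ h ↦
    List.cons_ne_nil _ _ (congrArg Prod.snd h)

variable [DecidableEq X]

lemma coeff_letter_mul_cons (f : WordAlgebra R X) :
    (.single (FreeMonoid.of a) 1 * f : WordAlgebra R X).coeff (FreeMonoid.ofList (b :: u)) =
      if a = b then f.coeff (FreeMonoid.ofList u) else 0 := by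
  split_ifs with h
  · subst h
    rw [FreeMonoid.ofList_cons, MonoidAlgebra.coeff_single_mul_mul, one_mul]
  · exact MonoidAlgebra.coeff_single_mul_of_forall_mul_ne _ _ fun _ hd ↦
      h (List.cons.inj hd).1

lemma coeff_tensorLeft_letter_mul_cons (F : WordPairAlgebra R X) :
    (tensorLeft (.single (FreeMonoid.of a) 1) * F).coeff
        (FreeMonoid.ofList (b :: u), FreeMonoid.ofList v) =
      if a = b then F.coeff (FreeMonoid.ofList u, FreeMonoid.ofList v) else 0 := by
  rw [tensorLeft_single]
  split_ifs with h
  · subst h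
    simpa using MonoidAlgebra.coeff_single_mul_mul F 1 (FreeMonoid.of a, 1)
      (FreeMonoid.ofList u, FreeMonoid.ofList v)
  · exact MonoidAlgebra.coeff_single_mul_of_forall_mul_ne _ _ fun _ hd ↦
      h (List.cons.inj (congrArg Prod.fst hd)).1

lemma coeff_tensorRight_letter_mul_cons (F : WordPairAlgebra R X) :
    (tensorRight (.single (FreeMonoid.of a) 1) * F).coeff
        (FreeMonoid.ofList u, FreeMonoid.ofList (b :: v)) =
      if a = b then F.coeff (FreeMonoid.ofList u, FreeMonoid.ofList v) else 0 := by
  rw [tensorRight_single]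
  split_ifs with h
  · subst h
    simpa using MonoidAlgebra.coeff_single_mul_mul F 1 (1, FreeMonoid.of a)
      (FreeMonoid.ofList u, FreeMonoid.ofList v)
  · exact MonoidAlgebra.coeff_single_mul_of_forall_mul_ne _ _ fun _ hd ↦
      h (List.cons.inj (congrArg Prod.snd hd)).1

end LetterMul

lemma wordAlgebra_induction {p : WordAlgebra R X → Prop} (zero : p 0)
    (add : ∀ f g, p f → p g → p (f + g)) (scalar : ∀ r, p (.single 1 r))
    (letter_mul : ∀ a f, p f → p (.single (FreeMonoid.of a) 1 * f)) (f : WordAlgebra R X) :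
    p f := by
  induction f using MonoidAlgebra.induction_linear with
  | zero => exact zero
  | add f g hf hg => exact add f g hf hg
  | single w r =>
    induction w using FreeMonoid.recOn with
    | one => exact scalar r
    | of_mul a w hw => simpa using letter_mul a _ hw

lemma comul_single_one (r : R) : comul (.single 1 r : WordAlgebra R X) = .single (1, 1) r := by
  simp [comul, MonoidAlgebra.lift_single, MonoidAlgebra.one_def, ← Prod.one_eq_mk]

lemma coeff_comul_single_one (r : R) (u v : List X) :
    (comul (.single 1 r)).coeff (FreeMonoid.ofList u, FreeMonoid.ofList v) =
      ((shuffles u v).map fun w ↦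
        (.single 1 r : WordAlgebra R X).coeff (FreeMonoid.ofList w)).sum := by
  have hcons (a : X) (w : List X) :
      (.single 1 r : WordAlgebra R X).coeff (FreeMonoid.ofList (a :: w)) = 0 :=
    Finsupp.single_eq_of_ne (List.cons_ne_nil a w)
  rw [comul_single_one]
  rcases u with _ | ⟨b, u⟩ <;> rcases v with _ | ⟨c, v⟩
  · simp
  · rw [shuffles_nil_left, Multiset.map_singleton, Multiset.sum_singleton, hcons]
    exact Finsupp.single_eq_of_ne fun h ↦ List.cons_ne_nil _ _ (congrArg Prod.snd h)
  · rw [shuffles_nil_right, Multiset.map_singleton, Multiset.sum_singleton, hcons]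
    exact Finsupp.single_eq_of_ne fun h ↦ List.cons_ne_nil _ _ (congrArg Prod.fst h)
  · simp only [shuffles, Multiset.map_add, Multiset.map_map, Function.comp_def, hcons]
    simp

lemma coeff_comul (f : WordAlgebra R X) (u v : List X) :
    (comul f).coeff (FreeMonoid.ofList u, FreeMonoid.ofList v) =
      ((shuffles u v).map fun w ↦ f.coeff (FreeMonoid.ofList w)).sum := by
  classical
  induction f using wordAlgebra_induction generalizing u v with
  | zero => simp
  | add f g hf hg => simp [hf, hg]
  | scalar r => exact coeff_comul_single_one r u v
  | letter_mul a f hf =>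
    rw [map_mul, comul_single_of, add_mul, MonoidAlgebra.coeff_add, Finsupp.add_apply]
    rcases u with _ | ⟨b, u⟩ <;> rcases v with _ | ⟨c, v⟩
    · rw [coeff_tensorLeft_letter_mul_nil, coeff_tensorRight_letter_mul_nil, shuffles_nil_left,
        Multiset.map_singleton, Multiset.sum_singleton, coeff_letter_mul_nil, add_zero]
    · rw [coeff_tensorLeft_letter_mul_nil, coeff_tensorRight_letter_mul_cons, hf,
        shuffles_nil_left, shuffles_nil_left, Multiset.map_singleton, Multiset.map_singleton,
        Multiset.sum_singleton, Multiset.sum_singleton, coeff_letter_mul_cons, zero_add]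
    · rw [coeff_tensorLeft_letter_mul_cons, coeff_tensorRight_letter_mul_nil, hf,
        shuffles_nil_right, shuffles_nil_right, Multiset.map_singleton, Multiset.map_singleton,
        Multiset.sum_singleton, Multiset.sum_singleton, coeff_letter_mul_cons, add_zero]
    · rw [coeff_tensorLeft_letter_mul_cons, coeff_tensorRight_letter_mul_cons, hf, hf, shuffles]
      simp only [Multiset.map_add, Multiset.map_map, Function.comp_def, coeff_letter_mul_cons,
        Multiset.sum_add]
      split_ifs <;> simp

lemma sum_shuffles_coeff_toWordAlgebra (x : FreeLieAlgebra R X) {u v : List X} (hu : u ≠ [])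
    (hv : v ≠ []) :
    ((shuffles u v).map fun w ↦ (toWordAlgebra x).coeff (FreeMonoid.ofList w)).sum = 0 := by
  rw [← coeff_comul, comul_toWordAlgebra, MonoidAlgebra.coeff_add, Finsupp.add_apply,
    coeff_tensorLeft_of_ne_one _ (FreeMonoid.ofList u) (v := FreeMonoid.ofList v) hv,
    coeff_tensorRight_of_ne_one _ (u := FreeMonoid.ofList u) hu, add_zero]

lemma isLyndon_of_forall_le_of_coeff_ne_zero [IsDomain R] [CharZero R] [LinearOrder X]
    {x : FreeLieAlgebra R X} {w : FreeMonoid X} (hw : w ≠ 1) (hxw : (toWordAlgebra x).coeff w ≠ 0)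
    (h : ∀ s, (toWordAlgebra x).coeff s ≠ 0 → w.toList ≤ s.toList) : IsLyndon w.toList := by
  by_contra hL
  obtain ⟨u, v, huv, hu, hv, hle⟩ := exists_forall_mem_shuffles_le_of_not_isLyndon hw hL
  have hsum := sum_shuffles_coeff_toWordAlgebra x hu hv
  rw [Multiset.sum_map_eq_nsmul_single w.toList fun s hs hsuv ↦ not_not.1 fun hc ↦
    hs ((hle s hsuv).antisymm (h (FreeMonoid.ofList s) hc))] at hsum
  have hcount := Multiset.count_ne_zero.2 (huv ▸ append_mem_shuffles u v)
  exact smul_ne_zero hcount hxw hsum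

end ShuffleSums

section Dimension

lemma finite_and_finrank_eq_card_of_unitriangular {K V ι : Type*} [Field K] [AddCommGroup V]
    [Module K V] [LinearOrder ι] [Fintype ι] {f : V →ₗ[K] ι → K} (hf : Function.Injective f)
    {b : ι → V} (hdiag : ∀ i, f (b i) i = 1) (htri : ∀ i j, f (b i) j ≠ 0 → i ≤ j) :
    Module.Finite K V ∧ Module.finrank K V = Fintype.card ι := by
  have : Module.Finite K V := .of_injective f hf
  have htriangular : (Matrix.of fun i ↦ f (b i)).IsUpperTriangular := fun i j hji ↦
    not_not.1 fun h ↦ (htri i j h).not_gt hji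
  have hdet : (Matrix.of fun i ↦ f (b i)).det ≠ 0 := by
    rw [Matrix.det_of_isUpperTriangular htriangular]
    simp [hdiag]
  have hb : LinearIndependent K b :=
    .of_comp f (Matrix.linearIndependent_rows_of_det_ne_zero hdet)
  refine ⟨this, le_antisymm ?_ hb.fintype_card_le_finrank⟩
  simpa using LinearMap.finrank_le_finrank_of_injective hf

variable {K X : Type*} [Field K] [LinearOrder X] [Fintype X]

variable (K) in
/-- The coefficients, at the Lyndon words of content `n`, of the expansion of an element of the
free Lie algebra as a noncommutative polynomial. -/
def lyndonCoeffs (n : X → ℕ) : multidegreeSpace K n →ₗ[K] lyndonWords n → K where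
  toFun x w := (toWordAlgebra (x : FreeLieAlgebra K X)).coeff (FreeMonoid.ofList w)
  map_add' x y := by ext; simp
  map_smul' c x := by ext; simp

variable [CharZero K]

lemma exists_mem_lyndonWords_coeff_ne_zero {n : X → ℕ} (hn : n ≠ 0) {x : FreeLieAlgebra K X}
    (hx : x ∈ multidegreeSpace K n) (hx0 : x ≠ 0) :
    ∃ w ∈ lyndonWords n, (toWordAlgebra x).coeff (FreeMonoid.ofList w) ≠ 0 := by
  have hx0' : toWordAlgebra x ≠ 0 := fun h ↦ hx0 <|
    injOn_toWordAlgebra_multidegreeSpace hn hx (zero_mem _) (h.trans (map_zero _).symm)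
  obtain ⟨w, hw, hmin⟩ := (toWordAlgebra x).coeff.support.exists_min_image FreeMonoid.toList
    (by simpa using hx0')
  simp only [Finsupp.mem_support_iff] at hw hmin
  have hcount := count_eq_of_mem_multidegreeSpace hx hw
  have hw1 : w ≠ 1 := by
    rintro rfl
    exact hn (funext fun j ↦ by simpa using (hcount j).symm)
  exact ⟨w.toList, mem_lyndonWords.2 ⟨mem_wordsOfContent.2 hcount,
    isLyndon_of_forall_le_of_coeff_ne_zero hw1 hw hmin⟩, hw⟩

lemma lyndonCoeffs_injective {n : X → ℕ} (hn : n ≠ 0) :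
    Function.Injective (lyndonCoeffs K n) := by
  refine (injective_iff_map_eq_zero _).2 fun x hx ↦ ?_
  by_contra hx0
  obtain ⟨w, hw, hxw⟩ := exists_mem_lyndonWords_coeff_ne_zero hn x.2 (by simpa using hx0)
  exact hxw (congrFun hx ⟨w, hw⟩)

theorem finite_and_finrank_multidegreeSpace {n : X → ℕ} (hn : n ≠ 0) :
    Module.Finite K (multidegreeSpace K n) ∧
      Module.finrank K (multidegreeSpace K n) = (lyndonWords n).card := by
  have hlead (w : lyndonWords n) :
      ∃ x : multidegreeSpace K n, HasLeadingWord (toWordAlgebra (x : FreeLieAlgebra K X)) w := by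
    obtain ⟨hcontent, hw⟩ := mem_lyndonWords.1 w.2
    obtain ⟨x, hx, hxw⟩ := hw.exists_hasLeadingWord K
    rw [funext (mem_wordsOfContent.1 hcontent)] at hx
    exact ⟨⟨x, hx⟩, hxw⟩
  choose b hb using hlead
  simpa using finite_and_finrank_eq_card_of_unitriangular (lyndonCoeffs_injective (K := K) hn)
    (b := b) (fun w ↦ (hb w).1) fun w s h ↦ ((hb w).2 _ h).2

end Dimension

end FreeLieWitt

open FreeLieWitt in
theorem free_lie_witt_formula_general (K : Type*) [Field K] [CharZero K] {X : Type*} [Fintype X]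
    [DecidableEq X] (n : X → ℕ) (hn : n ≠ 0) :
    (∀ j : X, ∃! D : LieDerivation K (FreeLieAlgebra K X) (FreeLieAlgebra K X),
      ∀ i, D (FreeLieAlgebra.of K i) = if j = i then FreeLieAlgebra.of K i else 0) ∧
    (∀ D : X → LieDerivation K (FreeLieAlgebra K X) (FreeLieAlgebra K X),
      (∀ j i, D j (FreeLieAlgebra.of K i) = if j = i then FreeLieAlgebra.of K i else 0) →
      FiniteDimensional K
        (⨅ j, Module.End.eigenspace (D j).toLinearMap (n j : K) :
          Submodule K (FreeLieAlgebra K X)) ∧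
      ((∑ i, n i : ℕ) : ℤ) *
          (Module.finrank K
            (⨅ j, Module.End.eigenspace (D j).toLinearMap (n j : K) :
              Submodule K (FreeLieAlgebra K X)) : ℤ) =
        ∑ d ∈ (Finset.univ.gcd n).divisors,
          ArithmeticFunction.moebius d * (Nat.multinomial Finset.univ (fun i ↦ n i / d) : ℤ)) := by
  refine ⟨fun j ↦ ⟨letterDegree j, letterDegree_of j, fun D ↦ eq_letterDegree_iff.2⟩,
    fun D hD ↦ ?_⟩
  obtain rfl : D = letterDegree := funext fun j ↦ eq_letterDegree_iff.2 (hD j)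
  classical
  let _ : LinearOrder X := linearOrderOfSTO WellOrderingRel
  obtain rfl : ‹DecidableEq X› = LinearOrder.toDecidableEq := Subsingleton.elim _ _
  obtain ⟨hfinite, hfinrank⟩ := finite_and_finrank_multidegreeSpace (K := K) hn
  refine ⟨hfinite, ?_⟩
  rw [← sum_mul_card_lyndonWords_eq_sum_divisors hn, ← hfinrank]
  rfl

/-- **Multigraded Witt formula for free Lie algebras.** Let `L` be the free Lie algebra over
`ℚ` on `m` generators. There exist unique derivations `D j` with `D j (β i) = δ_{ji} β i`;
and for every nonzero tuple `n : Fin m → ℕ` with `N = ∑ n i` and `g = gcd n`, the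
simultaneous eigenspace `⋂ j {x | D j x = n j • x}` is finite dimensional, of dimension
`mult n` satisfying `N * mult n = ∑_{d ∣ g} μ(d) * (N/d)! / ∏ (n i / d)!`. -/
theorem free_lie_witt_formula (m : ℕ) (n : Fin m → ℕ) (hn : n ≠ 0) :
    (∀ j : Fin m,
      ∃! D : LieDerivation ℚ (FreeLieAlgebra ℚ (Fin m)) (FreeLieAlgebra ℚ (Fin m)),
        ∀ i, D (FreeLieAlgebra.of ℚ i) =
          if j = i then FreeLieAlgebra.of ℚ i else 0) ∧
    (∀ D : Fin m → LieDerivation ℚ (FreeLieAlgebra ℚ (Fin m)) (FreeLieAlgebra ℚ (Fin m)),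
      (∀ j i, D j (FreeLieAlgebra.of ℚ i) =
          if j = i then FreeLieAlgebra.of ℚ i else 0) →
      FiniteDimensional ℚ
        (⨅ j, Module.End.eigenspace (D j).toLinearMap (n j : ℚ) :
          Submodule ℚ (FreeLieAlgebra ℚ (Fin m))) ∧
      ((∑ i, n i : ℕ) : ℤ) *
          (Module.finrank ℚ
            (⨅ j, Module.End.eigenspace (D j).toLinearMap (n j : ℚ) :
              Submodule ℚ (FreeLieAlgebra ℚ (Fin m))) : ℤ) =
        ∑ d ∈ (Finset.univ.gcd n).divisors,
          ArithmeticFunction.moebius d *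
            (Nat.multinomial Finset.univ (fun i => n i / d) : ℤ)) :=
  free_lie_witt_formula_general ℚ n hn
end
end

section
/- Affine roots of E10 have multiplicity 8: let δ = (0,1,2,3,4,5,6,4,2,3) ∈ ℕ^{10} in the coordinates of A(E10) (the null root of the affine E9 subalgebra, satisfying δᵀ A(E10) δ = 0). Then for every integer k ≥ 1 the root space of kδ in g(A(E10)), namely the simultaneous eigenspace {x : [h_i,x] = (∑_j A(E10)_{ij} k δ_j) x for all i}, has dimension 8, i.e. mult(kδ) = 8. -/
noncomputable section

open CartanMatrix

/-- A generalized Cartan matrix: `A i i = 2`, off-diagonal entries are non-positive, and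
`A i j = 0 ↔ A j i = 0`. -/
def IsGCM {B : Type*} (A : Matrix B B ℤ) : Prop :=
  (∀ i, A i i = 2) ∧ (∀ i j, i ≠ j → A i j ≤ 0) ∧ (∀ i j, A i j = 0 ↔ A j i = 0)

/-- The images in the Kac–Moody algebra `Matrix.ToLieAlgebra ℚ A` of the generators of the
free Lie algebra. -/
def KMgen {B : Type*} [DecidableEq B] (A : Matrix B B ℤ) (x : Generators B) :
    Matrix.ToLieAlgebra ℚ A :=
  LieSubmodule.Quotient.mk (N := Relations.toIdeal ℚ A) (FreeLieAlgebra.of ℚ x)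

/-- The Cartan generator `h i`. -/
def gH {B : Type*} [DecidableEq B] (A : Matrix B B ℤ) (i : B) : Matrix.ToLieAlgebra ℚ A :=
  KMgen A (Generators.H i)

/-- The raising generator `e i`. -/
def gE {B : Type*} [DecidableEq B] (A : Matrix B B ℤ) (i : B) : Matrix.ToLieAlgebra ℚ A :=
  KMgen A (Generators.E i)

/-- The lowering generator `f i`. -/
def gF {B : Type*} [DecidableEq B] (A : Matrix B B ℤ) (i : B) : Matrix.ToLieAlgebra ℚ A :=
  KMgen A (Generators.F i)

/-- The root space of `g(A)` attached to `n : B → ℤ`: the simultaneous eigenspace of the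
adjoint action of the Cartan generators `h i`, with eigenvalues `∑ j, A i j * n j`. -/
def rootSpace {B : Type*} [Fintype B] [DecidableEq B] (A : Matrix B B ℤ) (n : B → ℤ) :
    Submodule ℚ (Matrix.ToLieAlgebra ℚ A) :=
  ⨅ i, Module.End.eigenspace
    (LieAlgebra.ad ℚ (Matrix.ToLieAlgebra ℚ A) (gH A i)) ((∑ j, A i j * n j : ℤ) : ℚ)

/-- The multiplicity of `n` in `g(A)`: the dimension of the root space. -/
def rootMult {B : Type*} [Fintype B] [DecidableEq B] (A : Matrix B B ℤ) (n : B → ℤ) : ℕ :=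
  Module.finrank ℚ (rootSpace A n)

/-- The Cartan matrix of `E10` (node 1 ↦ index `0` is the overextended node; indices `0`–`8`
form a chain and index `9` is attached to index `6`). -/
def E10M : Matrix (Fin 10) (Fin 10) ℤ := fun i j =>
  if i = j then 2
  else if (i.val + 1 = j.val ∧ j.val ≤ 8) ∨ (j.val + 1 = i.val ∧ i.val ≤ 8) ∨
          (i.val = 6 ∧ j.val = 9) ∨ (i.val = 9 ∧ j.val = 6) then -1
  else 0

/-! Write `δ` for the null root and fix `k ≥ 1`. For a symmetric nondegenerate Cartan matrix, the
weights `k δ - α i`, with `i` a node of the affine diagram, are real roots and therefore have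
multiplicity one; let `x i` be a root vector. The root space of `k δ` is spanned by the brackets
`⁅e i, x i⁆`. Normalising the `x i` along the tree so that `⁅f j, ⁅e i, x i⁆⁆ = A i j • x j` shows
that those with `i ≠ i₀` are linearly independent, because the finite Cartan matrix is
nonsingular. The one of the affine node `i₀` is redundant: the roots `α i₀` and `δ - α i₀` span a
system of type `A₁⁽¹⁾`, whose loop realisation gives `⁅e i₀, x i₀⁆ = ⁅y, w⁆` with `w` of weight
`δ - α i₀`, hence a combination of brackets of the other `e i`.

Nothing in the presentation says that `h i ≠ 0`. This is seen on a Verma module modulo the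
submodule generated by the Serre relations: that submodule contains no words of length less than
two, so `h i` does not annihilate the class of a suitable word of length one. -/

namespace KacMoody

open LieAlgebra LieModule Matrix

variable (K : Type*) {B L : Type*} [Field K] [LieRing L] [LieAlgebra K L]

/-- The relations among `e i`, `f i`, `h i` that present the Kac–Moody algebra of `A` before the
Serre relations are imposed. -/
structure ChevalleyRelations (A : Matrix B B ℤ) (e f h : B → L) : Prop where
  lie_h_h : ∀ i j, ⁅h i, h j⁆ = 0
  lie_e_f_same : ∀ i, ⁅e i, f i⁆ = h i
  lie_e_f_of_ne : ∀ i j, i ≠ j → ⁅e i, f j⁆ = 0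
  lie_h_e : ∀ i j, ⁅h i, e j⁆ = (A i j : K) • e j
  lie_h_f : ∀ i j, ⁅h i, f j⁆ = -((A i j : K) • f j)

/-- The Chevalley–Serre relations of `A`. -/
structure SerreRelations (A : Matrix B B ℤ) (e f h : B → L) : Prop
    extends ChevalleyRelations K A e f h where
  serre_e : ∀ i j, i ≠ j → (ad K L (e i) ^ (-A i j).toNat) ⁅e i, e j⁆ = 0
  serre_f : ∀ i j, i ≠ j → (ad K L (f i) ^ (-A i j).toNat) ⁅f i, f j⁆ = 0

/-- Elements `e i`, `f i`, `h i` that generate the Lie algebra `L` and satisfy the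
Chevalley–Serre relations of `A`. Nonvanishing of the `h i` excludes degenerate quotients and
makes each `(h i, e i, f i)` an `sl₂`-triple when `A i i = 2`. -/
structure ChevalleySystem (A : Matrix B B ℤ) (e f h : B → L) : Prop
    extends SerreRelations K A e f h where
  h_ne_zero : ∀ i, h i ≠ 0
  lieSpan_eq_top : LieSubalgebra.lieSpan K L (Set.range e ∪ Set.range f) = ⊤

/-- A Chevalley system for a symmetric nondegenerate matrix with diagonal entries `2`. -/
structure SymmetricChevalleySystem (A : Matrix B B ℤ) [Fintype B] (e f h : B → L) : Prop
    extends ChevalleySystem K A e f h where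
  diag : ∀ i, A i i = 2
  isSymm : A.IsSymm
  mulVec_injective : Function.Injective A.mulVec

variable {K} {A : Matrix B B ℤ} {e f h : B → L}

namespace ChevalleyRelations

variable (R : ChevalleyRelations K A e f h)
include R

lemma symm : ChevalleyRelations K A f e (-h) where
  lie_h_h i j := by simp [R.lie_h_h]
  lie_e_f_same i := by rw [← lie_skew, R.lie_e_f_same, Pi.neg_apply]
  lie_e_f_of_ne i j hij := by rw [← lie_skew, R.lie_e_f_of_ne j i hij.symm, neg_zero]
  lie_h_e i j := by rw [Pi.neg_apply, neg_lie, R.lie_h_f, neg_neg]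
  lie_h_f i j := by rw [Pi.neg_apply, neg_lie, R.lie_h_e]

lemma isSl2Triple {i : B} (hi : A i i = 2) (h0 : h i ≠ 0) : IsSl2Triple (h i) (e i) (f i) where
  h_ne_zero := h0
  lie_e_f := R.lie_e_f_same i
  lie_h_e_nsmul := by rw [R.lie_h_e, hi, Int.cast_ofNat, ofNat_smul_eq_nsmul]
  lie_h_f_nsmul := by rw [R.lie_h_f, hi, Int.cast_ofNat, ofNat_smul_eq_nsmul]

lemma lie_f_lie_e_of_ne {i j : B} (hij : i ≠ j) (x : L) :
    ⁅f j, ⁅e i, x⁆⁆ = ⁅e i, ⁅f j, x⁆⁆ := by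
  rw [leibniz_lie, ← lie_skew (f j) (e i), R.lie_e_f_of_ne i j hij, neg_zero, zero_lie, zero_add]

end ChevalleyRelations

lemma ChevalleySystem.symm (S : ChevalleySystem K A e f h) : ChevalleySystem K A f e (-h) where
  __ := S.toChevalleyRelations.symm
  serre_e := S.serre_f
  serre_f := S.serre_e
  h_ne_zero i := neg_ne_zero.2 (S.h_ne_zero i)
  lieSpan_eq_top := by rw [Set.union_comm, S.lieSpan_eq_top]

lemma SymmetricChevalleySystem.symm [Fintype B] (S : SymmetricChevalleySystem K A e f h) :
    SymmetricChevalleySystem K A f e (-h) where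
  __ := S.toChevalleySystem.symm
  diag := S.diag
  isSymm := S.isSymm
  mulVec_injective := S.mulVec_injective

section Generation

variable (S : ChevalleySystem K A e f h)
include S

namespace ChevalleySystem

lemma eq_top_of_mem {N : LieSubalgebra K L} (he : ∀ i, e i ∈ N) (hf : ∀ i, f i ∈ N) : N = ⊤ := by
  rw [← top_le_iff, ← S.lieSpan_eq_top, LieSubalgebra.lieSpan_le]
  rintro _ (⟨i, rfl⟩ | ⟨i, rfl⟩)
  exacts [he i, hf i]

lemma eq_top_of_lie_mem {U : Submodule K L} (he : ∀ i, e i ∈ U) (hf : ∀ i, f i ∈ U)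
    (hle : ∀ i, ∀ x ∈ U, ⁅e i, x⁆ ∈ U) (hlf : ∀ i, ∀ x ∈ U, ⁅f i, x⁆ ∈ U) : U = ⊤ := by
  let stabilizer : LieSubalgebra K L :=
    { carrier := {x | ∀ y ∈ U, ⁅x, y⁆ ∈ U}
      add_mem' := fun hx hx' y hy => by rw [add_lie]; exact U.add_mem (hx y hy) (hx' y hy)
      zero_mem' := fun y _ => by rw [zero_lie]; exact U.zero_mem
      smul_mem' := fun c x hx y hy => by rw [smul_lie]; exact U.smul_mem c (hx y hy)
      lie_mem' := fun hx hx' y hy => by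
        rw [lie_lie]; exact U.sub_mem (hx _ (hx' y hy)) (hx' _ (hx y hy)) }
  have hU (x y : L) (hy : y ∈ U) : ⁅x, y⁆ ∈ U :=
    (S.eq_top_of_mem (N := stabilizer) hle hlf ▸ LieSubalgebra.mem_top x : x ∈ stabilizer) y hy
  let N : LieSubalgebra K L := { U with lie_mem' := fun {x y} _ hy => hU x y hy }
  exact congrArg LieSubalgebra.toSubmodule (S.eq_top_of_mem (N := N) he hf)

lemma exists_pow_toEnd_e_eq_zero (i : B) (x : L) : ∃ k : ℕ, (toEnd K L L (e i) ^ k) x = 0 := by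
  have htop : LieSubalgebra.engel K (e i) = ⊤ := by
    refine S.eq_top_of_mem (fun j => ?_) (fun j => ?_) <;> rw [LieSubalgebra.mem_engel_iff]
    · rcases eq_or_ne i j with rfl | hij
      · exact ⟨1, by simp⟩
      · refine ⟨(-A i j).toNat + 1, ?_⟩
        rw [pow_succ, Module.End.mul_apply]
        exact S.serre_e i j hij
    · refine ⟨3, ?_⟩
      rcases eq_or_ne i j with rfl | hij
      · simp [pow_succ', S.lie_e_f_same, ← lie_skew (e i) (h i), S.lie_h_e]
      · simp [pow_succ', S.lie_e_f_of_ne i j hij]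
  exact (LieSubalgebra.mem_engel_iff K (e i) x).1 (htop ▸ LieSubalgebra.mem_top x)

end ChevalleySystem

end Generation

section WeightSpace

lemma lie_lie_eq_smul {g x y : L} {a b : K} (hx : ⁅g, x⁆ = a • x) (hy : ⁅g, y⁆ = b • y) :
    ⁅g, ⁅x, y⁆⁆ = (a + b) • ⁅x, y⁆ := by
  rw [leibniz_lie, hx, hy, smul_lie, lie_smul, add_smul]

variable [Fintype B]

variable (K) in
/-- The space of vectors of weight `n` in the root lattice `B → ℤ`, where `h i` acts by
`(A *ᵥ n) i`. -/
def weightSpace (A : Matrix B B ℤ) (h : B → L) (n : B → ℤ) : Submodule K L :=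
  ⨅ i, (ad K L (h i)).eigenspace (((A *ᵥ n) i : ℤ) : K)

lemma mem_weightSpace {n : B → ℤ} {x : L} :
    x ∈ weightSpace K A h n ↔ ∀ i, ⁅h i, x⁆ = ((A *ᵥ n) i : K) • x := by
  simp [weightSpace]

lemma lie_mem_weightSpace {m n p : B → ℤ} {x y : L} (hx : x ∈ weightSpace K A h m)
    (hy : y ∈ weightSpace K A h n) (hp : m + n = p) : ⁅x, y⁆ ∈ weightSpace K A h p := by
  subst hp
  rw [mem_weightSpace] at *
  intro i
  rw [mulVec_add, Pi.add_apply, Int.cast_add, lie_lie_eq_smul (hx i) (hy i)]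

lemma pow_toEnd_mem_weightSpace {m n p : B → ℤ} {x y : L} (hx : x ∈ weightSpace K A h m)
    (hy : y ∈ weightSpace K A h n) (k : ℕ) (hp : k • m + n = p) :
    (toEnd K L L x ^ k) y ∈ weightSpace K A h p := by
  induction k generalizing p with
  | zero => simpa [← hp] using hy
  | succ k ih =>
    rw [pow_succ', Module.End.mul_apply]
    exact lie_mem_weightSpace hx (ih rfl) (by rw [← hp, succ_nsmul]; abel)

lemma weightSpace_neg_h (n : B → ℤ) : weightSpace K A (-h) n = weightSpace K A h (-n) := by
  ext x
  simp only [mem_weightSpace, Pi.neg_apply, neg_lie, mulVec_neg, Int.cast_neg, neg_smul,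
    neg_eq_iff_eq_neg]

lemma ChevalleyRelations.h_mem_weightSpace (R : ChevalleyRelations K A e f h) (i : B) :
    h i ∈ weightSpace K A h 0 :=
  mem_weightSpace.2 fun j => by simp [R.lie_h_h]

lemma iSupIndep_weightSpace [CharZero K] (hh : ∀ i j, ⁅h i, h j⁆ = 0)
    (hA : Function.Injective A.mulVec) : iSupIndep (weightSpace K A h) := by
  have hcomm (i j : B) : Commute (ad K L (h j)) (ad K L (h i)) := by
    ext x
    simp [leibniz_lie (h j) (h i), hh]
  have hmax := Module.End.independent_iInf_maxGenEigenspace_of_forall_mapsTo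
    (fun i => ad K L (h i)) fun i j φ => Module.End.mapsTo_maxGenEigenspace_of_comm (hcomm i j) φ
  have hinj : Function.Injective fun (n : B → ℤ) i => ((A *ᵥ n) i : K) := fun n m hnm =>
    hA (funext fun i => Int.cast_injective (congrFun hnm i))
  exact (hmax.comp hinj).mono fun n => iInf_mono fun i =>
    Module.End.genEigenspace_le_maximal _ _ 1

end WeightSpace

section Triangular

variable [DecidableEq B]

/-- The simple root `α i` in the root lattice `B → ℤ`. -/
abbrev simpleRoot (i : B) : B → ℤ := Pi.single i 1

local notation "α" => simpleRoot

namespace ChevalleyRelations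

variable [Fintype B] (R : ChevalleyRelations K A e f h)
include R

lemma e_mem_weightSpace (i : B) : e i ∈ weightSpace K A h (α i) :=
  mem_weightSpace.2 fun j => by rw [R.lie_h_e, mulVec_single_one, col_apply]

lemma f_mem_weightSpace (i : B) : f i ∈ weightSpace K A h (-α i) := by
  rw [← weightSpace_neg_h]
  exact R.symm.e_mem_weightSpace i

end ChevalleyRelations

/-- `IsMonomial e n x` says that `x` is an iterated bracket `⁅e i₁, ⁅e i₂, … , e iₗ⁆⁆` and
`n = α i₁ + ⋯ + α iₗ` is its degree. -/
inductive IsMonomial (e : B → L) : (B → ℤ) → L → Prop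
  | simple (i : B) : IsMonomial e (α i) (e i)
  | lie (i : B) {n : B → ℤ} {x : L} : IsMonomial e n x → IsMonomial e (α i + n) ⁅e i, x⁆

namespace IsMonomial

variable {n : B → ℤ} {x : L}

lemma nonneg (hx : IsMonomial e n x) : 0 ≤ n := by
  induction hx with
  | simple i => exact Pi.single_nonneg.2 zero_le_one
  | lie i _ ih => exact add_nonneg (Pi.single_nonneg.2 zero_le_one) ih

lemma exists_pow_ad (hx : IsMonomial e n x) (i : B) (k : ℕ) :
    ∃ m, IsMonomial e m ((ad K L (e i) ^ k) x) := by
  induction k with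
  | zero => exact ⟨n, hx⟩
  | succ k ih =>
    obtain ⟨m, hm⟩ := ih
    exact ⟨_, by rw [pow_succ']; exact hm.lie i⟩

lemma eq_or_eq_zero {i : B} (hx : IsMonomial e n x) (hn : ∀ k ≠ i, n k = 0) :
    (n = α i ∧ x = e i) ∨ x = 0 := by
  induction hx with
  | simple j =>
    obtain rfl : j = i := by
      by_contra hji
      simpa using hn j hji
    exact .inl ⟨rfl, rfl⟩
  | @lie j m y hy ih =>
    have hj : j = i := by
      by_contra hji
      have h1 := hn j hji
      have h2 := hy.nonneg j
      simp only [Pi.add_apply, Pi.single_eq_same, Pi.zero_apply] at h1 h2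
      omega
    subst hj
    refine .inr ?_
    rcases ih fun k hk => by simpa [hk] using hn k hk with ⟨-, rfl⟩ | rfl
    · exact lie_self _
    · exact lie_zero _

end IsMonomial

lemma ChevalleyRelations.exists_lie_h_eq_smul (R : ChevalleyRelations K A e f h) {n : B → ℤ} {x : L}
    (hx : IsMonomial e n x) (j : B) : ∃ c : K, ⁅h j, x⁆ = c • x := by
  induction hx with
  | simple i => exact ⟨_, R.lie_h_e j i⟩
  | lie i _ ih =>
    obtain ⟨c, hc⟩ := ih
    exact ⟨_, lie_lie_eq_smul (R.lie_h_e j i) hc⟩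

lemma lie_mem_of_mem_span {s : Set L} {U : Submodule K L} {g x : L}
    (hs : ∀ y ∈ s, ⁅g, y⁆ ∈ U) (hx : x ∈ Submodule.span K s) : ⁅g, x⁆ ∈ U :=
  (Submodule.span_le.2 hs : _ ≤ U.comap (ad K L g : L →ₗ[K] L)) hx

/-- The span of the Cartan generators and the monomials in the `e i`. -/
def borel (K : Type*) [Field K] [LieAlgebra K L] (e h : B → L) : Submodule K L :=
  Submodule.span K (Set.range h ∪ {x | ∃ n, IsMonomial e n x})

lemma IsMonomial.mem_borel {n : B → ℤ} {x : L} (hx : IsMonomial e n x) : x ∈ borel K e h :=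
  Submodule.subset_span (.inr ⟨n, hx⟩)

lemma mem_borel (i : B) : h i ∈ borel K e h := Submodule.subset_span (.inl ⟨i, rfl⟩)

lemma borel_neg : borel K e (-h) = borel K e h := by
  have hle (h : B → L) : borel K e (-h) ≤ borel K e h := by
    refine Submodule.span_le.2 ?_
    rintro _ (⟨i, rfl⟩ | ⟨n, hx⟩)
    · exact Submodule.neg_mem _ (mem_borel i)
    · exact hx.mem_borel
  exact (hle h).antisymm (by simpa using hle (-h))

namespace ChevalleySystem

variable (S : ChevalleySystem K A e f h)
include S

lemma mem_weightSpace_of_isMonomial [Fintype B] {n : B → ℤ} {x : L} (hx : IsMonomial e n x) :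
    x ∈ weightSpace K A h n := by
  induction hx with
  | simple i => exact S.e_mem_weightSpace i
  | lie i _ ih => exact lie_mem_weightSpace (S.e_mem_weightSpace i) ih rfl

lemma mem_weightSpace_neg_of_isMonomial [Fintype B] {n : B → ℤ} {x : L}
    (hx : IsMonomial f n x) : x ∈ weightSpace K A h (-n) := by
  rw [← weightSpace_neg_h]
  exact S.symm.mem_weightSpace_of_isMonomial hx

lemma lie_e_mem_borel (i : B) {x : L} (hx : x ∈ borel K e h) : ⁅e i, x⁆ ∈ borel K e h := by
  refine lie_mem_of_mem_span ?_ hx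
  rintro _ (⟨j, rfl⟩ | ⟨n, hx⟩)
  · rw [← lie_skew, S.lie_h_e, ← neg_smul]
    exact Submodule.smul_mem _ _ (IsMonomial.simple i).mem_borel
  · exact (hx.lie i).mem_borel

lemma lie_f_mem_borel (j : B) {n : B → ℤ} {x : L} (hx : IsMonomial e n x) :
    ⁅f j, x⁆ ∈ borel K e h := by
  induction hx with
  | simple i =>
    rw [← lie_skew]
    by_cases hij : i = j
    · rw [hij, S.lie_e_f_same]
      exact Submodule.neg_mem _ (mem_borel j)
    · rw [S.lie_e_f_of_ne i j hij, neg_zero]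
      exact Submodule.zero_mem _
  | @lie i m y hy ih =>
    rw [leibniz_lie, ← lie_skew (f j)]
    refine Submodule.add_mem _ ?_ (S.lie_e_mem_borel i ih)
    by_cases hij : i = j
    · obtain ⟨c, hc⟩ := S.exists_lie_h_eq_smul hy j
      rw [hij, S.lie_e_f_same, neg_lie, hc, ← neg_smul]
      exact Submodule.smul_mem _ _ hy.mem_borel
    · rw [S.lie_e_f_of_ne i j hij, neg_zero, zero_lie]
      exact Submodule.zero_mem _

/-- The triangular decomposition. -/
lemma borel_sup_borel_eq_top : borel K e h ⊔ borel K f h = ⊤ := by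
  have hf {i : B} {x : L} (hx : x ∈ borel K f h) : ⁅f i, x⁆ ∈ borel K f h := by
    rw [← borel_neg] at hx ⊢
    exact S.symm.lie_e_mem_borel i hx
  have hef {i : B} {x : L} (hx : x ∈ borel K e h) : ⁅f i, x⁆ ∈ borel K e h ⊔ borel K f h := by
    refine lie_mem_of_mem_span ?_ hx
    rintro _ (⟨j, rfl⟩ | ⟨n, hx⟩)
    · exact Submodule.mem_sup_right (hf (mem_borel j))
    · exact Submodule.mem_sup_left (S.lie_f_mem_borel i hx)
  have hfe {i : B} {x : L} (hx : x ∈ borel K f h) : ⁅e i, x⁆ ∈ borel K e h ⊔ borel K f h := by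
    refine lie_mem_of_mem_span ?_ hx
    rintro _ (⟨j, rfl⟩ | ⟨n, hx⟩)
    · exact Submodule.mem_sup_left (S.lie_e_mem_borel i (mem_borel j))
    · exact Submodule.mem_sup_right (borel_neg (K := K) (e := f) ▸ S.symm.lie_f_mem_borel i hx)
  refine S.eq_top_of_lie_mem (fun i => Submodule.mem_sup_left (IsMonomial.simple i).mem_borel)
    (fun i => Submodule.mem_sup_right (IsMonomial.simple i).mem_borel) ?_ ?_
  all_goals
    intro i x hx
    obtain ⟨y, hy, z, hz, rfl⟩ := Submodule.mem_sup.1 hx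
    rw [lie_add]
  · exact Submodule.add_mem _ (Submodule.mem_sup_left (S.lie_e_mem_borel i hy)) (hfe hz)
  · exact Submodule.add_mem _ (hef hy) (Submodule.mem_sup_right (hf hz))

variable [Fintype B] [CharZero K]

lemma weightSpace_le (hA : Function.Injective A.mulVec) {n : B → ℤ} {V : Submodule K L}
    (hV₀ : n = 0 → ∀ i, h i ∈ V) (hV₁ : ∀ x, IsMonomial e n x → x ∈ V)
    (hV₂ : ∀ x, IsMonomial f (-n) x → x ∈ V) : weightSpace K A h n ≤ V := by
  have hmem {m : B → ℤ} {x : L} (hx : x ∈ weightSpace K A h m) (hxV : m = n → x ∈ V) :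
      x ∈ (V ⊓ weightSpace K A h n) ⊔ ⨆ m, ⨆ (_ : m ≠ n), weightSpace K A h m := by
    by_cases hm : m = n
    · exact Submodule.mem_sup_left ⟨hxV hm, hm ▸ hx⟩
    · exact Submodule.mem_sup_right (Submodule.mem_iSup_of_mem m (Submodule.mem_iSup_of_mem hm hx))
  have htop : ⊤ ≤ (V ⊓ weightSpace K A h n) ⊔ ⨆ m, ⨆ (_ : m ≠ n), weightSpace K A h m := by
    rw [← S.borel_sup_borel_eq_top, sup_le_iff]
    constructor <;> refine Submodule.span_le.2 ?_ <;> rintro _ (⟨i, rfl⟩ | ⟨m, hx⟩)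
    · exact hmem (S.h_mem_weightSpace i) fun h0 => hV₀ h0.symm i
    · exact hmem (S.mem_weightSpace_of_isMonomial hx) fun hm => hV₁ _ (hm ▸ hx)
    · exact hmem (S.h_mem_weightSpace i) fun h0 => hV₀ h0.symm i
    · exact hmem (S.mem_weightSpace_neg_of_isMonomial hx) fun hm =>
        hV₂ _ (by rwa [← hm, neg_neg])
  intro x hx
  obtain ⟨y, hy, z, hz, rfl⟩ := Submodule.mem_sup.1 (htop (Submodule.mem_top (x := x)))
  have hzn : z ∈ weightSpace K A h n := (Submodule.add_mem_iff_right _ hy.2).1 hx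
  have hz0 : z = 0 := by
    simpa using (iSupIndep_weightSpace S.lie_h_h hA n).le_bot ⟨hzn, hz⟩
  rw [hz0, add_zero]
  exact hy.1

lemma weightSpace_le_of_pos (hA : Function.Injective A.mulVec) {n : B → ℤ} {i : B} (hi : 0 < n i)
    {V : Submodule K L} (hV : ∀ x, IsMonomial e n x → x ∈ V) : weightSpace K A h n ≤ V := by
  refine S.weightSpace_le hA ?_ hV fun x hx => ?_
  · rintro rfl
    exact absurd hi (lt_irrefl 0)
  · have := hx.nonneg i
    simp only [Pi.zero_apply, Pi.neg_apply] at this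
    omega

end ChevalleySystem

end Triangular

section Form

variable [Fintype B] [DecidableEq B]

local notation "α" => simpleRoot
local notation "⟪" m "," n "⟫" => toBilin' A m n

lemma form_simpleRoot_left (i : B) (n : B → ℤ) : ⟪α i,n⟫ = (A *ᵥ n) i := by
  rw [toBilin'_apply', single_one_dotProduct]

lemma form_simpleRoot_simpleRoot (i j : B) : ⟪α i,α j⟫ = A i j := toBilin'_single A i j

lemma lie_h_eq_form_smul {n : B → ℤ} {x : L} (hx : x ∈ weightSpace K A h n) (i : B) :
    ⁅h i, x⁆ = (⟪α i,n⟫ : K) • x := by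
  rw [mem_weightSpace.1 hx, form_simpleRoot_left]

lemma exists_form_simpleRoot_pos {n : B → ℤ} (hn : 0 ≤ n) (hpos : 0 < ⟪n,n⟫) :
    ∃ i, 0 < n i ∧ 0 < ⟪α i,n⟫ := by
  rw [toBilin'_apply', dotProduct] at hpos
  obtain ⟨i, -, hi⟩ := Finset.exists_lt_of_sum_lt (s := Finset.univ) (f := fun _ : B => (0 : ℤ))
    (by simpa using hpos)
  have hni : 0 < n i := (hn i).lt_of_ne' (left_ne_zero_of_mul hi.ne')
  exact ⟨i, hni, by rw [form_simpleRoot_left]; exact (pos_iff_pos_of_mul_pos hi).1 hni⟩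

variable (A) in
/-- The reflection of the root lattice in the simple root `α i`. -/
def simpleReflection (i : B) (n : B → ℤ) : B → ℤ := n - ⟪α i,n⟫ • α i

lemma sum_simpleReflection (i : B) (n : B → ℤ) :
    ∑ k, simpleReflection A i n k = ∑ k, n k - ⟪α i,n⟫ := by
  simp [simpleReflection, ← Finset.mul_sum]

end Form

namespace SymmetricChevalleySystem

variable [Fintype B] (S : SymmetricChevalleySystem K A e f h)
include S

lemma isSl2Triple (i : B) : IsSl2Triple (h i) (e i) (f i) :=
  S.toChevalleyRelations.isSl2Triple (S.diag i) (S.h_ne_zero i)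

variable [DecidableEq B] {m n : B → ℤ} {i : B}

local notation "α" => simpleRoot
local notation "⟪" m "," n "⟫" => toBilin' A m n

lemma form_comm (m n : B → ℤ) : ⟪m,n⟫ = ⟪n,m⟫ :=
  (isSymm_toBilin'_iff_isSymm.2 S.isSymm).eq m n

lemma form_simpleRoot_self (i : B) : ⟪α i,α i⟫ = 2 := by
  rw [form_simpleRoot_simpleRoot, S.diag]

lemma form_add_self (m n : B → ℤ) : ⟪m + n,m + n⟫ = ⟪m,m⟫ + 2 * ⟪m,n⟫ + ⟪n,n⟫ := by
  rw [map_add, map_add, LinearMap.add_apply, LinearMap.add_apply, S.form_comm n m]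
  ring

lemma form_sub_self (m n : B → ℤ) : ⟪m - n,m - n⟫ = ⟪m,m⟫ - 2 * ⟪m,n⟫ + ⟪n,n⟫ := by
  rw [map_sub, map_sub, LinearMap.sub_apply, LinearMap.sub_apply, S.form_comm n m]
  ring

lemma form_simpleReflection_self (i : B) (n : B → ℤ) :
    ⟪simpleReflection A i n,simpleReflection A i n⟫ = ⟪n,n⟫ := by
  simp only [simpleReflection, map_sub, map_smul, LinearMap.sub_apply, LinearMap.smul_apply,
    smul_eq_mul, S.form_simpleRoot_self, S.form_comm n]
  ring

variable [CharZero K]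

omit [DecidableEq B] in
lemma nonneg_or_nonpos (hn : weightSpace K A h n ≠ ⊥) : 0 ≤ n ∨ n ≤ 0 := by
  classical
  by_contra! hc
  simp only [Pi.le_def, not_forall, not_le] at hc
  obtain ⟨⟨i, hi⟩, j, hj⟩ := hc
  refine hn (le_bot_iff.1 (S.weightSpace_le_of_pos S.mulVec_injective hj fun x hx => ?_))
  exact absurd (hx.nonneg i) hi.not_ge

lemma eq_simpleRoot_of_support (hi : 0 < n i) (hk : ∀ k ≠ i, n k = 0)
    (hn : weightSpace K A h n ≠ ⊥) : n = α i := by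
  by_contra hni
  refine hn (le_bot_iff.1 (S.weightSpace_le_of_pos S.mulVec_injective hi fun x hx => ?_))
  exact (hx.eq_or_eq_zero hk).resolve_left fun h1 => hni h1.1

lemma weightSpace_simpleRoot_le (i : B) : weightSpace K A h (α i) ≤ K ∙ e i := by
  have hi : 0 < (α i : B → ℤ) i := by simp
  refine S.weightSpace_le_of_pos S.mulVec_injective hi fun x hx => ?_
  rcases hx.eq_or_eq_zero (i := i) fun k hk => by simp [hk] with ⟨-, rfl⟩ | rfl
  exacts [Submodule.mem_span_singleton_self _, Submodule.zero_mem _]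

lemma weightSpace_simpleReflection_ne_bot (hin : 0 ≤ ⟪α i,n⟫) (hn : weightSpace K A h n ≠ ⊥) :
    weightSpace K A h (simpleReflection A i n) ≠ ⊥ := by
  obtain ⟨v, hv, hv0⟩ := Submodule.exists_mem_ne_zero_of_ne_bot hn
  obtain ⟨p, hp⟩ := Int.eq_ofNat_of_zero_le hin
  obtain ⟨j, hj, hj1⟩ := Nat.exists_not_and_succ_of_not_zero_of_exists
    (p := fun k => (toEnd K L L (e i) ^ k) v = 0) hv0 (S.exists_pow_toEnd_e_eq_zero i v)
  have hw := pow_toEnd_mem_weightSpace (S.e_mem_weightSpace i) hv j rfl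
  set w := (toEnd K L L (e i) ^ j) v
  have hprim : (S.isSl2Triple i).HasPrimitiveVectorWith w ((p + 2 * j : ℕ) : K) :=
    { ne_zero := hj
      lie_h := by
        rw [lie_h_eq_form_smul hw, map_add, map_nsmul, S.form_simpleRoot_self, hp]
        congr 1
        push_cast [nsmul_eq_mul]
        ring
      lie_e := by rwa [pow_succ', Module.End.mul_apply] at hj1 }
  have hne := hprim.pow_toEnd_f_ne_zero_of_eq_nat rfl (i := p + j) (by omega)
  refine (Submodule.ne_bot_iff _).2 ⟨_, ?_, hne⟩
  refine pow_toEnd_mem_weightSpace (S.f_mem_weightSpace i) hw _ ?_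
  rw [simpleReflection, hp]
  module

/-- Reflecting a positive root of positive norm in a suitable simple root lowers its height, until
a simple root is reached. -/
lemma positive_root_induction {P : (B → ℤ) → Prop} (simple : ∀ i, P (α i))
    (reflect : ∀ i n, 0 < ⟪α i,n⟫ → P (simpleReflection A i n) → P n)
    (hn : 0 ≤ n) (hpos : 0 < ⟪n,n⟫) (hbot : weightSpace K A h n ≠ ⊥) : P n := by
  obtain ⟨N, hN⟩ : ∃ N : ℕ, ∑ k, n k ≤ N := ⟨_, Int.self_le_toNat _⟩
  induction N generalizing n with
  | zero =>
    have h0 := (Fintype.sum_eq_zero_iff_of_nonneg hn).1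
      (hN.antisymm (Finset.sum_nonneg fun i _ => hn i))
    simp [h0] at hpos
  | succ N ih =>
    obtain ⟨i, hni, hi⟩ := exists_form_simpleRoot_pos hn hpos
    by_cases hsupp : ∀ k ≠ i, n k = 0
    · exact S.eq_simpleRoot_of_support hni hsupp hbot ▸ simple i
    push Not at hsupp
    obtain ⟨k, hki, hk⟩ := hsupp
    have hrefl := S.weightSpace_simpleReflection_ne_bot hi.le hbot
    have hnonneg : 0 ≤ simpleReflection A i n := by
      refine (S.nonneg_or_nonpos hrefl).resolve_right fun hle => ?_
      have := hle k
      simp only [simpleReflection, Pi.sub_apply, Pi.smul_apply, Pi.single_eq_of_ne hki, smul_zero,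
        sub_zero, Pi.zero_apply] at this
      exact hk (this.antisymm (hn k))
    refine reflect i n hi (ih hnonneg ?_ hrefl ?_)
    · rwa [S.form_simpleReflection_self]
    · rw [sum_simpleReflection]
      push_cast at hN
      linarith

lemma form_self_le_two (hbot : weightSpace K A h n ≠ ⊥) : ⟪n,n⟫ ≤ 2 := by
  have hpos {e f h : B → L} (S : SymmetricChevalleySystem K A e f h) {n : B → ℤ} (hn : 0 ≤ n)
      (hbot : weightSpace K A h n ≠ ⊥) : ⟪n,n⟫ ≤ 2 := by
    rcases le_or_gt ⟪n,n⟫ 0 with h0 | h0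
    · exact h0.trans zero_le_two
    refine S.positive_root_induction (P := fun n => ⟪n,n⟫ ≤ 2)
      (fun i => (S.form_simpleRoot_self i).le) (fun i n _ ih => ?_) hn h0 hbot
    rwa [S.form_simpleReflection_self] at ih
  rcases S.nonneg_or_nonpos hbot with hn | hn
  · exact hpos S hn hbot
  · have := hpos S.symm (neg_nonneg.2 hn) (by rwa [weightSpace_neg_h, neg_neg])
    simpa only [map_neg, LinearMap.neg_apply, neg_neg] using this

lemma eq_zero_of_two_lt {x : L} (hx : x ∈ weightSpace K A h n) (hn : 2 < ⟪n,n⟫) : x = 0 := by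
  by_contra hx0
  exact hn.not_ge (S.form_self_le_two ((Submodule.ne_bot_iff _).2 ⟨x, hx, hx0⟩))

lemma pow_toEnd_f_ne_zero (hn : ⟪n,n⟫ = 2) (hi : 0 < ⟪α i,n⟫) {x : L}
    (hx : x ∈ weightSpace K A h n) (hx0 : x ≠ 0) :
    (toEnd K L L (f i) ^ ⟪α i,n⟫.toNat) x ≠ 0 := by
  have hcast : (⟪α i,n⟫ : K) = (⟪α i,n⟫.toNat : K) := by
    rw [← Int.cast_natCast, Int.toNat_of_nonneg hi.le]
  have hprim : (S.isSl2Triple i).HasPrimitiveVectorWith x (⟪α i,n⟫ : K) :=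
    { ne_zero := hx0
      lie_h := lie_h_eq_form_smul hx i
      lie_e := S.eq_zero_of_two_lt (lie_mem_weightSpace (S.e_mem_weightSpace i) hx rfl) (by
        rw [S.form_add_self, S.form_simpleRoot_self]
        linarith) }
  exact hprim.pow_toEnd_f_ne_zero_of_eq_nat hcast le_rfl

lemma weightSpace_le_span_singleton (hn : 0 ≤ n) (hn2 : ⟪n,n⟫ = 2) {x : L}
    (hx : x ∈ weightSpace K A h n) (hx0 : x ≠ 0) : weightSpace K A h n ≤ K ∙ x := by
  refine S.positive_root_induction (P := fun n => ⟪n,n⟫ = 2 → ∀ x ∈ weightSpace K A h n, x ≠ 0 →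
    weightSpace K A h n ≤ K ∙ x) (fun i _ x hx hx0 => ?_) (fun i n hi ih hn2 x hx hx0 y hy => ?_)
    hn (hn2 ▸ zero_lt_two) ((Submodule.ne_bot_iff _).2 ⟨x, hx, hx0⟩) hn2 x hx hx0
  · obtain ⟨c, rfl⟩ := Submodule.mem_span_singleton.1 (S.weightSpace_simpleRoot_le i hx)
    rw [Submodule.span_singleton_smul_eq (left_ne_zero_of_smul hx0).isUnit]
    exact S.weightSpace_simpleRoot_le i
  · have hmem {z : L} (hz : z ∈ weightSpace K A h n) :
        (toEnd K L L (f i) ^ ⟪α i,n⟫.toNat) z ∈ weightSpace K A h (simpleReflection A i n) := by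
      refine pow_toEnd_mem_weightSpace (S.f_mem_weightSpace i) hz _ ?_
      rw [simpleReflection, ← natCast_zsmul, Int.toNat_of_nonneg hi.le]
      module
    obtain ⟨c, hc⟩ := Submodule.mem_span_singleton.1 (ih (by rwa [S.form_simpleReflection_self])
      _ (hmem hx) (S.pow_toEnd_f_ne_zero hn2 hi hx hx0) (hmem hy))
    refine Submodule.mem_span_singleton.2 ⟨c, ?_⟩
    by_contra hne
    refine S.pow_toEnd_f_ne_zero hn2 hi (Submodule.sub_mem _ hy (Submodule.smul_mem _ c hx))
      (sub_ne_zero.2 (Ne.symm hne)) ?_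
    rw [map_sub, map_smul, hc, sub_self]

end SymmetricChevalleySystem

section Loop

variable (K) in
/-- The relations satisfied by `E a = x ⊗ tᵃ` and `W b = y ⊗ tᵇ⁺¹` in the loop algebra of `sl₂`, for
the standard basis `x`, `y`, `⁅x, y⁆` of `sl₂`. -/
structure IsLoopPair (E W : ℕ → L) : Prop where
  lie_E_E : ∀ a b, ⁅E a, E b⁆ = 0
  lie_W_W : ∀ a b, ⁅W a, W b⁆ = 0
  lie_lie_E : ∀ a, ⁅⁅E 0, W 0⁆, E a⁆ = (2 : K) • E (a + 1)
  lie_lie_W : ∀ b, ⁅⁅E 0, W 0⁆, W b⁆ = (-2 : K) • W (b + 1)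

namespace IsLoopPair

variable {E W : ℕ → L} (P : IsLoopPair K E W) {k : ℕ}
include P

lemma lie_lie_E_right_comm (a b c : ℕ) : ⁅⁅E a, W b⁆, E c⁆ = ⁅⁅E c, W b⁆, E a⁆ := by
  rw [lie_lie, P.lie_E_E, lie_zero, sub_zero, ← lie_skew (W b) (E c), lie_neg, lie_skew]

lemma lie_lie_W_right_comm (a b c : ℕ) : ⁅⁅E a, W b⁆, W c⁆ = ⁅⁅E a, W c⁆, W b⁆ := by
  rw [lie_lie, P.lie_W_W, lie_zero, zero_sub, lie_skew]

lemma lie_lie_E_of_lt (hk : ∀ a b c d, a + b = c + d → a + b < k → ⁅E a, W b⁆ = ⁅E c, W d⁆)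
    {a c : ℕ} (hac : a + c < k) : ⁅⁅E 0, W c⁆, E a⁆ = (2 : K) • E (a + c + 1) := by
  rw [P.lie_lie_E_right_comm, hk a c (a + c) 0 rfl hac, P.lie_lie_E_right_comm, P.lie_lie_E]

lemma lie_lie_W_of_lt (hk : ∀ a b c d, a + b = c + d → a + b < k → ⁅E a, W b⁆ = ⁅E c, W d⁆)
    {b c : ℕ} (hbc : b + c < k) : ⁅⁅E 0, W c⁆, W b⁆ = (-2 : K) • W (b + c + 1) := by
  rw [hk 0 c c 0 (by omega) (by omega), P.lie_lie_W_right_comm,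
    hk c b 0 (b + c) (by omega) (by omega), P.lie_lie_W_right_comm, P.lie_lie_W]

lemma lie_lie_lie_of_lt (hk : ∀ a b c d, a + b = c + d → a + b < k → ⁅E a, W b⁆ = ⁅E c, W d⁆)
    {a b c : ℕ} (habc : a + b + c < k) : ⁅⁅E 0, W c⁆, ⁅E 0, W (a + b)⁆⁆ =
      (2 : K) • (⁅E (a + c + 1), W b⁆ - ⁅E a, W (b + c + 1)⁆) := by
  rw [hk 0 (a + b) a b (by omega) (by omega), leibniz_lie, P.lie_lie_E_of_lt hk (by omega),
    P.lie_lie_W_of_lt hk (by omega), smul_lie, lie_smul]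
  module

variable [CharZero K]

/-- On the level `k + 1` the brackets form an arithmetic progression with common difference
`d = ½ ⁅⁅E 0, W 0⁆, ⁅E 0, W k⁆⁆`; reading the same bracket backwards gives `(k + 1) d = -d`. -/
lemma lie_eq_of_lt (hk : ∀ a b c d, a + b = c + d → a + b < k + 1 → ⁅E a, W b⁆ = ⁅E c, W d⁆)
    {a b : ℕ} (hab : a + b = k + 1) : ⁅E a, W b⁆ = ⁅E 0, W (k + 1)⁆ := by
  set d := (2⁻¹ : K) • ⁅⁅E 0, W 0⁆, ⁅E 0, W k⁆⁆ with hd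
  have hstep {a b : ℕ} (hab : a + b = k) : ⁅E (a + 1), W b⁆ - ⁅E a, W (b + 1)⁆ = d := by
    rw [hd, ← hab, P.lie_lie_lie_of_lt hk (c := 0) (by omega), inv_smul_smul₀ two_ne_zero]
  have hprog {a b : ℕ} (hab : a + b = k + 1) : ⁅E a, W b⁆ - ⁅E 0, W (k + 1)⁆ = (a : K) • d := by
    induction a generalizing b with
    | zero => rw [show b = k + 1 by omega, sub_self, Nat.cast_zero, zero_smul]
    | succ a ih =>
      rw [Nat.cast_succ, add_smul, ← ih (b := b + 1) (by omega), one_smul,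
        ← hstep (a := a) (b := b) (by omega)]
      abel
  have hback : ⁅E (k + 1), W 0⁆ - ⁅E 0, W (k + 1)⁆ = -d := by
    have := P.lie_lie_lie_of_lt hk (a := 0) (b := 0) (c := k) (by omega)
    rw [hd, ← lie_skew ⁅E 0, W 0⁆, smul_neg, neg_neg]
    simp [this]
  have hd0 : d = 0 := by
    have h2 : ((k + 1 : ℕ) + 1 : K) • d = 0 := by
      rw [add_smul, ← hprog (add_zero (k + 1)), hback, one_smul, neg_add_cancel]
    exact (smul_eq_zero.1 h2).resolve_left (by exact_mod_cast Nat.succ_ne_zero (k + 1))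
  rw [← sub_eq_zero, hprog hab, hd0, smul_zero]

lemma lie_eq_lie {a b c d : ℕ} (h : a + b = c + d) : ⁅E a, W b⁆ = ⁅E c, W d⁆ := by
  obtain ⟨k, hk⟩ : ∃ k, a + b = k := ⟨_, rfl⟩
  induction k using Nat.strong_induction_on generalizing a b c d with
  | _ k ih =>
    rcases k with _ | k
    · obtain ⟨rfl, rfl, rfl, rfl⟩ : a = 0 ∧ b = 0 ∧ c = 0 ∧ d = 0 := by omega
      rfl
    · have hlt : ∀ a b c d, a + b = c + d → a + b < k + 1 → ⁅E a, W b⁆ = ⁅E c, W d⁆ :=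
        fun a b c d h hlt => ih (a + b) hlt h rfl
      rw [P.lie_eq_of_lt hlt hk, P.lie_eq_of_lt hlt (h.symm.trans hk)]

end IsLoopPair

end Loop

section Coroot

variable [Fintype B]

variable (K) in
/-- The coroot of `n`, i.e. the element `∑ i, n i • h i` of the Cartan subalgebra. -/
def coroot (h : B → L) (n : B → ℤ) : L := ∑ i, (n i : K) • h i

lemma coroot_add (m n : B → ℤ) : coroot K h (m + n) = coroot K h m + coroot K h n := by
  simp [coroot, add_smul, Finset.sum_add_distrib]

variable (K) in
/-- Root vectors of weights `n` and `-n` whose bracket is the coroot of `n`. -/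
structure IsCorootPair (A : Matrix B B ℤ) (h : B → L) (n : B → ℤ) (x y : L) : Prop where
  left_mem : x ∈ weightSpace K A h n
  right_mem : y ∈ weightSpace K A h (-n)
  lie_eq : ⁅x, y⁆ = coroot K h n

variable [DecidableEq B]

local notation "α" => simpleRoot
local notation "⟪" m "," n "⟫" => toBilin' A m n

lemma coroot_simpleRoot (i : B) : coroot K h (α i) = h i := by
  simp [coroot, Pi.single_apply, ite_smul]

lemma coroot_lie {m n : B → ℤ} {x : L} (hx : x ∈ weightSpace K A h n) :
    ⁅coroot K h m, x⁆ = (⟪m,n⟫ : K) • x := by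
  simp only [coroot, sum_lie, smul_lie, mem_weightSpace.1 hx, smul_smul, ← Finset.sum_smul,
    toBilin'_apply', dotProduct, Int.cast_sum, Int.cast_mul]

lemma ChevalleySystem.isCorootPair_simpleRoot (S : ChevalleySystem K A e f h) (i : B) :
    IsCorootPair K A h (α i) (e i) (f i) where
  left_mem := S.e_mem_weightSpace i
  right_mem := S.f_mem_weightSpace i
  lie_eq := by rw [S.lie_e_f_same, coroot_simpleRoot]

variable (A) in
/-- The roots obtained from a simple root by successively adding simple roots `α i` such that
`⟪α i,n⟫ = -1`. -/
inductive IsLadderRoot : (B → ℤ) → Prop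
  | simple (i : B) : IsLadderRoot (α i)
  | add (i : B) {n : B → ℤ} : IsLadderRoot n → (A *ᵥ n) i = -1 → IsLadderRoot (α i + n)

namespace SymmetricChevalleySystem

variable (S : SymmetricChevalleySystem K A e f h)
include S

lemma isCorootPair_add [CharZero K] {m n : B → ℤ} {x x' y y' : L} (hm : ⟪m,m⟫ = 2)
    (hn : ⟪n,n⟫ = 2) (hmn : ⟪m,n⟫ = -1) (hx : IsCorootPair K A h m x x')
    (hy : IsCorootPair K A h n y y') : IsCorootPair K A h (m + n) ⁅x, y⁆ (-⁅x', y'⁆) where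
  left_mem := lie_mem_weightSpace hx.left_mem hy.left_mem rfl
  right_mem := Submodule.neg_mem _
    (lie_mem_weightSpace hx.right_mem hy.right_mem (neg_add m n).symm)
  lie_eq := by
    have hxy' : ⁅x, y'⁆ = 0 := by
      refine S.eq_zero_of_two_lt (lie_mem_weightSpace hx.left_mem hy.right_mem
        (sub_eq_add_neg m n).symm) ?_
      rw [S.form_sub_self, hm, hn, hmn]
      norm_num
    have hyx' : ⁅y, x'⁆ = 0 := by
      refine S.eq_zero_of_two_lt (lie_mem_weightSpace hy.left_mem hx.right_mem
        (sub_eq_add_neg n m).symm) ?_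
      rw [S.form_sub_self, hm, hn, S.form_comm, hmn]
      norm_num
    have hx_lie : ⁅x, ⁅x', y'⁆⁆ = y' := by
      rw [leibniz_lie, hxy', lie_zero, add_zero, hx.lie_eq, coroot_lie hy.right_mem, map_neg, hmn]
      simp
    have hy_lie : ⁅y, ⁅x', y'⁆⁆ = -x' := by
      rw [leibniz_lie, hyx', zero_lie, zero_add, hy.lie_eq, ← lie_skew, coroot_lie hx.right_mem,
        map_neg, S.form_comm, hmn]
      simp
    rw [lie_neg, lie_lie, hx_lie, hy_lie, lie_neg, hx.lie_eq, hy.lie_eq, coroot_add]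
    abel

lemma form_self_of_isLadderRoot {n : B → ℤ} (hn : IsLadderRoot A n) : ⟪n,n⟫ = 2 := by
  induction hn with
  | simple i => exact S.form_simpleRoot_self i
  | add i _ hi ih =>
    rw [S.form_add_self, S.form_simpleRoot_self, form_simpleRoot_left, hi, ih]
    norm_num

lemma exists_isCorootPair [CharZero K] {n : B → ℤ} (hn : IsLadderRoot A n) :
    ∃ x y, IsCorootPair K A h n x y := by
  induction hn with
  | simple i => exact ⟨e i, f i, S.isCorootPair_simpleRoot i⟩
  | add i hn hi ih =>
    obtain ⟨x, y, hxy⟩ := ih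
    exact ⟨_, _, S.isCorootPair_add (S.form_simpleRoot_self i) (S.form_self_of_isLadderRoot hn)
      (by rw [form_simpleRoot_left, hi]) (S.isCorootPair_simpleRoot i) hxy⟩

end SymmetricChevalleySystem

end Coroot

section AffinePair

variable [Fintype B] [DecidableEq B] {a b : B → ℤ} {u u' w w' : L}

local notation "α" => simpleRoot
local notation "⟪" m "," n "⟫" => toBilin' A m n

variable (K A) in
/-- Root vectors of two real roots `a`, `b` that span a root system of type `A₁⁽¹⁾`, with null root
`a + b`. -/
structure IsAffinePair (h : B → L) (a b : B → ℤ) (u u' w w' : L) : Prop where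
  form_left : ⟪a,a⟫ = 2
  form_right : ⟪b,b⟫ = 2
  form_left_right : ⟪a,b⟫ = -2
  form_right_left : ⟪b,a⟫ = -2
  left : IsCorootPair K A h a u u'
  right : IsCorootPair K A h b w w'

variable (K) in
/-- The vectors `u ⊗ tⁿ` of the affine Lie algebra of type `A₁⁽¹⁾` with simple root vectors `u` and
`w`. -/
def loopVector (u w : L) (n : ℕ) : L := (2⁻¹ : K) ^ n • (toEnd K L L ⁅u, w⁆ ^ n) u

lemma loopVector_zero : loopVector K u w 0 = u := by simp [loopVector]

lemma loopVector_succ (n : ℕ) :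
    loopVector K u w (n + 1) = (2⁻¹ : K) • ⁅⁅u, w⁆, loopVector K u w n⁆ := by
  simp only [loopVector, pow_succ', Module.End.mul_apply, toEnd_apply_apply, lie_smul, smul_smul]

namespace IsAffinePair

lemma symm (P : IsAffinePair K A h a b u u' w w') : IsAffinePair K A h b a w w' u u' where
  form_left := P.form_right
  form_right := P.form_left
  form_left_right := P.form_right_left
  form_right_left := P.form_left_right
  left := P.right
  right := P.left

variable (P : IsAffinePair K A h a b u u' w w')
include P

lemma loopVector_mem (n : ℕ) : loopVector K u w n ∈ weightSpace K A h (n • (a + b) + a) :=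
  Submodule.smul_mem _ _ (pow_toEnd_mem_weightSpace
    (lie_mem_weightSpace P.left.left_mem P.right.left_mem rfl) P.left.left_mem n rfl)

variable [CharZero K] (S : SymmetricChevalleySystem K A e f h)
include S

lemma lie_loopVector_loopVector (m n : ℕ) : ⁅loopVector K u w m, loopVector K u w n⁆ = 0 := by
  refine S.eq_zero_of_two_lt
    (lie_mem_weightSpace (P.loopVector_mem m) (P.loopVector_mem n) rfl) ?_
  simp only [map_add, map_nsmul, LinearMap.add_apply, LinearMap.smul_apply, P.form_left,
    P.form_right, P.form_left_right, P.form_right_left]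
  norm_num

lemma isLoopPair : IsLoopPair K (loopVector K u w) (loopVector K w u) where
  lie_E_E := P.lie_loopVector_loopVector S
  lie_W_W := P.symm.lie_loopVector_loopVector S
  lie_lie_E n := by
    rw [loopVector_zero, loopVector_zero, loopVector_succ, smul_inv_smul₀ two_ne_zero]
  lie_lie_W n := by
    rw [loopVector_zero, loopVector_zero, loopVector_succ, neg_smul, smul_inv_smul₀ two_ne_zero,
      ← lie_skew u w, neg_lie]

lemma lie_left_right' : ⁅u, w'⁆ = 0 := by
  refine S.eq_zero_of_two_lt (lie_mem_weightSpace P.left.left_mem P.right.right_mem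
    (sub_eq_add_neg a b).symm) ?_
  rw [S.form_sub_self, P.form_left, P.form_left_right, P.form_right]
  norm_num

lemma lie_lie_left' : ⁅⁅w', u'⁆, u⁆ = (2 : K) • w' := by
  rw [lie_lie, ← lie_skew w' u, P.lie_left_right' S, neg_zero, lie_zero, sub_zero, ← lie_skew u' u,
    P.left.lie_eq, lie_neg, lie_skew, coroot_lie P.right.right_mem, map_neg, P.form_left_right]
  norm_num

lemma lie_lie_right' : ⁅⁅w', u'⁆, w⁆ = (-2 : K) • u' := by
  rw [← lie_skew w' u', neg_lie, P.symm.lie_lie_left' S, neg_smul]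

lemma lie_lie_left : ⁅⁅u, w⁆, u'⁆ = (-2 : K) • w := by
  rw [lie_lie, P.symm.lie_left_right' S, lie_zero, zero_sub, ← lie_skew, neg_neg, P.left.lie_eq,
    coroot_lie P.right.left_mem, P.form_left_right]
  norm_num

/-- `⁅u, w⁆` and `⁅w', u'⁆` span a Heisenberg algebra whose centre acts trivially. -/
lemma lie_lie_lie_loopVector (n : ℕ) : ⁅⁅⁅w', u'⁆, ⁅u, w⁆⁆, loopVector K w u n⁆ = 0 := by
  have hlie : ⁅⁅w', u'⁆, ⁅u, w⁆⁆ = (-2 : K) • coroot K h (a + b) := by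
    rw [leibniz_lie, P.lie_lie_left' S, P.lie_lie_right' S, smul_lie, lie_smul, ← lie_skew,
      P.right.lie_eq, P.left.lie_eq, coroot_add]
    module
  rw [hlie, smul_lie, coroot_lie (P.symm.loopVector_mem n)]
  simp only [map_add, map_nsmul, LinearMap.add_apply, P.form_left, P.form_right, P.form_left_right,
    P.form_right_left]
  norm_num

lemma lie_loopVector_succ (n : ℕ) :
    ⁅⁅w', u'⁆, loopVector K w u (n + 1)⁆ = (-2 : K) • loopVector K w u n := by
  have hsucc (n : ℕ) : ⁅⁅u, w⁆, loopVector K w u n⁆ = (-2 : K) • loopVector K w u (n + 1) := by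
    simpa only [loopVector_zero] using (P.isLoopPair S).lie_lie_W n
  have hcomm (n : ℕ) : ⁅⁅w', u'⁆, ⁅⁅u, w⁆, loopVector K w u n⁆⁆ =
      ⁅⁅u, w⁆, ⁅⁅w', u'⁆, loopVector K w u n⁆⁆ := by
    rw [leibniz_lie, P.lie_lie_lie_loopVector S, zero_add]
  refine smul_right_injective L (by norm_num : (-2 : K) ≠ 0) ?_
  beta_reduce
  rw [← lie_smul, ← hsucc, hcomm]
  induction n with
  | zero => rw [loopVector_zero, P.lie_lie_right' S, lie_smul, P.lie_lie_left S]
  | succ n ih =>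
    rw [← hcomm, hsucc, lie_smul] at ih
    rw [smul_right_injective L (by norm_num : (-2 : K) ≠ 0) ih, lie_smul, hsucc]

omit S in
lemma right_ne_zero (hu : u ≠ 0) : w ≠ 0 := by
  rintro rfl
  have hb : coroot K h b = 0 := by rw [← P.right.lie_eq, zero_lie]
  have hbu := coroot_lie (m := b) P.left.left_mem
  rw [hb, zero_lie, P.form_right_left] at hbu
  exact smul_ne_zero (by norm_num) hu hbu.symm

lemma loopVector_ne_zero (hw : w ≠ 0) (n : ℕ) : loopVector K w u n ≠ 0 := by
  induction n with
  | zero => rwa [loopVector_zero]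
  | succ n ih =>
    intro h0
    have := P.lie_loopVector_succ S n
    rw [h0, lie_zero] at this
    exact smul_ne_zero (by norm_num : (-2 : K) ≠ 0) ih this.symm

lemma exists_lie_left_eq_lie_right (hu : u ≠ 0) (n : ℕ) :
    ∃ x ∈ weightSpace K A h (n • (a + b) + b), x ≠ 0 ∧
      ∃ y ∈ weightSpace K A h (n • (a + b) + a), ⁅u, x⁆ = ⁅y, w⁆ := by
  refine ⟨loopVector K w u n, add_comm a b ▸ P.symm.loopVector_mem n,
    P.loopVector_ne_zero S (P.right_ne_zero hu) n, loopVector K u w n, P.loopVector_mem n, ?_⟩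
  simpa only [loopVector_zero] using (P.isLoopPair S).lie_eq_lie (add_comm 0 n)

end IsAffinePair

end AffinePair

section AffineDiagram

variable [DecidableEq B] {i j i₀ : B} {s : Finset B} {n : B → ℤ}
  {ι : Type*} [Fintype ι] {node : ι → B}

variable (A) in
/-- The sets of nodes of the diagram of `A` that span a simply laced tree containing `i₀`, built by
attaching one leaf `j` at a time. -/
inductive IsTree (i₀ : B) : Finset B → Prop
  | root : IsTree i₀ {i₀}
  | leaf {s : Finset B} {i j : B} : IsTree i₀ s → i ∈ s → j ∉ s → A i j = -1 →
      (∀ k ∈ s, k ≠ i → A k j = 0) → IsTree i₀ (insert j s)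

lemma IsTree.root_mem (hs : IsTree A i₀ s) : i₀ ∈ s := by
  induction hs with
  | root => exact Finset.mem_singleton_self i₀
  | leaf _ _ _ _ _ ih => exact Finset.mem_insert_of_mem ih

/-- The nodes of an affine diagram with affine node `i₀` and finite part `node`. -/
abbrev affineNodes (i₀ : B) (node : ι → B) : Finset B := insert i₀ (Finset.univ.image node)

lemma mem_affineNodes (i₀ : B) (node : ι → B) (a : ι) : node a ∈ affineNodes i₀ node :=
  Finset.mem_insert_of_mem (Finset.mem_image_of_mem node (Finset.mem_univ a))

variable [Fintype B]

local notation "α" => simpleRoot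
local notation "⟪" m "," n "⟫" => toBilin' A m n

variable (K A) in
/-- Vectors `x i` of weight `n - α i`, for an isotropic weight `n`, normalised like the vectors
`f i ⊗ tᵏ` of an affine Lie algebra: in that model `⁅e i, x i⁆` is `h i ⊗ tᵏ`. -/
structure IsRootFrame (e f h : B → L) (n : B → ℤ) (s : Finset B) (x : B → L) : Prop where
  mem : ∀ i ∈ s, x i ∈ weightSpace K A h (n - α i)
  ne_zero : ∀ i ∈ s, x i ≠ 0
  lie_lie : ∀ i ∈ s, ∀ j ∈ s, ⁅f j, ⁅e i, x i⁆⁆ = (A i j : K) • x j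

lemma IsRootFrame.update {x : B → L} {y : L} (hx : IsRootFrame K A e f h n s x) (hj : j ∉ s)
    (hmem : y ∈ weightSpace K A h (n - α j)) (hy : y ≠ 0) (hyy : ⁅f j, ⁅e j, y⁆⁆ = (A j j : K) • y)
    (hyx : ∀ k ∈ s, ⁅f k, ⁅e j, y⁆⁆ = (A j k : K) • x k)
    (hxy : ∀ k ∈ s, ⁅f j, ⁅e k, x k⁆⁆ = (A k j : K) • y) :
    IsRootFrame K A e f h n (insert j s) (Function.update x j y) := by
  have hupd (k : B) (hk : k ∈ s) : Function.update x j y k = x k :=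
    Function.update_of_ne (ne_of_mem_of_not_mem hk hj) _ _
  constructor <;> simp only [Finset.forall_mem_insert, Function.update_self]
  · exact ⟨hmem, fun k hk => hupd k hk ▸ hx.mem k hk⟩
  · exact ⟨hy, fun k hk => hupd k hk ▸ hx.ne_zero k hk⟩
  · refine ⟨⟨hyy, fun k hk => hupd k hk ▸ hyx k hk⟩, fun k hk => ⟨hupd k hk ▸ hxy k hk, ?_⟩⟩
    intro l hl
    rw [hupd k hk, hupd l hl, hx.lie_lie k hk l hl]

namespace ChevalleySystem

variable (S : ChevalleySystem K A e f h)
include S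

lemma lie_f_lie_e_same {x : L} (hx : x ∈ weightSpace K A h n) :
    ⁅f i, ⁅e i, x⁆⁆ = ⁅e i, ⁅f i, x⁆⁆ - (⟪α i,n⟫ : K) • x := by
  rw [leibniz_lie, ← lie_skew (f i) (e i), S.lie_e_f_same, neg_lie, lie_h_eq_form_smul hx]
  abel

lemma lie_mem_of_isMonomial {m : B → ℤ} {v : L} (hv : IsMonomial e m v) {T : Submodule K L}
    (hT : ∀ i, 0 < m i → ∀ z ∈ weightSpace K A h (n - α i), ⁅e i, z⁆ ∈ T) :
    ∀ u ∈ weightSpace K A h (n - m), ⁅v, u⁆ ∈ T := by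
  induction hv with
  | simple i => exact hT i (by simp)
  | @lie i m v hv ih =>
    intro u hu
    rw [lie_lie]
    refine T.sub_mem (hT i ?_ _ ?_) (ih (fun j hj => hT j ?_) _ ?_)
    · have := hv.nonneg i
      simp only [Pi.zero_apply, Pi.add_apply, Pi.single_eq_same] at this ⊢
      omega
    · exact lie_mem_weightSpace (S.mem_weightSpace_of_isMonomial hv) hu (by abel)
    · exact add_pos_of_nonneg_of_pos ((IsMonomial.simple (e := e) i).nonneg j) hj
    · exact lie_mem_weightSpace (S.e_mem_weightSpace i) hu (by abel)

lemma weightSpace_le_of_lie_mem [CharZero K] (hA : Function.Injective A.mulVec) (hj : 0 < n j)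
    (hn : ∀ i, n ≠ α i) {T : Submodule K L}
    (hT : ∀ i, 0 < n i → ∀ z ∈ weightSpace K A h (n - α i), ⁅e i, z⁆ ∈ T) :
    weightSpace K A h n ≤ T := by
  refine S.weightSpace_le_of_pos hA hj fun x hx => ?_
  cases hx with
  | simple i => exact absurd rfl (hn i)
  | @lie i m x hx =>
    refine hT i ?_ x ((add_sub_cancel_left (α i) m).symm ▸ S.mem_weightSpace_of_isMonomial hx)
    have := hx.nonneg i
    simp only [Pi.zero_apply, Pi.add_apply, Pi.single_eq_same] at this ⊢
    omega

end ChevalleySystem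

namespace SymmetricChevalleySystem

variable (S : SymmetricChevalleySystem K A e f h)
include S

section Isotropic

variable {x : L} (hn : toBilin' A n n = 0) (hi : toBilin' A (α i) n = 0)
include hn

lemma form_add_self_of_isotropic {m : B → ℤ} (hm : ⟪m,n⟫ = 0) : ⟪n + m,n + m⟫ = ⟪m,m⟫ := by
  rw [S.form_add_self, S.form_comm n m, hn, hm]
  ring

variable [CharZero K]

lemma eq_zero_of_isotropic {m : B → ℤ} (hm : ⟪m,n⟫ = 0) (hm2 : 2 < ⟪m,m⟫)
    (hx : x ∈ weightSpace K A h (n + m)) : x = 0 :=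
  S.eq_zero_of_two_lt hx (by rwa [S.form_add_self_of_isotropic hn hm])

variable (hx : x ∈ weightSpace K A h (n - α i))
include hi hx

lemma lie_f_lie_e_same_of_isotropic : ⁅f i, ⁅e i, x⁆⁆ = (2 : K) • x := by
  have hfx : ⁅f i, x⁆ = 0 := by
    refine S.eq_zero_of_isotropic hn (m := -α i - α i) ?_ ?_
      (lie_mem_weightSpace (S.f_mem_weightSpace i) hx (by abel))
    · simp [hi]
    · simp [S.form_simpleRoot_self]
  rw [S.lie_f_lie_e_same hx, hfx, lie_zero, map_sub, hi, S.form_simpleRoot_self]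
  norm_num

variable (hj : toBilin' A (α j) n = 0)
include hj

lemma lie_f_lie_e_of_isotropic_of_eq_zero (hij : A i j = 0) : ⁅f j, ⁅e i, x⁆⁆ = 0 := by
  have hne : i ≠ j := by
    rintro rfl
    simp [S.diag] at hij
  have hfx : ⁅f j, x⁆ = 0 := by
    refine S.eq_zero_of_isotropic hn (m := -α i - α j) ?_ ?_
      (lie_mem_weightSpace (S.f_mem_weightSpace j) hx (by abel))
    · simp [hi, hj]
    · simp [S.form_simpleRoot_self, S.form_comm (α j) (α i), hij]
  rw [S.lie_f_lie_e_of_ne hne, hfx, lie_zero]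

lemma lie_f_lie_e_lie_f_lie_e_of_isotropic (hij : A i j = -1) :
    ⁅f i, ⁅e j, ⁅f j, ⁅e i, x⁆⁆⁆⁆ = x := by
  have hne : i ≠ j := by
    rintro rfl
    simp [S.diag] at hij
  have hu := lie_mem_weightSpace (S.f_mem_weightSpace j) hx rfl
  have hex : ⁅e j, x⁆ = 0 := by
    refine S.eq_zero_of_isotropic hn (m := α j - α i) ?_ ?_
      (lie_mem_weightSpace (S.e_mem_weightSpace j) hx (by abel))
    · simp [hi, hj]
    · rw [S.form_sub_self, S.form_comm (α j) (α i), S.form_simpleRoot_self,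
        S.form_simpleRoot_self, form_simpleRoot_simpleRoot, hij]
      norm_num
  have hefx : ⁅e j, ⁅f j, x⁆⁆ = x := by
    rw [leibniz_lie, hex, lie_zero, add_zero, S.lie_e_f_same, lie_h_eq_form_smul hx, map_sub, hj,
      S.form_comm, form_simpleRoot_simpleRoot, hij]
    simp
  have hfu : ⁅f i, ⁅f j, x⁆⁆ = 0 := by
    refine S.eq_zero_of_isotropic hn (m := -(α i + α i + α j)) ?_ ?_
      (lie_mem_weightSpace (S.f_mem_weightSpace i) hu (by abel))
    · simp [hi, hj]
    · simp [S.form_simpleRoot_self, S.form_comm (α j) (α i), hij]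
  have hfefx : ⁅f i, ⁅e i, ⁅f j, x⁆⁆⁆ = ⁅f j, x⁆ := by
    rw [S.lie_f_lie_e_same hu, hfu, lie_zero, map_add, map_neg, map_sub, hi,
      form_simpleRoot_simpleRoot, S.form_simpleRoot_self, hij]
    norm_num
  rw [S.lie_f_lie_e_of_ne hne, S.lie_f_lie_e_of_ne hne.symm, hfefx, hefx]

end Isotropic

lemma isRootFrame_update [CharZero K] (hn : ⟪n,n⟫ = 0) (horth : ∀ i ∈ insert j s, ⟪α i,n⟫ = 0)
    (hi : i ∈ s) (hj : j ∉ s) (hij : A i j = -1) (hleaf : ∀ k ∈ s, k ≠ i → A k j = 0) {x : B → L}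
    (hx : IsRootFrame K A e f h n s x) :
    IsRootFrame K A e f h n (insert j s) (Function.update x j (-⁅f j, ⁅e i, x i⁆⁆)) := by
  obtain ⟨hαj, hαs⟩ := (Finset.forall_mem_insert j s _).1 horth
  have hmem : -⁅f j, ⁅e i, x i⁆⁆ ∈ weightSpace K A h (n - α j) :=
    Submodule.neg_mem _ (lie_mem_weightSpace (S.f_mem_weightSpace j)
      (lie_mem_weightSpace (S.e_mem_weightSpace i) (hx.mem i hi) rfl) (by abel))
  have hback : ⁅f i, ⁅e j, -⁅f j, ⁅e i, x i⁆⁆⁆⁆ = -x i := by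
    rw [lie_neg, lie_neg,
      S.lie_f_lie_e_lie_f_lie_e_of_isotropic hn (hαs i hi) (hx.mem i hi) hαj hij]
  refine hx.update hj hmem (fun h0 => ?_) ?_ (fun k hk => ?_) (fun k hk => ?_)
  · rw [h0, lie_zero, lie_zero, zero_eq_neg] at hback
    exact hx.ne_zero i hi hback
  · rw [S.lie_f_lie_e_same_of_isotropic hn hαj hmem, S.diag, Int.cast_ofNat]
  · rcases eq_or_ne k i with rfl | hki
    · rw [hback, S.isSymm.apply, hij, Int.cast_neg, Int.cast_one, neg_one_smul]
    · have hjk : A j k = 0 := by rw [S.isSymm.apply, hleaf k hk hki]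
      rw [S.lie_f_lie_e_of_isotropic_of_eq_zero hn hαj hmem (hαs k hk) hjk, hjk, Int.cast_zero,
        zero_smul]
  · rcases eq_or_ne k i with rfl | hki
    · rw [hij, Int.cast_neg, Int.cast_one, neg_one_smul, neg_neg]
    · rw [S.lie_f_lie_e_of_isotropic_of_eq_zero hn (hαs k hk) (hx.mem k hk) hαj (hleaf k hk hki),
        hleaf k hk hki, Int.cast_zero, zero_smul]

lemma exists_isRootFrame [CharZero K] (hn : ⟪n,n⟫ = 0) (hs : IsTree A i₀ s)
    (horth : ∀ i ∈ s, ⟪α i,n⟫ = 0) {x₀ : L} (hx₀ : x₀ ∈ weightSpace K A h (n - α i₀))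
    (hne : x₀ ≠ 0) : ∃ x, x i₀ = x₀ ∧ IsRootFrame K A e f h n s x := by
  induction hs with
  | root =>
    refine ⟨fun _ => x₀, rfl, ?_, ?_, ?_⟩
    · simpa using hx₀
    · simpa using hne
    · simpa [S.diag] using S.lie_f_lie_e_same_of_isotropic hn (horth i₀ (by simp)) hx₀
  | @leaf s i j hs hi hj hij hdisj ih =>
    obtain ⟨x, hx₀, hx⟩ := ih fun i hi => horth i (Finset.mem_insert_of_mem hi)
    refine ⟨_, ?_, S.isRootFrame_update hn horth hi hj hij hdisj hx⟩
    rwa [Function.update_of_ne (ne_of_mem_of_not_mem hs.root_mem hj)]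

end SymmetricChevalleySystem

variable (A) in
/-- A simply laced tree of affine type, attached to the null root `δ` supported on it, whose affine
node is `i₀` and whose finite part, consisting of the nodes `node a`, has nonzero determinant. -/
structure IsAffineDiagram [DecidableEq ι] (δ : B → ℤ) (i₀ : B) (node : ι → B) : Prop where
  nonneg : 0 ≤ δ
  ne_zero_iff : ∀ i, δ i ≠ 0 ↔ i ∈ affineNodes i₀ node
  apply_affineNode : δ i₀ = 1
  mulVec_eq_zero : ∀ i, δ i ≠ 0 → (A *ᵥ δ) i = 0
  isTree : IsTree A i₀ (affineNodes i₀ node)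
  isLadderRoot : IsLadderRoot A (δ - α i₀)
  det_ne_zero : (A.submatrix node node).det ≠ 0

namespace IsAffineDiagram

variable [DecidableEq ι] {δ : B → ℤ} (D : IsAffineDiagram A δ i₀ node)
include D

lemma form_simpleRoot (hi : i ∈ affineNodes i₀ node) : ⟪α i,δ⟫ = 0 := by
  rw [form_simpleRoot_left, D.mulVec_eq_zero i ((D.ne_zero_iff i).2 hi)]

lemma form_self : ⟪δ,δ⟫ = 0 := by
  rw [toBilin'_apply', dotProduct]
  refine Finset.sum_eq_zero fun i _ => mul_eq_zero.2 ?_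
  by_cases hi : δ i = 0
  exacts [.inl hi, .inr (D.mulVec_eq_zero i hi)]

lemma linearIndependent [CharZero K] {n : B → ℤ} {x : B → L}
    (hx : IsRootFrame K A e f h n (affineNodes i₀ node) x) :
    LinearIndependent K fun a => ⁅e (node a), x (node a)⁆ := by
  rw [Fintype.linearIndependent_iff]
  intro c hc
  have hdet : ((A.submatrix node node).map (Int.cast : ℤ → K)).det ≠ 0 := by
    rw [← Int.cast_det]
    exact_mod_cast D.det_ne_zero
  refine congrFun (eq_zero_of_vecMul_eq_zero hdet (funext fun b => ?_))
  have hb : (∑ a, c a * (A (node a) (node b) : K)) • x (node b) = 0 := by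
    rw [← lie_zero (f (node b)), ← hc, lie_sum, Finset.sum_smul]
    refine Finset.sum_congr rfl fun a _ => ?_
    rw [lie_smul, hx.lie_lie _ (mem_affineNodes i₀ node a) _ (mem_affineNodes i₀ node b), smul_smul]
  exact (smul_eq_zero.1 hb).resolve_right (hx.ne_zero _ (mem_affineNodes i₀ node b))

variable (S : SymmetricChevalleySystem K A e f h)
include S

lemma isAffinePair {w w' : L} (hw : IsCorootPair K A h (δ - α i₀) w w') :
    IsAffinePair K A h (α i₀) (δ - α i₀) (e i₀) (f i₀) w w' where
  form_left := S.form_simpleRoot_self i₀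
  form_right := S.form_self_of_isLadderRoot D.isLadderRoot
  form_left_right := by
    rw [map_sub, D.form_simpleRoot (Finset.mem_insert_self _ _), S.form_simpleRoot_self, zero_sub]
  form_right_left := by
    rw [S.form_comm, map_sub, D.form_simpleRoot (Finset.mem_insert_self _ _),
      S.form_simpleRoot_self, zero_sub]
  left := S.isCorootPair_simpleRoot i₀
  right := hw

variable [CharZero K] {k : ℤ}

lemma weightSpace_sub_simpleRoot_le (hk : 1 ≤ k) (hi : i ∈ affineNodes i₀ node) {x : L}
    (hx : x ∈ weightSpace K A h (k • δ - α i)) (hx0 : x ≠ 0) :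
    weightSpace K A h (k • δ - α i) ≤ K ∙ x := by
  refine S.weightSpace_le_span_singleton (fun j => ?_) ?_ hx hx0
  · have hj : 0 ≤ δ j := D.nonneg j
    have hi1 : 1 ≤ δ i := (D.nonneg i).lt_of_ne' ((D.ne_zero_iff i).2 hi)
    simp only [Pi.zero_apply, Pi.sub_apply, Pi.smul_apply, smul_eq_mul, Pi.single_apply]
    split_ifs with hij
    · subst hij
      nlinarith
    · nlinarith
  · rw [S.form_sub_self, map_smul, map_smul, LinearMap.smul_apply, LinearMap.smul_apply,
      D.form_self, S.form_comm, D.form_simpleRoot hi, S.form_simpleRoot_self]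
    simp

omit S [CharZero K] in
lemma exists_eq_node_of_pos {j : B} (hj : 0 < (δ - α i₀) j) : ∃ a, node a = j := by
  have hj₀ : j ≠ i₀ := by
    rintro rfl
    simp [D.apply_affineNode] at hj
  have hδj : δ j ≠ 0 := (by simpa [hj₀] using hj : 0 < δ j).ne'
  obtain ⟨a, -, ha⟩ := Finset.mem_image.1
    (Finset.mem_of_mem_insert_of_ne ((D.ne_zero_iff j).1 hδj) hj₀)
  exact ⟨a, ha⟩

omit [CharZero K] in
lemma exists_sub_simpleRoot_pos : ∃ j, 0 < (δ - α i₀) j := by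
  have hnonneg : 0 ≤ δ - α i₀ := fun j => by
    rcases eq_or_ne j i₀ with rfl | hj
    · simp [D.apply_affineNode]
    · simpa [hj] using D.nonneg j
  obtain ⟨j, hj, -⟩ := exists_form_simpleRoot_pos (A := A) hnonneg
    (by rw [S.form_self_of_isLadderRoot D.isLadderRoot]; norm_num)
  exact ⟨j, hj⟩

lemma lie_mem_of_node {T : Submodule K L}
    (hT : ∀ a, ∀ z ∈ weightSpace K A h (n - α (node a)), ⁅e (node a), z⁆ ∈ T) {y w : L}
    (hw : w ∈ weightSpace K A h (δ - α i₀)) (hy : y ∈ weightSpace K A h (n - (δ - α i₀))) :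
    ⁅y, w⁆ ∈ T := by
  obtain ⟨j, hj⟩ := D.exists_sub_simpleRoot_pos S
  refine (S.weightSpace_le_of_pos S.mulVec_injective hj fun v hv => ?_ :
    _ ≤ T.comap (ad K L y : L →ₗ[K] L)) hw
  rw [Submodule.mem_comap, ad_apply, ← lie_skew, neg_mem_iff]
  refine S.lie_mem_of_isMonomial hv (fun i hi => ?_) y hy
  obtain ⟨a, rfl⟩ := D.exists_eq_node_of_pos hi
  exact hT a

lemma lie_mem_of_lie_mem (hk : 1 ≤ k) {x : B → L}
    (hx : IsRootFrame K A e f h (k • δ) (affineNodes i₀ node) x) {T : Submodule K L}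
    (hi : i ∈ affineNodes i₀ node) (hT : ⁅e i, x i⁆ ∈ T) {z : L}
    (hz : z ∈ weightSpace K A h (k • δ - α i)) : ⁅e i, z⁆ ∈ T := by
  obtain ⟨c, rfl⟩ := Submodule.mem_span_singleton.1
    (D.weightSpace_sub_simpleRoot_le S hk hi (hx.mem i hi) (hx.ne_zero i hi) hz)
  rw [lie_smul]
  exact T.smul_mem c hT

lemma lie_mem_span (hk : 1 ≤ k) {x : B → L}
    (hx : IsRootFrame K A e f h (k • δ) (affineNodes i₀ node) x) {y w : L}
    (hw : w ∈ weightSpace K A h (δ - α i₀)) (hy : y ∈ weightSpace K A h (k • δ - (δ - α i₀)))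
    (hyw : ⁅e i₀, x i₀⁆ = ⁅y, w⁆) (hi : i ∈ affineNodes i₀ node) {z : L}
    (hz : z ∈ weightSpace K A h (k • δ - α i)) :
    ⁅e i, z⁆ ∈ Submodule.span K (Set.range fun a => ⁅e (node a), x (node a)⁆) := by
  have hnode (a : ι) : ⁅e (node a), x (node a)⁆ ∈
      Submodule.span K (Set.range fun a => ⁅e (node a), x (node a)⁆) :=
    Submodule.subset_span ⟨a, rfl⟩
  refine D.lie_mem_of_lie_mem S hk hx hi ?_ hz
  rcases Finset.mem_insert.1 hi with rfl | hi
  · rw [hyw]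
    exact D.lie_mem_of_node S (fun a _ => D.lie_mem_of_lie_mem S hk hx
      (mem_affineNodes i node a) (hnode a)) hw hy
  · obtain ⟨a, -, rfl⟩ := Finset.mem_image.1 hi
    exact hnode a

lemma weightSpace_le_span (hk : 1 ≤ k) {x : B → L}
    (hx : IsRootFrame K A e f h (k • δ) (affineNodes i₀ node) x) {y w : L}
    (hw : w ∈ weightSpace K A h (δ - α i₀)) (hy : y ∈ weightSpace K A h (k • δ - (δ - α i₀)))
    (hyw : ⁅e i₀, x i₀⁆ = ⁅y, w⁆) :
    weightSpace K A h (k • δ) ≤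
      Submodule.span K (Set.range fun a => ⁅e (node a), x (node a)⁆) := by
  have hpos : 0 < (k • δ) i₀ := by
    simp only [Pi.smul_apply, D.apply_affineNode, smul_eq_mul]
    omega
  refine S.weightSpace_le_of_lie_mem S.mulVec_injective hpos (fun i hi => ?_) fun i hi z hz => ?_
  · have := S.form_simpleRoot_self i
    rw [← hi, map_smul, map_smul, LinearMap.smul_apply, D.form_self] at this
    simp at this
  · refine D.lie_mem_span S hk hx hw hy hyw ((D.ne_zero_iff i).1 ?_) hz
    rintro h0
    simp [h0] at hi

theorem finrank_weightSpace_smul (hk : 1 ≤ k) :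
    Module.finrank K (weightSpace K A h (k • δ)) = Fintype.card ι := by
  obtain ⟨m, rfl⟩ : ∃ m : ℕ, k = m + 1 := ⟨(k - 1).toNat, by omega⟩
  obtain ⟨w, w', hw⟩ := S.exists_isCorootPair D.isLadderRoot
  obtain ⟨x₀, hx₀, hne, y, hy, hxy⟩ :=
    (D.isAffinePair S hw).exists_lie_left_eq_lie_right S (S.isSl2Triple i₀).e_ne_zero m
  have hmul : ((m : ℤ) + 1) • δ = m • (α i₀ + (δ - α i₀)) + δ := by
    rw [add_sub_cancel, add_smul, one_smul, natCast_zsmul]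
  obtain ⟨x, rfl, hx⟩ := S.exists_isRootFrame (n := ((m : ℤ) + 1) • δ) (x₀ := x₀)
    (by rw [map_smul, map_smul, LinearMap.smul_apply, D.form_self, smul_zero, smul_zero]) D.isTree
    (fun i hi => by rw [map_smul, D.form_simpleRoot hi, smul_zero])
    (by rwa [hmul, add_sub_assoc]) hne
  have hle : weightSpace K A h (((m : ℤ) + 1) • δ) =
      Submodule.span K (Set.range fun a => ⁅e (node a), x (node a)⁆) := by
    refine (D.weightSpace_le_span S hk hx hw.left_mem ?_ hxy).antisymm (Submodule.span_le.2 ?_)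
    · rwa [hmul, add_sub_assoc, sub_sub_cancel]
    · rintro _ ⟨a, rfl⟩
      exact lie_mem_weightSpace (S.e_mem_weightSpace _) (hx.mem _ (mem_affineNodes i₀ node a))
        (add_sub_cancel _ _)
  rw [hle, finrank_span_eq_card (D.linearIndependent hx)]

end IsAffineDiagram

end AffineDiagram

variable {M : Type*} [LieRing M] [LieAlgebra K M]

namespace ChevalleyRelations

lemma of_map {φ : L →ₗ⁅K⁆ M} (hφ : Function.Injective φ)
    (R : ChevalleyRelations K A (fun i => φ (e i)) (fun i => φ (f i)) (fun i => φ (h i))) :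
    ChevalleyRelations K A e f h where
  lie_h_h i j := hφ (by rw [LieHom.map_lie, R.lie_h_h, map_zero])
  lie_e_f_same i := hφ (by rw [LieHom.map_lie, R.lie_e_f_same])
  lie_e_f_of_ne i j hij := hφ (by rw [LieHom.map_lie, R.lie_e_f_of_ne i j hij, map_zero])
  lie_h_e i j := hφ (by rw [LieHom.map_lie, R.lie_h_e, map_smul])
  lie_h_f i j := hφ (by rw [LieHom.map_lie, R.lie_h_f, map_neg, map_smul])

variable (R : ChevalleyRelations K A e f h)
include R

lemma map (φ : L →ₗ⁅K⁆ M) :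
    ChevalleyRelations K A (fun i => φ (e i)) (fun i => φ (f i)) (fun i => φ (h i)) where
  lie_h_h i j := by rw [← LieHom.map_lie, R.lie_h_h, map_zero]
  lie_e_f_same i := by rw [← LieHom.map_lie, R.lie_e_f_same]
  lie_e_f_of_ne i j hij := by rw [← LieHom.map_lie, R.lie_e_f_of_ne i j hij, map_zero]
  lie_h_e i j := by rw [← LieHom.map_lie, R.lie_h_e, map_smul]
  lie_h_f i j := by rw [← LieHom.map_lie, R.lie_h_f, map_neg, map_smul]

lemma lie_f_pow_ad_e_of_ne {i k : B} (hik : i ≠ k) (n : ℕ) (x : L) :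
    ⁅f k, (ad K L (e i) ^ n) x⁆ = (ad K L (e i) ^ n) ⁅f k, x⁆ := by
  induction n with
  | zero => rfl
  | succ n ih =>
    rw [pow_succ', Module.End.mul_apply, Module.End.mul_apply, ad_apply, ad_apply,
      R.lie_f_lie_e_of_ne hik, ih]

lemma lie_f_serre_e_same {i j : B} (hi : A i i = 2) (hij : i ≠ j) (hneg : A i j ≤ 0)
    (h0 : h i ≠ 0) : ⁅f i, (ad K L (e i) ^ (-A i j).toNat) ⁅e i, e j⁆⁆ = 0 := by
  obtain ⟨N, hN⟩ : ∃ N : ℕ, -A i j = N := Int.eq_ofNat_of_zero_le (by omega)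
  rcases eq_or_ne (e j) 0 with hj | hj
  · rw [hj, lie_zero, map_zero, lie_zero]
  have hprim : (R.isSl2Triple hi h0).symm.HasPrimitiveVectorWith (e j) (N : K) :=
    { ne_zero := hj
      lie_h := by
        rw [neg_lie, R.lie_h_e, ← neg_smul, ← Int.cast_neg, hN, Int.cast_natCast]
      lie_e := by rw [← lie_skew, R.lie_e_f_of_ne j i hij.symm, neg_zero] }
  have hlie := hprim.lie_e_pow_succ_toEnd_f N
  rw [sub_self, mul_zero, zero_smul] at hlie
  rw [hN, Int.toNat_natCast]
  exact hlie

lemma lie_f_serre_e_of_ne (hA : IsGCM A) {i j k : B} (hij : i ≠ j) (hik : i ≠ k) :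
    ⁅f k, (ad K L (e i) ^ (-A i j).toNat) ⁅e i, e j⁆⁆ = 0 := by
  rw [R.lie_f_pow_ad_e_of_ne hik, R.lie_f_lie_e_of_ne hik]
  rcases eq_or_ne j k with rfl | hjk
  · have hcomm : ⁅e i, ⁅f j, e j⁆⁆ = (A j i : K) • e i := by
      rw [← lie_skew (f j), R.lie_e_f_same, lie_neg, lie_skew, R.lie_h_e]
    rw [hcomm]
    rcases hN : (-A i j).toNat with _ | N
    · have hji : A j i = 0 := (hA.2.2 i j).1 (by have := hA.2.1 i j hij; omega)
      rw [hji, Int.cast_zero, zero_smul, map_zero]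
    · rw [pow_succ, Module.End.mul_apply, ad_apply, lie_smul, lie_self, smul_zero, map_zero]
  · rw [← lie_skew (f k), R.lie_e_f_of_ne j k hjk, neg_zero, lie_zero, map_zero]

lemma lie_f_serre_e (hA : IsGCM A) (hh : ∀ i, h i ≠ 0) {i j : B} (hij : i ≠ j) (k : B) :
    ⁅f k, (ad K L (e i) ^ (-A i j).toNat) ⁅e i, e j⁆⁆ = 0 := by
  rcases eq_or_ne i k with rfl | hik
  · exact R.lie_f_serre_e_same (hA.1 i) hij (hA.2.1 i j hij) (hh i)
  · exact R.lie_f_serre_e_of_ne hA hij hik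

lemma exists_lie_h_serre_e (i j k : B) (n : ℕ) : ∃ c : K,
    ⁅h k, (ad K L (e i) ^ n) ⁅e i, e j⁆⁆ = c • (ad K L (e i) ^ n) ⁅e i, e j⁆ := by
  classical
  obtain ⟨m, hm⟩ := ((IsMonomial.simple (e := e) j).lie i).exists_pow_ad (K := K) i n
  exact R.exists_lie_h_eq_smul hm k

end ChevalleyRelations

section Presentation

lemma map_ad_pow (φ : L →ₗ⁅K⁆ M) (x y : L) (n : ℕ) :
    φ ((ad K L x ^ n) y) = (ad K M (φ x) ^ n) (φ y) := by
  induction n with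
  | zero => rfl
  | succ n ih =>
    rw [pow_succ', pow_succ', Module.End.mul_apply, Module.End.mul_apply, ad_apply, ad_apply,
      LieHom.map_lie, ih]

variable (A) in
lemma toIdeal_le_ker_iff [DecidableEq B] (φ : FreeLieAlgebra K (Generators B) →ₗ⁅K⁆ L) :
    Relations.toIdeal K A ≤ φ.ker ↔ SerreRelations K A
      (fun i => φ (.of K (.E i))) (fun i => φ (.of K (.F i))) (fun i => φ (.of K (.H i))) := by
  rw [Relations.toIdeal, LieSubmodule.lieSpan_le, Relations.toSet]
  simp only [Set.union_subset_iff, Set.range_subset_iff, Prod.forall, SetLike.mem_coe,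
    LieHom.mem_ker, Relations.HH, Relations.EF, Relations.HE, Relations.HF, Relations.adE,
    Relations.adF, Function.uncurry, Function.comp_apply, apply_ite φ, map_sub, map_add,
    LieHom.map_lie, map_zsmul, map_ad_pow, sub_eq_zero, add_eq_zero_iff_eq_neg]
  simp only [← Int.cast_smul_eq_zsmul K]
  constructor
  · rintro ⟨⟨⟨⟨⟨hHH, hEF⟩, hHE⟩, hHF⟩, hE⟩, hF⟩
    exact
      { lie_h_h := hHH
        lie_e_f_same := fun i => by simpa [sub_eq_zero] using hEF i i
        lie_e_f_of_ne := fun i j hij => by simpa [hij] using hEF i j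
        lie_h_e := hHE
        lie_h_f := hHF
        serre_e := fun i j _ => hE i j
        serre_f := fun i j _ => hF i j }
  · intro R
    refine ⟨⟨⟨⟨⟨R.lie_h_h, fun i j => ?_⟩, R.lie_h_e⟩, R.lie_h_f⟩, fun i j => ?_⟩, fun i j => ?_⟩
    · split_ifs with hij
      · exact sub_eq_zero.2 (R.lie_e_f_same i)
      · exact R.lie_e_f_of_ne i j hij
    · rcases eq_or_ne i j with rfl | hij
      · simp
      · exact R.serre_e i j hij
    · rcases eq_or_ne i j with rfl | hij
      · simp
      · exact R.serre_f i j hij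

lemma lieSpan_range_of (X : Type*) :
    LieSubalgebra.lieSpan K (FreeLieAlgebra K X) (Set.range (FreeLieAlgebra.of K)) = ⊤ := by
  set N := LieSubalgebra.lieSpan K (FreeLieAlgebra K X) (Set.range (FreeLieAlgebra.of K))
  let φ : FreeLieAlgebra K X →ₗ⁅K⁆ N :=
    FreeLieAlgebra.lift K fun x => ⟨.of K x, LieSubalgebra.subset_lieSpan ⟨x, rfl⟩⟩
  have hφ : N.incl.comp φ = LieHom.id := FreeLieAlgebra.hom_ext fun x => by simp [φ]
  refine eq_top_iff.2 fun z _ => ?_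
  rw [← LieHom.id_apply (R := K) z, ← hφ]
  exact (φ z).2

lemma lieSpan_eq_top_of_surjective {φ : FreeLieAlgebra K (Generators B) →ₗ⁅K⁆ L}
    (hφ : Function.Surjective φ)
    (hh : ∀ i, ⁅φ (.of K (.E i)), φ (.of K (.F i))⁆ = φ (.of K (.H i))) :
    LieSubalgebra.lieSpan K L
      (Set.range (fun i => φ (.of K (.E i))) ∪ Set.range (fun i => φ (.of K (.F i)))) = ⊤ := by
  set N := LieSubalgebra.lieSpan K L
    (Set.range (fun i => φ (.of K (.E i))) ∪ Set.range (fun i => φ (.of K (.F i))))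
  have he (i : B) : φ (.of K (.E i)) ∈ N := LieSubalgebra.subset_lieSpan (.inl ⟨i, rfl⟩)
  have hf (i : B) : φ (.of K (.F i)) ∈ N := LieSubalgebra.subset_lieSpan (.inr ⟨i, rfl⟩)
  have hle : LieSubalgebra.lieSpan K _ (Set.range (FreeLieAlgebra.of K)) ≤ N.comap φ := by
    rw [LieSubalgebra.lieSpan_le]
    rintro _ ⟨i | i | i, rfl⟩
    · exact (hh i ▸ N.lie_mem (he i) (hf i) : φ (.of K (.H i)) ∈ N)
    · exact he i
    · exact hf i
  refine eq_top_iff.2 fun y _ => ?_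
  obtain ⟨z, rfl⟩ := hφ y
  exact hle (lieSpan_range_of (K := K) (Generators B) ▸ LieSubalgebra.mem_top z)

end Presentation

lemma lie_e_lie_h_f [DecidableEq B] (hhh : ∀ i j, ⁅h i, h j⁆ = 0)
    (hef : ∀ i j, ⁅e i, f j⁆ = if i = j then h j else 0)
    (hhe : ∀ i j, ⁅h i, e j⁆ = (A i j : K) • e j) (i k l : B) :
    ⁅e i, ⁅h k, f l⁆⁆ = ⁅e i, -((A k l : K) • f l)⁆ := by
  rw [leibniz_lie, ← lie_skew (e i), hhe, neg_lie, smul_lie, lie_neg, lie_smul, hef]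
  split_ifs with hil
  · rw [hhh, add_zero, hil]
  · rw [smul_zero, smul_zero, lie_zero, add_zero]

section VermaModule

attribute [local instance 100] LieRing.ofAssociativeRing

-- Makes the bracket of endomorphisms the commutator, rather than the action on a `Hom` space.
attribute [local instance 1100] lieRingSelfModule

open Finsupp

variable (K) in
/-- The operator `e i` of the Verma module of highest weight `0` for the algebra with the roles of
`e` and `f` exchanged, realised on the free module on words in `B`: it prepends the letter `i`. -/
def raise (i : B) : Module.End K (List B →₀ K) := lmapDomain K K (List.cons i)

variable (K A) in
/-- The operator `h k` of the Verma module: a word has weight the sum of its letters. -/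
def cartan (k : B) : Module.End K (List B →₀ K) :=
  linearCombination K fun w => single w ((w.map (A k)).sum : K)

variable (K A) in
/-- The action of `f k` on a word, as forced by the relations `⁅e i, f k⁆ = δᵢₖ h k` and by `f k`
annihilating the empty word. -/
def lowerWord [DecidableEq B] (k : B) : List B → List B →₀ K
  | [] => 0
  | i :: w => raise K i (lowerWord k w) - if i = k then cartan K A k (single w 1) else 0

variable (K A) in
/-- The operator `f k` of the Verma module. -/
def lower [DecidableEq B] (k : B) : Module.End K (List B →₀ K) :=
  linearCombination K (lowerWord K A k)

lemma raise_single (i : B) (w : List B) : raise K i (single w 1) = single (i :: w) 1 := by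
  simp [raise]

lemma cartan_single (k : B) (w : List B) :
    cartan K A k (single w 1) = ((w.map (A k)).sum : K) • single w 1 := by
  simp [cartan]

lemma end_ext {D D' : Module.End K (List B →₀ K)}
    (hD : ∀ w, D (single w 1) = D' (single w 1)) : D = D' :=
  lhom_ext' fun w => LinearMap.ext_ring (hD w)

lemma lie_cartan_raise (k i : B) : ⁅cartan K A k, raise K i⁆ = (A k i : K) • raise K i := by
  refine end_ext fun w => ?_
  simp only [Ring.lie_def, LinearMap.sub_apply, Module.End.mul_apply, LinearMap.smul_apply,
    raise_single, cartan_single, map_smul, ← sub_smul, List.map_cons, List.sum_cons,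
    Int.cast_add, add_sub_cancel_right]

lemma lie_cartan_cartan (k l : B) : ⁅cartan K A k, cartan K A l⁆ = 0 := by
  refine end_ext fun w => ?_
  simp only [Ring.lie_def, LinearMap.sub_apply, Module.End.mul_apply, cartan_single, map_smul,
    smul_smul, mul_comm, sub_self, LinearMap.zero_apply]

lemma end_ext_of_lie_raise {D D' : Module.End K (List B →₀ K)}
    (hnil : D (single [] 1) = D' (single [] 1))
    (hlie : ∀ i : B, ⁅raise K i, D⁆ = ⁅raise K i, D'⁆) : D = D' := by
  refine end_ext fun w => ?_
  induction w with
  | nil => exact hnil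
  | cons i w ih =>
    have hcomm := LinearMap.congr_fun (hlie i) (single w 1)
    simpa only [Ring.lie_def, LinearMap.sub_apply, Module.End.mul_apply, ih, raise_single,
      sub_right_inj] using hcomm

section

variable [DecidableEq B]

lemma lower_single_cons (k i : B) (w : List B) :
    lower K A k (single (i :: w) 1) = raise K i (lower K A k (single w 1)) -
      if i = k then cartan K A k (single w 1) else 0 := by
  simp [lower, lowerWord]

lemma lower_single_nil (k : B) : lower K A k (single [] 1) = 0 := by
  simp [lower, lowerWord]

lemma lie_raise_lower (i k : B) :
    ⁅raise K i, lower K A k⁆ = if i = k then cartan K A k else 0 := by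
  refine end_ext fun w => ?_
  rw [Ring.lie_def, LinearMap.sub_apply, Module.End.mul_apply, Module.End.mul_apply,
    raise_single, lower_single_cons, sub_sub_cancel]
  split_ifs <;> rfl

lemma lie_cartan_lower (k l : B) :
    ⁅cartan K A k, lower K A l⁆ = -((A k l : K) • lower K A l) := by
  refine end_ext_of_lie_raise ?_ fun i => ?_
  · simp [Ring.lie_def, lower_single_nil, cartan_single]
  · exact lie_e_lie_h_f lie_cartan_cartan lie_raise_lower lie_cartan_raise i k l

variable (K A) in
lemma vermaRelations : ChevalleyRelations K A (raise K) (lower K A) (cartan K A) where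
  lie_h_h := lie_cartan_cartan
  lie_e_f_same i := by rw [lie_raise_lower, if_pos rfl]
  lie_e_f_of_ne i j hij := by rw [lie_raise_lower, if_neg hij]
  lie_h_e := lie_cartan_raise
  lie_h_f := lie_cartan_lower

omit [DecidableEq B] in
lemma cartan_ne_zero [CharZero K] {k : B} (hk : A k k = 2) : cartan K A k ≠ 0 := by
  intro h0
  have h2 := LinearMap.congr_fun h0 (single [k] 1)
  simp [cartan_single, hk] at h2

lemma serre_lower [CharZero K] (hA : IsGCM A) {i j : B} (hij : i ≠ j) :
    (ad K _ (lower K A i) ^ (-A i j).toNat) ⁅lower K A i, lower K A j⁆ = 0 := by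
  have hnil {k : B} {D : Module.End K (List B →₀ K)} (hD : D (single [] 1) = 0) :
      ⁅lower K A k, D⁆ (single [] 1) = 0 := by
    rw [Ring.lie_def, LinearMap.sub_apply, Module.End.mul_apply, Module.End.mul_apply, hD,
      lower_single_nil, map_zero, map_zero, sub_zero]
  exact end_ext_of_lie_raise (D' := 0)
    (Module.End.pow_apply_mem_of_forall_mem
      (p := (LinearMap.applyₗ (single ([] : List B) (1 : K))).ker) _ (fun _ hD => hnil hD) _
      (hnil (lower_single_nil j)))
    fun k => ((vermaRelations K A).symm.lie_f_serre_e hA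
      (fun l => neg_ne_zero (a := cartan K A l).2 (cartan_ne_zero (hA.1 l))) hij k).trans
        (lie_zero _).symm

end

variable (K A) in
/-- The Serre relation between the operators `raise i` and `raise j`. -/
def serreOperator (i j : B) : Module.End K (List B →₀ K) :=
  (ad K (Module.End K (List B →₀ K)) (raise K i) ^ (-A i j).toNat) ⁅raise K i, raise K j⁆

variable (K A) in
/-- The submodule of the Verma module generated by the values of the Serre relations. -/
def serreSubmodule : Submodule K (List B →₀ K) :=
  sInf {J | (∀ i, J ≤ J.comap (raise K i)) ∧ ∀ i j, i ≠ j → (serreOperator K A i j).range ≤ J}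

lemma serreSubmodule_le {J : Submodule K (List B →₀ K)} (hraise : ∀ i, J ≤ J.comap (raise K i))
    (hserre : ∀ i j, i ≠ j → (serreOperator K A i j).range ≤ J) : serreSubmodule K A ≤ J :=
  sInf_le ⟨hraise, hserre⟩

lemma serreSubmodule_le_comap_raise (i : B) :
    serreSubmodule K A ≤ (serreSubmodule K A).comap (raise K i) :=
  fun _ hm => Submodule.mem_sInf.2 fun _ hJ => hJ.1 i (Submodule.mem_sInf.1 hm _ hJ)

lemma range_serreOperator_le {i j : B} (hij : i ≠ j) :
    (serreOperator K A i j).range ≤ serreSubmodule K A :=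
  le_sInf fun _ hJ => hJ.2 i j hij

lemma serreSubmodule_le_comap {D : Module.End K (List B →₀ K)}
    (hraise : ∀ i : B, ∀ m ∈ serreSubmodule K A, ⁅raise K i, D⁆ m ∈ serreSubmodule K A)
    (hserre : ∀ i j, i ≠ j → ∀ m, ⁅D, serreOperator K A i j⁆ m ∈ serreSubmodule K A) :
    serreSubmodule K A ≤ (serreSubmodule K A).comap D := by
  have hcomm (X : Module.End K (List B →₀ K)) (m : List B →₀ K) :
      D (X m) = X (D m) + ⁅D, X⁆ m := by
    rw [Ring.lie_def, LinearMap.sub_apply, Module.End.mul_apply, Module.End.mul_apply,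
      add_sub_cancel]
  suffices hle : serreSubmodule K A ≤ serreSubmodule K A ⊓ (serreSubmodule K A).comap D from
    hle.trans inf_le_right
  refine serreSubmodule_le (fun i m hm => ⟨serreSubmodule_le_comap_raise i hm.1, ?_⟩) ?_
  · rw [SetLike.mem_coe, Submodule.mem_comap, hcomm, ← lie_skew, LinearMap.neg_apply]
    exact add_mem (serreSubmodule_le_comap_raise i hm.2) (neg_mem (hraise i m hm.1))
  · rintro i j hij _ ⟨m, rfl⟩
    have hmem (m) : serreOperator K A i j m ∈ serreSubmodule K A :=
      range_serreOperator_le hij ⟨m, rfl⟩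
    refine ⟨hmem m, ?_⟩
    rw [SetLike.mem_coe, Submodule.mem_comap, hcomm]
    exact add_mem (hmem (D m)) (hserre i j hij m)

lemma serreSubmodule_le_comap_cartan (k : B) :
    serreSubmodule K A ≤ (serreSubmodule K A).comap (cartan K A k) := by
  classical
  refine serreSubmodule_le_comap (fun i m hm => ?_) fun i j hij m => ?_
  · rw [← lie_skew, lie_cartan_raise]
    exact neg_mem (Submodule.smul_mem _ _ (serreSubmodule_le_comap_raise i hm))
  · obtain ⟨c, hc⟩ := (vermaRelations K A).exists_lie_h_serre_e i j k (-A i j).toNat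
    rw [serreOperator, hc]
    exact Submodule.smul_mem _ _ (range_serreOperator_le hij ⟨m, rfl⟩)

lemma serreSubmodule_le_comap_lower [CharZero K] [DecidableEq B] (hA : IsGCM A) (k : B) :
    serreSubmodule K A ≤ (serreSubmodule K A).comap (lower K A k) := by
  refine serreSubmodule_le_comap (fun i m hm => ?_) fun i j hij m => ?_
  · rw [lie_raise_lower]
    split_ifs
    · exact serreSubmodule_le_comap_cartan k hm
    · exact zero_mem _
  · rw [serreOperator, (vermaRelations K A).lie_f_serre_e hA
      (fun l => cartan_ne_zero (hA.1 l)) hij k]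
    exact zero_mem _

lemma raise_mem_supported (i : B) {n : ℕ} {m : List B →₀ K}
    (hm : m ∈ supported K K {w : List B | n ≤ w.length}) :
    raise K i m ∈ supported K K {w : List B | n + 1 ≤ w.length} := by
  classical
  rw [mem_supported] at hm ⊢
  intro w hw
  obtain ⟨v, hv, rfl⟩ := Finset.mem_image.1 (mapDomain_support hw)
  exact Nat.succ_le_succ (hm hv)

lemma serreSubmodule_le_supported :
    serreSubmodule K A ≤ supported K K {w : List B | 2 ≤ w.length} := by
  set N := supported K K {w : List B | 2 ≤ w.length}
  have hraise (i : B) (m) (hm : m ∈ N) : raise K i m ∈ N :=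
    supported_mono (Set.ofPred_subset_ofPred.2 fun _ => Nat.le_of_succ_le)
      (raise_mem_supported i hm)
  have hraise₂ (i j : B) (m) : raise K i (raise K j m) ∈ N :=
    raise_mem_supported i (raise_mem_supported (n := 0) j (by simp))
  refine serreSubmodule_le hraise fun i j _ => ?_
  rintro _ ⟨m, rfl⟩
  refine Module.End.pow_apply_mem_of_forall_mem (p := Submodule.compatibleMaps ⊤ N) _
    (fun D hD m _ => ?_) _ (fun m _ => ?_) (Submodule.mem_top (x := m))
  · exact sub_mem (hraise i _ (hD Submodule.mem_top)) (hD Submodule.mem_top)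
  · exact sub_mem (hraise₂ i j m) (hraise₂ j i m)

section Quotient

variable {V : Type*} [AddCommGroup V] [Module K V]

/-- The Lie algebra of endomorphisms that preserve the submodule `U`. -/
def stabilizer (U : Submodule K V) : LieSubalgebra K (Module.End K V) where
  __ := U.compatibleMaps U
  lie_mem' hx hy _ hv := U.sub_mem (hx (hy hv)) (hy (hx hv))

/-- The action of the stabilizer of `U` on the quotient by `U`. -/
def quotientHom (U : Submodule K V) : stabilizer U →ₗ⁅K⁆ Module.End K (V ⧸ U) where
  toFun D := U.mapQ U D D.2
  map_add' _ _ := Submodule.linearMap_qext _ rfl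
  map_smul' _ _ := Submodule.linearMap_qext _ rfl
  map_lie' := Submodule.linearMap_qext _ rfl

lemma quotientHom_mk (U : Submodule K V) (D : stabilizer U) (v : V) :
    quotientHom U D (Submodule.Quotient.mk v) = Submodule.Quotient.mk ((D : Module.End K V) v) :=
  rfl

lemma quotientHom_eq_zero_iff {U : Submodule K V} {D : stabilizer U} :
    quotientHom U D = 0 ↔ (D : Module.End K V).range ≤ U := by
  refine ⟨?_, fun hD => Submodule.linearMap_qext _ (LinearMap.ext fun v => ?_)⟩
  · rintro hD _ ⟨v, rfl⟩
    rw [← Submodule.Quotient.mk_eq_zero, ← quotientHom_mk, hD, LinearMap.zero_apply]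
  · exact (Submodule.Quotient.mk_eq_zero U).2 (hD ⟨v, rfl⟩)

end Quotient

section

variable [CharZero K] [DecidableEq B]

/-- The action of the Chevalley generators on the Verma module, which preserves the submodule
generated by the Serre relations. -/
def vermaAction (hA : IsGCM A) : Generators B → stabilizer (serreSubmodule K A)
  | .E i => ⟨raise K i, serreSubmodule_le_comap_raise i⟩
  | .F i => ⟨lower K A i, serreSubmodule_le_comap_lower hA i⟩
  | .H i => ⟨cartan K A i, serreSubmodule_le_comap_cartan i⟩

lemma quotientSerreRelations (hA : IsGCM A) : SerreRelations K A
    (fun i => quotientHom (serreSubmodule K A) (vermaAction hA (.E i)))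
    (fun i => quotientHom (serreSubmodule K A) (vermaAction hA (.F i)))
    (fun i => quotientHom (serreSubmodule K A) (vermaAction hA (.H i))) where
  __ := (ChevalleyRelations.of_map (φ := (stabilizer (serreSubmodule K A)).incl)
    Subtype.val_injective (vermaRelations K A)).map (quotientHom _)
  serre_e i j hij := by
    rw [← LieHom.map_lie, ← map_ad_pow]
    refine quotientHom_eq_zero_iff.2 ?_
    rw [← LieSubalgebra.coe_incl, map_ad_pow, LieHom.map_lie]
    exact range_serreOperator_le hij
  serre_f i j hij := by
    rw [← LieHom.map_lie, ← map_ad_pow]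
    refine (congrArg _ (Subtype.val_injective ?_)).trans (map_zero _)
    rw [← LieSubalgebra.coe_incl, map_ad_pow, LieHom.map_lie]
    exact serre_lower hA hij

lemma of_H_notMem_toIdeal (hA : IsGCM A) (i : B) :
    FreeLieAlgebra.of K (Generators.H i) ∉ Relations.toIdeal K A := by
  intro hi
  have hker := (toIdeal_le_ker_iff A (FreeLieAlgebra.lift K fun x =>
    quotientHom (serreSubmodule K A) (vermaAction hA x))).2
    (by simpa only [FreeLieAlgebra.lift_of_apply] using quotientSerreRelations hA) hi
  rw [LieHom.mem_ker, FreeLieAlgebra.lift_of_apply] at hker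
  have hmem : cartan K A i (single [i] 1) ∈ serreSubmodule K A :=
    quotientHom_eq_zero_iff.1 hker ⟨_, rfl⟩
  have hsupp := serreSubmodule_le_supported hmem
  simp [cartan_single, mem_supported, hA.1 i] at hsupp

end

end VermaModule

section ToLieAlgebra

variable [DecidableEq B]

variable (K A) in
/-- The projection of the free Lie algebra onto `Matrix.ToLieAlgebra K A`. -/
def toLieAlgebraHom : FreeLieAlgebra K (Generators B) →ₗ⁅K⁆ Matrix.ToLieAlgebra K A where
  toFun := LieSubmodule.Quotient.mk (N := Relations.toIdeal K A)
  map_add' _ _ := rfl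
  map_smul' _ _ := rfl
  map_lie' := rfl

lemma ker_toLieAlgebraHom : (toLieAlgebraHom K A).ker = Relations.toIdeal K A :=
  LieSubmodule.ext _ _ fun _ => LieSubmodule.Quotient.mk_eq_zero'

lemma chevalleySystem_toLieAlgebra (hA : IsGCM A) :
    ChevalleySystem ℚ A (gE A) (gF A) (gH A) := by
  have R := (toIdeal_le_ker_iff A (toLieAlgebraHom ℚ A)).1 ker_toLieAlgebraHom.ge
  exact
    { R with
      h_ne_zero := fun i hi => of_H_notMem_toIdeal hA i (LieSubmodule.Quotient.mk_eq_zero'.1 hi)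
      lieSpan_eq_top := lieSpan_eq_top_of_surjective (φ := toLieAlgebraHom ℚ A)
        (LieSubmodule.Quotient.surjective_mk' _) R.lie_e_f_same }

end ToLieAlgebra

section E10

lemma isLadderRoot_foldr {B : Type*} [Fintype B] [DecidableEq B] {A : Matrix B B ℤ} (i : B) :
    ∀ l : List B, (∀ t ∈ l.tails, ∀ j ∈ t.head?,
      (A *ᵥ t.tail.foldr (fun j n => simpleRoot j + n) (simpleRoot i)) j = -1) →
      IsLadderRoot A (l.foldr (fun j n => simpleRoot j + n) (simpleRoot i))
  | [], _ => .simple i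
  | j :: l, hl => .add j (isLadderRoot_foldr i l fun t ht => hl t (by simp [ht]))
      (hl (j :: l) (by simp) j (by simp))

lemma isSymm_E10M : E10M.IsSymm := .ext (by simp only [E10M]; decide)

lemma isGCM_E10M : IsGCM E10M where
  left := by decide
  right := ⟨by simp only [E10M]; decide, fun i j => by rw [isSymm_E10M.apply]⟩

lemma mulVec_injective_E10M : Function.Injective E10M.mulVec := by
  refine (injective_iff_map_eq_zero E10M.mulVecLin).2 fun x hx => ?_
  have hrow : ∀ i, ∑ j, E10M i j * x j = 0 := congrFun hx
  obtain ⟨h₀, h₁, h₂, h₃, h₄, h₅, h₆, h₇, h₈, h₉⟩ :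
      2 * x 0 + -x 1 = 0 ∧ -x 0 + (2 * x 1 + -x 2) = 0 ∧ -x 1 + (2 * x 2 + -x 3) = 0 ∧
      -x 2 + (2 * x 3 + -x 4) = 0 ∧ -x 3 + (2 * x 4 + -x 5) = 0 ∧
      -x 4 + (2 * x 5 + -x 6) = 0 ∧ -x 5 + (2 * x 6 + (-x 7 + -x 9)) = 0 ∧
      -x 6 + (2 * x 7 + -x 8) = 0 ∧ -x 7 + 2 * x 8 = 0 ∧ -x 6 + 2 * x 9 = 0 := by
    simpa [Fin.forall_fin_succ, Fin.sum_univ_succ, E10M] using hrow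
  ext i
  fin_cases i <;> simp <;> omega

/-- The nodes of `E8` inside `E10`, in the order of Bourbaki used by `CartanMatrix.E₈`. -/
def e8Node : Fin 8 → Fin 10 := ![8, 9, 7, 6, 5, 4, 3, 2]

lemma isTree_E10M : IsTree E10M 1 (affineNodes 1 e8Node) := by
  have hnodes : affineNodes 1 e8Node =
      insert 9 (insert 8 (insert 7 (insert 6 (insert 5 (insert 4 (insert 3 (insert 2
        {1}))))))) := by
    decide
  rw [hnodes]
  refine IsTree.root |>.leaf (i := 1) ?_ ?_ ?_ ?_ |>.leaf (i := 2) ?_ ?_ ?_ ?_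
    |>.leaf (i := 3) ?_ ?_ ?_ ?_ |>.leaf (i := 4) ?_ ?_ ?_ ?_ |>.leaf (i := 5) ?_ ?_ ?_ ?_
    |>.leaf (i := 6) ?_ ?_ ?_ ?_ |>.leaf (i := 7) ?_ ?_ ?_ ?_ |>.leaf (i := 6) ?_ ?_ ?_ ?_ <;>
    decide

/-- The null root of the affine subdiagram `E9`. -/
def nullRoot : Fin 10 → ℤ := ![0, 1, 2, 3, 4, 5, 6, 4, 2, 3]

lemma isLadderRoot_nullRoot_sub : IsLadderRoot E10M (nullRoot - simpleRoot 1) := by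
  have hsum : nullRoot - simpleRoot 1 = List.foldr (fun j n => simpleRoot j + n) (simpleRoot 9)
      [2, 3, 4, 5, 6, 7, 8, 9, 6, 5, 4, 3, 2, 7, 6, 5, 4, 3, 9, 6, 5, 4, 7, 6, 5, 8, 7, 6] := by
    decide
  rw [hsum]
  exact isLadderRoot_foldr 9 _ (by decide +kernel)

lemma isAffineDiagram_E10M : IsAffineDiagram E10M nullRoot 1 e8Node where
  nonneg := Pi.le_def.2 (by decide)
  ne_zero_iff := by decide
  apply_affineNode := rfl
  mulVec_eq_zero := by decide
  isTree := isTree_E10M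
  isLadderRoot := isLadderRoot_nullRoot_sub
  det_ne_zero := by
    have hE₈ : E10M.submatrix e8Node e8Node = E₈ := by decide
    rw [hE₈, E₈_det]
    exact one_ne_zero

end E10

end KacMoody

theorem e10_affine_root_mults_general {B ι : Type*} [Fintype B] [DecidableEq B] [Fintype ι]
    [DecidableEq ι] {A : Matrix B B ℤ} {δ : B → ℤ} {i₀ : B} {node : ι → B} (hA : IsGCM A)
    (hsymm : A.IsSymm) (hinj : Function.Injective A.mulVec)
    (D : KacMoody.IsAffineDiagram A δ i₀ node) {k : ℤ} (hk : 1 ≤ k) :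
    rootMult A (k • δ) = Fintype.card ι :=
  D.finrank_weightSpace_smul
    { KacMoody.chevalleySystem_toLieAlgebra hA with
      diag := hA.1
      isSymm := hsymm
      mulVec_injective := hinj } hk

/-- **Affine roots of `E10` have multiplicity 8.** The null root
`δ = (0,1,2,3,4,5,6,4,2,3)` of the affine `E9` subalgebra satisfies `δᵀ A(E10) δ = 0`, and
for every integer `k ≥ 1` the root space of `k δ` in `g(A(E10))` has dimension `8`. -/
theorem e10_affine_root_mults :
    (∑ i, ∑ j, ![0,1,2,3,4,5,6,4,2,3] i * E10M i j * ![0,1,2,3,4,5,6,4,2,3] j = (0 : ℤ)) ∧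
    ∀ k : ℤ, 1 ≤ k →
      rootMult E10M (fun i => k * ![0,1,2,3,4,5,6,4,2,3] i) = 8 := by
  exact ⟨by decide +kernel, fun k hk => e10_affine_root_mults_general KacMoody.isGCM_E10M
    KacMoody.isSymm_E10M KacMoody.mulVec_injective_E10M KacMoody.isAffineDiagram_E10M hk⟩
end
end

section
/- E11 is Lorentzian but not hyperbolic: the matrix A(E11) is symmetric with determinant −2; viewed as a real symmetric matrix it has exactly one negative eigenvalue and ten positive eigenvalues (signature (10,1)); and the 10×10 principal submatrix obtained by deleting row and column 1 equals A(E10) and is indefinite (there exist real vectors u, v with uᵀ A(E10) u > 0 and vᵀ A(E10) v < 0), so A(E11) fails the hyperbolicity condition. -/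
noncomputable section

open Matrix

/-- The Cartan matrix of `E11` (node 1 ↦ index `0` is the very extended node; indices `0`–`9`
form a chain and index `10` is attached to index `7`). -/
def E11M : Matrix (Fin 11) (Fin 11) ℤ := fun i j =>
  if i = j then 2
  else if (i.val + 1 = j.val ∧ j.val ≤ 9) ∨ (j.val + 1 = i.val ∧ i.val ≤ 9) ∨
          (i.val = 7 ∧ j.val = 10) ∨ (i.val = 10 ∧ j.val = 7) then -1
  else 0

/-- `A(E11)` as a real matrix. -/
def E11R : Matrix (Fin 11) (Fin 11) ℝ := E11M.map Int.cast

/-- `A(E10)` as a real matrix. -/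
def E10R : Matrix (Fin 10) (Fin 10) ℝ := E10M.map Int.cast

/-!
Gram-Schmidt orthogonalisation of the simple roots diagonalises `A(E11)` by congruence. The ten
simple roots of the chain span the finite-type `A₁₀` sublattice and contribute positive norms, while
the vector orthogonal to them has norm `-22`. Sylvester's law of inertia gives the signature
`(10, 1)`, and comparing determinants in the congruence gives `det A(E11) = -2`. In `A(E10)`, the
overextended simple root `α₀` and the null root `δ` of affine `E9` satisfy `α₀ ⬝ δ = -1`, so the
norm `2 - 2k` of `α₀ + k δ` takes both signs.
-/

section Inertia

variable {n : Type*} [Fintype n] [DecidableEq n]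

lemma toQuadraticForm'_equivalent_weightedSumSquares {R : Type*} [CommRing R]
    {A S : Matrix n n R} {d : n → R} (hS : IsUnit S) (hd : Sᵀ * A * S = diagonal d) :
    A.toQuadraticForm'.Equivalent (QuadraticMap.weightedSumSquares R d) := by
  refine QuadraticMap.Equivalent.symm ⟨{ S.toLinearEquiv' hS.invertible with map_app' := ?_ }⟩
  intro x
  calc A.toQuadraticForm' (S *ᵥ x)
      = (S *ᵥ x) ⬝ᵥ A *ᵥ (S *ᵥ x) := toLinearMap₂'_apply' A _ _
    _ = x ⬝ᵥ (Sᵀ * A * S) *ᵥ x := by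
      rw [mulVec_mulVec, dotProduct_mulVec, ← vecMul_transpose, vecMul_vecMul, ← mul_assoc,
        ← dotProduct_mulVec]
    _ = QuadraticMap.weightedSumSquares R d x := by
      rw [hd, QuadraticMap.weightedSumSquares_apply]
      exact Finset.sum_congr rfl fun i _ => by rw [mulVec_diagonal, smul_eq_mul]; ring

lemma toQuadraticForm'_equivalent_weightedSumSquares_eigenvalues {A : Matrix n n ℝ}
    (hA : A.IsHermitian) :
    A.toQuadraticForm'.Equivalent (QuadraticMap.weightedSumSquares ℝ hA.eigenvalues) := by
  refine toQuadraticForm'_equivalent_weightedSumSquares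
    (Unitary.isUnit_coe (U := hA.eigenvectorUnitary)) ?_
  have h := hA.conjStarAlgAut_star_eigenvectorUnitary
  rw [Unitary.conjStarAlgAut_star_apply] at h
  exact h

lemma card_eigenvalues_pos_of_congr_diagonal {A S : Matrix n n ℝ} {d : n → ℝ}
    (hA : A.IsHermitian) (hS : IsUnit S) (hd : Sᵀ * A * S = diagonal d) :
    (Finset.univ.filter fun i => 0 < hA.eigenvalues i).card =
      (Finset.univ.filter fun i => 0 < d i).card := by
  have hEig := toQuadraticForm'_equivalent_weightedSumSquares_eigenvalues hA
  have hDiag := toQuadraticForm'_equivalent_weightedSumSquares hS hd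
  simpa [Set.ncard_eq_toFinset_card'] using
    (QuadraticForm.sigPos_of_equiv_weightedSumSquares hEig).symm.trans
      (QuadraticForm.sigPos_of_equiv_weightedSumSquares hDiag)

lemma card_eigenvalues_neg_of_congr_diagonal {A S : Matrix n n ℝ} {d : n → ℝ}
    (hA : A.IsHermitian) (hS : IsUnit S) (hd : Sᵀ * A * S = diagonal d) :
    (Finset.univ.filter fun i => hA.eigenvalues i < 0).card =
      (Finset.univ.filter fun i => d i < 0).card := by
  have hEig := toQuadraticForm'_equivalent_weightedSumSquares_eigenvalues hA
  have hDiag := toQuadraticForm'_equivalent_weightedSumSquares hS hd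
  simpa [Set.ncard_eq_toFinset_card'] using
    (QuadraticForm.sigNeg_of_equiv_weightedSumSquares hEig).symm.trans
      (QuadraticForm.sigNeg_of_equiv_weightedSumSquares hDiag)

end Inertia

lemma map_dotProduct_mulVec {m n R S : Type*} [Fintype m] [Fintype n] [NonAssocSemiring R]
    [NonAssocSemiring S] (f : R →+* S) (A : Matrix m n R) (v : m → R) (w : n → R) :
    f (v ⬝ᵥ A *ᵥ w) = (f ∘ v) ⬝ᵥ A.map f *ᵥ (f ∘ w) := by
  rw [f.map_dotProduct]
  congr 1
  exact funext (f.map_mulVec A w)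

/-- The Gram-Schmidt orthogonalisation of the simple roots of `E11`, with denominators cleared:
column `j` is the `j`-th orthogonal vector in coordinates with respect to the simple roots. The last
column is `11 (α + ω)`, with `α` the simple root off the chain and `ω` the fundamental weight of the
`A₁₀` chain at the node to which `α` is attached. -/
def e11GramSchmidt : Matrix (Fin 11) (Fin 11) ℤ := fun i j =>
  if j = 10 then ![3, 6, 9, 12, 15, 18, 21, 24, 16, 8, 11] i
  else if i ≤ j then i.val + 1 else 0

/-- The norms of the columns of `e11GramSchmidt` with respect to `E11M`. -/
def e11GramSchmidtNorm (j : Fin 11) : ℤ :=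
  if j = 10 then -22 else (j.val + 1) * (j.val + 2)

lemma e11GramSchmidt_congr :
    e11GramSchmidtᵀ * E11M * e11GramSchmidt = diagonal e11GramSchmidtNorm := by
  decide +kernel

lemma isUpperTriangular_e11GramSchmidt : e11GramSchmidt.IsUpperTriangular := by
  intro i j (hij : j < i)
  have hj : j ≠ 10 := (hij.trans_le (Fin.le_last i)).ne
  rw [e11GramSchmidt, if_neg hj, if_neg hij.not_ge]

lemma det_e11GramSchmidt : e11GramSchmidt.det = Nat.factorial 11 := by
  rw [det_of_isUpperTriangular isUpperTriangular_e11GramSchmidt]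
  decide +kernel

lemma det_E11M : E11M.det = -2 := by
  have hdet : (Nat.factorial 11 : ℤ) * E11M.det * Nat.factorial 11 =
      ∏ j, e11GramSchmidtNorm j := by
    simpa only [det_mul, det_transpose, det_diagonal, det_e11GramSchmidt] using
      congrArg det e11GramSchmidt_congr
  have hprod : ∏ j, e11GramSchmidtNorm j = (Nat.factorial 11 : ℤ) * -2 * Nat.factorial 11 := by
    decide +kernel
  have hne : (Nat.factorial 11 : ℤ) ≠ 0 := mod_cast Nat.factorial_ne_zero 11
  exact mul_left_cancel₀ hne (mul_right_cancel₀ hne (hdet.trans hprod))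

lemma isUnit_e11GramSchmidt_map : IsUnit (e11GramSchmidt.map (Int.cast : ℤ → ℝ)) := by
  rw [isUnit_iff_isUnit_det, ← Int.cast_det, det_e11GramSchmidt, isUnit_iff_ne_zero]
  exact mod_cast Nat.factorial_ne_zero 11

lemma e11GramSchmidt_map_congr :
    (e11GramSchmidt.map (Int.cast : ℤ → ℝ))ᵀ * E11R * e11GramSchmidt.map Int.cast =
      diagonal fun j => (e11GramSchmidtNorm j : ℝ) := by
  have h := congrArg (Int.castRingHom ℝ).mapMatrix e11GramSchmidt_congr
  rw [map_mul, map_mul] at h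
  simpa [E11R, transpose_map, diagonal_map] using h

lemma card_eigenvalues_neg_E11R (h : E11R.IsHermitian) :
    (Finset.univ.filter fun i => h.eigenvalues i < 0).card = 1 := by
  rw [card_eigenvalues_neg_of_congr_diagonal h isUnit_e11GramSchmidt_map e11GramSchmidt_map_congr]
  simp only [Int.cast_lt_zero]
  decide +kernel

lemma card_eigenvalues_pos_E11R (h : E11R.IsHermitian) :
    (Finset.univ.filter fun i => 0 < h.eigenvalues i).card = 10 := by
  rw [card_eigenvalues_pos_of_congr_diagonal h isUnit_e11GramSchmidt_map e11GramSchmidt_map_congr]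
  simp only [Int.cast_pos]
  decide +kernel

lemma E11M_submatrix_succ : E11M.submatrix Fin.succ Fin.succ = E10M := by
  decide +kernel

lemma isSymm_E11M : E11M.IsSymm := by
  unfold IsSymm
  decide +kernel

lemma E10R_form_intCast (v : Fin 10 → ℤ) :
    (Int.cast ∘ v) ⬝ᵥ E10R *ᵥ (Int.cast ∘ v) = ((v ⬝ᵥ E10M *ᵥ v : ℤ) : ℝ) :=
  (map_dotProduct_mulVec (Int.castRingHom ℝ) E10M v v).symm

/-- The null root of the affine subsystem `E9` of `E10` (all nodes but the overextended one, at
which its coordinate is `0`), in coordinates with respect to the simple roots. -/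
def e9NullRoot : Fin 10 → ℤ := ![0, 1, 2, 3, 4, 5, 6, 4, 2, 3]

lemma E10M_form_single_add_smul_e9NullRoot (k : ℤ) :
    (Pi.single 0 1 + k • e9NullRoot) ⬝ᵥ E10M *ᵥ (Pi.single 0 1 + k • e9NullRoot) = 2 - 2 * k := by
  have hroot : (Pi.single 0 1 : Fin 10 → ℤ) ⬝ᵥ E10M *ᵥ Pi.single 0 1 = 2 := by decide +kernel
  have hroot_null : (Pi.single 0 1 : Fin 10 → ℤ) ⬝ᵥ E10M *ᵥ e9NullRoot = -1 := by decide +kernel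
  have hnull_root : e9NullRoot ⬝ᵥ E10M *ᵥ Pi.single 0 1 = -1 := by decide +kernel
  have hnull : e9NullRoot ⬝ᵥ E10M *ᵥ e9NullRoot = 0 := by decide +kernel
  simp only [mulVec_add, mulVec_smul, add_dotProduct, dotProduct_add, smul_dotProduct,
    dotProduct_smul, hroot, hroot_null, hnull_root, hnull, smul_eq_mul]
  ring

/-- **`E11` is Lorentzian but not hyperbolic.** `A(E11)` is symmetric of determinant `-2`;
as a real symmetric matrix it has exactly one negative and ten positive eigenvalues; the
principal submatrix obtained by deleting row and column of the very extended node (index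
`0`) equals `A(E10)`, which is indefinite — so `A(E11)` fails the hyperbolicity
condition. -/
theorem e11_lorentzian_not_hyperbolic :
    E11M.IsSymm ∧
    E11M.det = -2 ∧
    (∀ h : E11R.IsHermitian,
      (Finset.univ.filter fun i => h.eigenvalues i < 0).card = 1 ∧
      (Finset.univ.filter fun i => 0 < h.eigenvalues i).card = 10) ∧
    E11M.submatrix Fin.succ Fin.succ = E10M ∧
    (∃ u : Fin 10 → ℝ, 0 < u ⬝ᵥ E10R.mulVec u) ∧
    (∃ v : Fin 10 → ℝ, v ⬝ᵥ E10R.mulVec v < 0) := by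
  refine ⟨isSymm_E11M, det_E11M,
    fun h => ⟨card_eigenvalues_neg_E11R h, card_eigenvalues_pos_E11R h⟩, E11M_submatrix_succ,
    ⟨Int.cast ∘ (Pi.single 0 1 + (0 : ℤ) • e9NullRoot), ?_⟩,
    ⟨Int.cast ∘ (Pi.single 0 1 + (2 : ℤ) • e9NullRoot), ?_⟩⟩ <;>
  · rw [E10R_form_intCast, E10M_form_single_add_smul_e9NullRoot]
    norm_num
end
end

section
/- Fibonacci description of the real roots of the simplest rank-2 hyperbolic algebra: for natural numbers m, n, the equation m² − 3mn + n² = 1 holds (equivalently, (m,n) is a real root of the Cartan matrix [[2,−3],[−3,2]], i.e. 2m² − 6mn + 2n² = 2) if and only if there exists k ≥ 0 such that (m,n) = (F_{2k}, F_{2k+2}) or (m,n) = (F_{2k+2}, F_{2k}), where F_j denotes the j-th Fibonacci number with F_0 = 0, F_1 = 1. -/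
/-!
If `(m, n)` solves `m² - a m n + n² = 1` with `0 < m ≤ n`, then the simple reflection
`n ↦ a m - n` (Vieta jumping) produces the solution `(a m - n, m)` with `0 ≤ a m - n < m`.
Iterating descends to `(0, 1)`, and undoing the reflections is the recurrence
`Sₖ₊₁ = a Sₖ - Sₖ₋₁` of the rescaled Chebyshev polynomials of the second kind, evaluated at `a`.
For `a = 3` this is the recurrence of the Fibonacci numbers of even index.
-/

open Polynomial Polynomial.Chebyshev

theorem int_fib_add_four (n : ℤ) : Int.fib (n + 4) = 3 * Int.fib (n + 2) - Int.fib n := by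
  have h₂ := Int.fib_add_two n
  have h₃ := Int.fib_add_two (n + 1)
  have h₄ := Int.fib_add_two (n + 2)
  ring_nf at h₂ h₃ h₄ ⊢
  linarith

section Chebyshev

variable {R : Type*} [CommRing R]

theorem S_sub_one_eval_sq_sub_mul_add_S_eval_sq (a : R) (k : ℤ) :
    (S R (k - 1)).eval a ^ 2 - a * (S R (k - 1)).eval a * (S R k).eval a +
      (S R k).eval a ^ 2 = 1 := by
  have h := congrArg (eval a) (S_sq_add_S_sq R (k - 1))
  simp only [sub_add_cancel, eval_sub, eval_add, eval_pow, eval_mul, eval_X, eval_one] at h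
  linear_combination h

theorem S_sub_one_eval_three (n : ℤ) : (S R (n - 1)).eval 3 = (Int.fib (2 * n) : R) := by
  induction n using Polynomial.Chebyshev.induct' with
  | zero => simp
  | one => simp
  | add_two n ih₁ ih₀ =>
    have hS := congrArg (eval 3) (S_eq R ((n : ℤ) + 2 - 1))
    have hF := congrArg (Int.cast (R := R)) (int_fib_add_four (2 * n))
    simp only [eval_sub, eval_mul, eval_X] at hS
    push_cast at hF
    rw [hS, show (n : ℤ) + 2 - 1 - 1 = n + 1 - 1 by ring, show (n : ℤ) + 2 - 1 - 2 = n - 1 by ring,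
      ih₁, ih₀, show 2 * ((n : ℤ) + 2) = 2 * n + 4 by ring, hF, mul_add_one]
  | neg n ih =>
    rw [S_neg_sub_one, eval_neg, ih, mul_neg, Int.fib_neg, if_pos (even_two_mul _), Int.cast_neg]

theorem S_sub_one_eval_three_natCast (k : ℕ) :
    (S R ((k : ℤ) - 1)).eval 3 = (Nat.fib (2 * k) : R) := by
  simpa only [← Nat.cast_ofNat (R := ℤ), ← Nat.cast_mul, Int.fib_natCast, Int.cast_natCast]
    using S_sub_one_eval_three (R := R) k

theorem S_eval_three_natCast (k : ℕ) : (S R k).eval 3 = (Nat.fib (2 * k + 2) : R) := by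
  simpa [mul_add] using S_sub_one_eval_three_natCast (R := R) (k + 1)

end Chebyshev

theorem vieta_jump_mem_Ico {a m n : ℤ} (hm : 0 < m) (hmn : m ≤ n)
    (h : m ^ 2 - a * m * n + n ^ 2 = 1) : a * m - n ∈ Set.Ico 0 m := by
  have hn : 0 < n := hm.trans_le hmn
  have vieta : n * (a * m - n) = m ^ 2 - 1 := by linear_combination -h
  constructor
  · have : 0 ≤ n * (a * m - n) := by
      rw [vieta]
      exact sub_nonneg.2 (one_le_pow₀ (Order.one_le_iff_pos.2 hm))
    exact nonneg_of_mul_nonneg_right this hn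
  · refine lt_of_mul_lt_mul_left ?_ hn.le
    calc n * (a * m - n) < m * m := by linarith
      _ ≤ n * m := by gcongr

theorem exists_eq_S_eval_of_le (a : ℤ) {m n : ℕ} (hmn : m ≤ n)
    (h : (m : ℤ) ^ 2 - a * m * n + n ^ 2 = 1) :
    ∃ k : ℕ, (m : ℤ) = (S ℤ ((k : ℤ) - 1)).eval a ∧ (n : ℤ) = (S ℤ k).eval a := by
  induction m using Nat.strong_induction_on generalizing n with
  | _ m ih =>
    obtain rfl | hm := m.eq_zero_or_pos
    · have hn : n = 1 := by simpa using h
      exact ⟨0, by simp, by simp [hn]⟩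
    · obtain ⟨hp₀, hpm⟩ := vieta_jump_mem_Ico (by exact_mod_cast hm) (by exact_mod_cast hmn) h
      obtain ⟨p, hp⟩ := Int.eq_ofNat_of_zero_le hp₀
      have hpm : p < m := by omega
      obtain ⟨k, hpk, hmk⟩ := ih p hpm hpm.le (by rw [← hp]; linear_combination h)
      refine ⟨k + 1, by simpa using hmk, ?_⟩
      rw [Nat.cast_add_one, S_add_one, eval_sub, eval_mul, eval_X, ← hpk, ← hmk, ← hp]
      ring

theorem rank2_real_roots_fibonacci_general (a : ℤ) (m n : ℕ) :
    (m : ℤ) ^ 2 - a * m * n + n ^ 2 = 1 ↔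
      ∃ k : ℕ, ((m : ℤ) = (S ℤ ((k : ℤ) - 1)).eval a ∧ (n : ℤ) = (S ℤ k).eval a) ∨
        ((m : ℤ) = (S ℤ k).eval a ∧ (n : ℤ) = (S ℤ ((k : ℤ) - 1)).eval a) := by
  constructor
  · intro h
    obtain hmn | hnm := le_total m n
    · exact (exists_eq_S_eval_of_le a hmn h).imp fun _ ↦ Or.inl
    · have hswap : (n : ℤ) ^ 2 - a * n * m + m ^ 2 = 1 := by linear_combination h
      exact (exists_eq_S_eval_of_le a hnm hswap).imp fun _ hk ↦ Or.inr hk.symm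
  · rintro ⟨k, ⟨hm, hn⟩ | ⟨hm, hn⟩⟩ <;> rw [hm, hn]
    · exact S_sub_one_eval_sq_sub_mul_add_S_eval_sq a k
    · linear_combination S_sub_one_eval_sq_sub_mul_add_S_eval_sq a (k : ℤ)

/-- **Fibonacci description of the real roots of the simplest rank-2 hyperbolic Kac–Moody
algebra.** For natural numbers `m, n`, one has `m² − 3mn + n² = 1` (i.e. `(m,n)` is a real
root of the Cartan matrix `[[2,−3],[−3,2]]`) iff `(m,n) = (F_{2k}, F_{2k+2})` or
`(F_{2k+2}, F_{2k})` for some `k ≥ 0`. -/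
theorem rank2_real_roots_fibonacci (m n : ℕ) :
    (m : ℤ) ^ 2 - 3 * m * n + n ^ 2 = 1 ↔
      ∃ k : ℕ, (m = Nat.fib (2 * k) ∧ n = Nat.fib (2 * k + 2)) ∨
        (m = Nat.fib (2 * k + 2) ∧ n = Nat.fib (2 * k)) := by
  simpa only [S_sub_one_eval_three_natCast, S_eval_three_natCast, Nat.cast_inj] using
    rank2_real_roots_fibonacci_general 3 m n
end
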